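/- arXiv:1801.04591 — 3 statements merged into one kernel-verified Lean document; each statement's English description precedes it below -/
import Mathlib

section
/- Let k > 0 and let u : ℝ → ℝ be integrable and right-continuous. Then for every family (u_δ)_{δ>0} of measurable functions with u_δ → u in L¹(ℝ) as δ → 0⁺, one has liminf_{δ→0⁺} Λ_{δ,1}(φ_k,u_δ,ℝ) ≥ (2 log 2 / k) · TV(u). -/
/-!
The inequality rests on one sharp discrete fact. Quantise `U δ` into steps of height `k δ`: if two
values `V x`, `V y` of the quantised function differ by at least two (they are *hostile*), then
`|U δ y - U δ x| > k δ`, so `Λ` dominates `δ` times the integral of `|y - x|⁻²` over hostile pairs.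
It remains to show that a step function which starts at level `0` and ends at level `n` on a fixed
interval has hostile energy at least `2 n log 2 - O(1)`. As `n ≈ (B - A) / (k δ)`, multiplying by
`δ` gives `(2 log 2 / k) (B - A)` in the limit.

*Discrete version.* For a finite sequence `v` with values in `{0, …, n}`, the weight
`cw d = 1 / ((d + 1) (d + 2))` replaces `|y - x|⁻²`. The friendly pairs (values differing by at most one) are
bounded from above. Removing a position of maximal value, which has `f` friends, lowers the number
of friendly pairs at distance at most `m` by at most `min m f`, because friends of the removed
element on opposite sides of it move closer together (`card_fset_del`). Induction bounds the number
of friendly pairs at distance at most `m` by a quantity that depends only on the level counts `l i`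
(`card_fset_le`), and Abel summation turns these bounds, for all `m`, into a bound on the weighted
sum (`friend_energy_le`). Comparing with logarithms, the hostile energy is at least
`2 ∑ (log (l i + l (i + 1) + 2) - log (l i + 2))` up to bounded terms (`hE_ge`). By the inequality of arithmetic and
geometric means each summand is essentially at least `log 2` plus half of a telescoping difference,
so the sum is `n log 2 - O(1)` as soon as the two extreme levels are well populated (`log_sum_ge`).

*From sequences to functions.* Split the interval into `N` equal cells and choose one point
independently and uniformly in each of them. The discrete inequality holds for every sample, and
its expectation is bounded by the hostile energy of the function, because `cw` was chosen so that
`cw d / ε²` is a lower bound for `|y - x|⁻²` on two cells at index distance `d`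
(`hostileEnergy_ge`). Points near the ends of the interval with the wrong level contribute an error
proportional to the measure of the bad set.

*Conclusion.* For `x₀ < x₁`, right-continuity makes `u` close to `u x₀` and `u x₁` just to the
right of these points, and `L¹` convergence makes the bad sets of `U δ` negligible; hence the liminf
of `Λ` on a slightly shifted interval `[x₀ + τ, x₁ + τ)` is at least
`(2 log 2 / k) (|u x₁ - u x₀| - 4 γ)` (`le_liminf_shift_abs`). Shifted intervals of a partition are
disjoint and `Λ` is superadditive over disjoint sets, so summation, `γ → 0` and the supremum over
partitions yield the theorem.
-/

open MeasureTheory Filter Set Topology ENNReal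

/-- The functional `Λ_{δ,p}(φ,u,Ω)` in dimension one. -/
noncomputable def Lambda1 (φ : ℝ → ℝ) (p δ : ℝ) (u : ℝ → ℝ) (Ω : Set ℝ) : ℝ≥0∞ :=
  ∫⁻ x in Ω, ∫⁻ y in Ω, ENNReal.ofReal (φ (|u y - u x| / δ) * δ ^ p / |y - x| ^ (1 + p))

/-- The interaction law `φ_k`. -/
noncomputable def phik (k t : ℝ) : ℝ := if t ≤ k then 0 else 1

/-! ### Counting friendly pairs -/

/-- Friendly pairs at distance at most `m`: positions `s < t < N` with `t - s ≤ m` whose values under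
`v` differ by at most one. -/
def fset (m N : ℕ) (v : ℕ → ℕ) : Finset (ℕ × ℕ) :=
  (Finset.range N ×ˢ Finset.range N).filter fun z =>
    z.1 < z.2 ∧ z.2 ≤ z.1 + m ∧ v z.1 ≤ v z.2 + 1 ∧ v z.2 ≤ v z.1 + 1

/-- The sequence `v` with the entry at position `p` removed and the later entries moved down by one. -/
def del (v : ℕ → ℕ) (p : ℕ) (i : ℕ) : ℕ := if i < p then v i else v (i + 1)

/-- If `v p` is maximal and has `f` friends besides `p` itself, removing position `p` lowers the number
of friendly pairs at distance at most `m` by at most `min m f`. -/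
lemma card_fset_del (m N : ℕ) (v : ℕ → ℕ) (p : ℕ) (hp : p < N + 1)
    (hmax : ∀ s < N + 1, v s ≤ v p) (f : ℕ)
    (hf : ((Finset.range (N + 1)).filter fun s => v p ≤ v s + 1).card = f + 1) :
    (fset m (N + 1) v).card ≤ (fset m N (del v p)).card + min m f := by
  classical
  -- `R` indexes the friends `p + r` to the right of `p`, and `L` the friends `p + r - (m + 1)` to
  -- the left. If `r` lies in both, these two friends are at distance `m + 1`, and become a friendly
  -- pair at distance `m` once `p` is removed: their values both lie in `{v p - 1, v p}`. Hence
  -- `|R| + |L|` pairs are lost and at least `|R ∩ L|` are gained, a net loss of at most `|R ∪ L| ≤ m`.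
  set R := (Finset.Icc 1 m).filter fun r => p + r < N + 1 ∧ v p ≤ v (p + r) + 1 with hR
  set L := (Finset.Icc 1 m).filter fun r => m + 1 ≤ p + r ∧ v p ≤ v (p + r - (m + 1)) + 1 with hL
  set A0 := (fset m (N + 1) v).filter fun z => z.1 ≠ p ∧ z.2 ≠ p with hA0
  have h1 : (fset m (N + 1) v).card ≤ R.card + L.card + A0.card := by
    have hsub : fset m (N + 1) v ⊆
        (R.image (fun r => (p, p + r)) ∪ L.image (fun r => (p + r - (m + 1), p))) ∪ A0 := by
      rintro ⟨s, t⟩ hz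
      have hz' := hz
      simp only [fset, Finset.mem_filter, Finset.mem_product, Finset.mem_range] at hz'
      obtain ⟨⟨hs, ht⟩, hst, hm, h12, h21⟩ := hz'
      simp only [Finset.mem_union]
      by_cases hsp : s = p
      · left; left
        refine Finset.mem_image.2 ⟨t - p, ?_, ?_⟩
        · have : p + (t - p) = t := by omega
          simp only [hR, Finset.mem_filter, Finset.mem_Icc, this]
          subst hsp
          omega
        · ext <;> simp <;> omega
      by_cases htp : t = p
      · left; right
        refine Finset.mem_image.2 ⟨s + (m + 1) - p, ?_, ?_⟩
        · have : p + (s + (m + 1) - p) - (m + 1) = s := by omega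
          simp only [hL, Finset.mem_filter, Finset.mem_Icc, this]
          subst htp
          omega
        · ext <;> simp <;> omega
      · right
        simp only [hA0, Finset.mem_filter]
        exact ⟨hz, hsp, htp⟩
    calc _ ≤ _ := Finset.card_le_card hsub
      _ ≤ _ := Finset.card_union_le _ _
      _ ≤ _ := by
        gcongr
        refine (Finset.card_union_le _ _).trans ?_
        gcongr <;> exact Finset.card_image_le
  have h2 : A0.card + (R ∩ L).card ≤ (fset m N (del v p)).card := by
    have hi1 : Set.InjOn (fun z : ℕ × ℕ => (if z.1 < p then z.1 else z.1 - 1,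
        if z.2 < p then z.2 else z.2 - 1)) (A0 : Set (ℕ × ℕ)) := by
      rintro ⟨s, t⟩ hz ⟨s', t'⟩ hz' h
      simp only [hA0, Finset.coe_filter, Set.mem_ofPred_eq] at hz hz'
      simp only [Prod.mk.injEq] at h ⊢
      split_ifs at h <;> omega
    have hi2 : Set.InjOn (fun r : ℕ => (p + r - (m + 1), p + r - 1))
        ((R ∩ L : Finset ℕ) : Set ℕ) := by
      intro r hr r' hr' h
      simp only [hR, hL, Finset.coe_inter, Set.mem_inter_iff, Finset.mem_coe, Finset.mem_filter,
        Finset.mem_Icc] at hr hr'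
      simp only [Prod.mk.injEq] at h
      omega
    rw [← Finset.card_image_of_injOn hi1, ← Finset.card_image_of_injOn hi2,
      ← Finset.card_union_of_disjoint]
    · apply Finset.card_le_card
      intro z hz
      rcases Finset.mem_union.1 hz with hz | hz
      · obtain ⟨⟨s, t⟩, hst, rfl⟩ := Finset.mem_image.1 hz
        simp only [hA0, fset, Finset.mem_filter, Finset.mem_product, Finset.mem_range] at hst
        obtain ⟨⟨⟨hs, ht⟩, hst, hm, h12, h21⟩, hsp, htp⟩ := hst
        have e : ∀ s, s ≠ p → del v p (if s < p then s else s - 1) = v s := by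
          intro s hs
          unfold del
          split_ifs <;> first | rfl | (congr 1; omega)
        simp only [fset, Finset.mem_filter, Finset.mem_product, Finset.mem_range, e s hsp, e t htp]
        refine ⟨?_, ?_, ?_, h12, h21⟩ <;> split_ifs <;> omega
      · obtain ⟨r, hr, rfl⟩ := Finset.mem_image.1 hz
        simp only [hR, hL, Finset.mem_inter, Finset.mem_filter, Finset.mem_Icc] at hr
        obtain ⟨⟨⟨h1, h2⟩, h3, h4⟩, _, h5, h6⟩ := hr
        have e1 : del v p (p + r - (m + 1)) = v (p + r - (m + 1)) := by
          unfold del; rw [if_pos (by omega)]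
        have e2 : del v p (p + r - 1) = v (p + r) := by
          unfold del; rw [if_neg (by omega)]; congr 1; omega
        have m1 := hmax (p + r - (m + 1)) (by omega)
        have m2 := hmax (p + r) (by omega)
        simp only [fset, Finset.mem_filter, Finset.mem_product, Finset.mem_range, e1, e2]
        omega
    · rw [Finset.disjoint_left]
      intro z hz hz'
      obtain ⟨⟨s, t⟩, hst, rfl⟩ := Finset.mem_image.1 hz
      obtain ⟨r, hr, hrr⟩ := Finset.mem_image.1 hz'
      simp only [hA0, fset, Finset.mem_filter, Finset.mem_product, Finset.mem_range] at hst
      simp only [hR, hL, Finset.mem_inter, Finset.mem_filter, Finset.mem_Icc] at hr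
      simp only [Prod.mk.injEq] at hrr
      obtain ⟨⟨⟨hs, ht⟩, hst, hm, -⟩, hsp, htp⟩ := hst
      split_ifs at hrr <;> omega
  have h3 : R.card + L.card = (R ∪ L).card + (R ∩ L).card := by
    rw [Finset.card_union_add_card_inter]
  have h4 : (R ∪ L).card ≤ m := by
    calc _ ≤ (Finset.Icc 1 m).card := Finset.card_le_card
            (Finset.union_subset (Finset.filter_subset _ _) (Finset.filter_subset _ _))
      _ = m := by simp
  have h5 : R.card + L.card ≤ f := by
    have hi1 : Function.Injective (fun r : ℕ => p + r) := fun a b h => by simpa using h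
    have hi2 : Set.InjOn (fun r : ℕ => p + r - (m + 1)) (L : Set ℕ) := by
      intro r hr r' hr' h
      simp only [hL, Finset.mem_coe, Finset.mem_filter, Finset.mem_Icc] at hr hr' h
      omega
    have hsub : insert p (R.image (fun r => p + r) ∪ L.image (fun r => p + r - (m + 1))) ⊆
        (Finset.range (N + 1)).filter fun s => v p ≤ v s + 1 := by
      intro s hs
      simp only [Finset.mem_insert, Finset.mem_union, Finset.mem_image] at hs
      simp only [Finset.mem_filter, Finset.mem_range]
      rcases hs with rfl | ⟨r, hr, rfl⟩ | ⟨r, hr, rfl⟩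
      · omega
      · simp only [hR, Finset.mem_filter, Finset.mem_Icc] at hr
        omega
      · simp only [hL, Finset.mem_filter, Finset.mem_Icc] at hr
        omega
    have := Finset.card_le_card hsub
    rw [hf, Finset.card_insert_of_notMem, Finset.card_union_of_disjoint,
      Finset.card_image_of_injective _ hi1, Finset.card_image_of_injOn hi2] at this
    · omega
    · rw [Finset.disjoint_left]
      intro s hs hs'
      obtain ⟨r, hr, rfl⟩ := Finset.mem_image.1 hs
      obtain ⟨r', hr', hrr⟩ := Finset.mem_image.1 hs'
      simp only [hL, Finset.mem_filter, Finset.mem_Icc] at hr'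
      omega
    · simp only [Finset.mem_union, Finset.mem_image, hR, hL, Finset.mem_filter, Finset.mem_Icc]
      rintro (⟨r, hr, h⟩ | ⟨r, hr, h⟩) <;> omega
  omega

/-- The number of positions `s < N` at level `i`. -/
def cnt (N : ℕ) (v : ℕ → ℕ) (i : ℕ) : ℕ := ((Finset.range N).filter fun s => v s = i).card

/-- The predecessor `l (i - 1)` of `l i` in a sequence of level counts, with value `0` at `i = 0`. -/
def prv (l : ℕ → ℕ) : ℕ → ℕ
  | 0 => 0
  | i + 1 => l i

lemma sum_del (N : ℕ) (h : ℕ → ℕ) (v : ℕ → ℕ) (p : ℕ) (hp : p < N + 1) :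
    ∑ s ∈ Finset.range (N + 1), h (v s) = h (v p) + ∑ s ∈ Finset.range N, h (del v p s) := by
  rw [Finset.sum_range, Fin.sum_univ_succAbove _ (⟨p, hp⟩ : Fin (N + 1)), Finset.sum_range]
  congr 1
  refine Finset.sum_congr rfl fun i _ => ?_
  congr 1
  unfold del Fin.succAbove
  simp only [Fin.lt_def, Fin.val_castSucc]
  split_ifs <;> rfl

lemma cnt_del (N : ℕ) (v : ℕ → ℕ) (p : ℕ) (hp : p < N + 1) (i : ℕ) :
    cnt (N + 1) v i = cnt N (del v p) i + if v p = i then 1 else 0 := by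
  unfold cnt
  rw [Finset.card_filter, Finset.card_filter,
    sum_del N (fun a => if a = i then 1 else 0) v p hp, add_comm]

/-- The number of friendly pairs at distance at most `m` is bounded in terms of the level counts alone.
The `p`-th entry of level `i`, when entries are removed from the top down, has at most `p` friends
at its own level and those at level `i - 1`. -/
lemma card_fset_le (m n : ℕ) : ∀ (N : ℕ) (v : ℕ → ℕ), (∀ s < N, v s ≤ n) →
    (fset m N v).card ≤ ∑ i ∈ Finset.range (n + 1), ∑ p ∈ Finset.range (cnt N v i),
      min m (prv (cnt N v) i + p) := by
  intro N
  induction N with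
  | zero => intro v _; simp [fset]
  | succ N ih =>
    intro v hv
    obtain ⟨p, hp, hmax⟩ := Finset.exists_max_image (Finset.range (N + 1)) v ⟨0, by simp⟩
    simp only [Finset.mem_range] at hp hmax
    have hc := cnt_del N v p hp
    have hzero : ∀ i, v p < i → cnt (N + 1) v i = 0 := by
      intro i hi
      unfold cnt
      rw [Finset.card_eq_zero, Finset.filter_eq_empty_iff]
      intro s hs
      have := hmax s (Finset.mem_range.1 hs)
      omega
    -- As `v p` is maximal, the friends of `p` are exactly the entries at levels `v p` and `v p - 1`.
    have hprv : prv (cnt N (del v p)) (v p) = prv (cnt (N + 1) v) (v p) := by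
      rcases h : v p with _ | w
      · rfl
      · simp only [prv]
        rw [hc w, if_neg (by omega), add_zero]
    have hf : ((Finset.range (N + 1)).filter fun s => v p ≤ v s + 1).card =
        (prv (cnt N (del v p)) (v p) + cnt N (del v p) (v p)) + 1 := by
      have h1 := hc (v p)
      rw [if_pos rfl] at h1
      rw [hprv, add_assoc, ← h1]
      rcases h : v p with _ | w
      · rw [h] at hmax
        simp only [prv, cnt, zero_add]
        congr 1
        refine Finset.filter_congr fun s hs => ?_
        have := hmax s (Finset.mem_range.1 hs)
        omega
      · rw [h] at hmax
        simp only [prv, cnt]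
        rw [← Finset.card_union_of_disjoint]
        · rw [← Finset.filter_or]
          congr 1
          refine Finset.filter_congr fun s hs => ?_
          have := hmax s (Finset.mem_range.1 hs)
          omega
        · refine Finset.disjoint_filter.2 fun s _ => ?_
          omega
    have hdel := card_fset_del m N v p hp hmax _ hf
    have hle : ∀ s < N, del v p s ≤ n := by
      intro s hs
      unfold del
      split_ifs
      · exact hv _ (by omega)
      · exact hv _ (by omega)
    have key : ∀ i, ∑ r ∈ Finset.range (cnt (N + 1) v i), min m (prv (cnt (N + 1) v) i + r) =
        ∑ r ∈ Finset.range (cnt N (del v p) i), min m (prv (cnt N (del v p)) i + r) +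
          if v p = i then min m (prv (cnt N (del v p)) (v p) + cnt N (del v p) (v p)) else 0 := by
      intro i
      rcases lt_trichotomy i (v p) with hi | hi | hi
      · rw [hc i, if_neg hi.ne', if_neg hi.ne', add_zero, add_zero]
        refine Finset.sum_congr rfl fun r _ => ?_
        congr 2
        cases i with
        | zero => rfl
        | succ w => simp only [prv]; rw [hc w, if_neg (by omega), add_zero]
      · subst hi
        rw [hc (v p), if_pos rfl, if_pos rfl, Finset.sum_range_succ, hprv]
      · have h0 := hzero i hi
        have h0' := hc i
        rw [h0, if_neg hi.ne, add_zero] at h0'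
        rw [h0, ← h0', if_neg hi.ne]
        simp
    rw [Finset.sum_congr rfl fun i _ => key i, Finset.sum_add_distrib, Finset.sum_ite_eq,
      if_pos (Finset.mem_range.2 (by have := hv p hp; omega))]
    exact hdel.trans (Nat.add_le_add_right (ih _ hle) _)

/-! ### Weighted energy of a finite sequence -/

/-- The interaction weight of two positions at distance `d`. It satisfies
`cw d ≤ 1 / (d + 1) ^ 2`, and its sums telescope. -/
noncomputable def cw (d : ℕ) : ℝ := 1 / (((d : ℝ) + 1) * ((d : ℝ) + 2))

/-- The partial sum `∑ d ∈ [1, f], cw d`, in closed form. -/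
noncomputable def gw (f : ℕ) : ℝ := 1 / 2 - 1 / ((f : ℝ) + 2)

lemma cw_nonneg (d : ℕ) : 0 ≤ cw d := by unfold cw; positivity

lemma cw_succ_le (d : ℕ) : cw (d + 1) ≤ cw d := by
  unfold cw
  push_cast
  gcongr <;> linarith

lemma gw_succ (f : ℕ) : gw (f + 1) = gw f + cw (f + 1) := by
  unfold gw cw
  push_cast
  field_simp
  ring

lemma gw_mono : Monotone gw := monotone_nat_of_le_succ fun f => by
  rw [gw_succ]; linarith [cw_nonneg (f + 1)]

/-- Summation by parts: `min m f` is the number of `d ∈ [1, f]` with `d ≤ m`. -/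
lemma abel_min (N f : ℕ) : cw N * (min N f : ℕ) +
    ∑ m ∈ Finset.range N, (cw m - cw (m + 1)) * (min m f : ℕ) = gw (min N f) := by
  induction N with
  | zero => simp [gw]
  | succ N ih =>
    rw [Finset.sum_range_succ]
    rcases Nat.lt_or_ge N f with h | h
    · rw [min_eq_left h.le] at *
      rw [min_eq_left (show N + 1 ≤ f from h), gw_succ, ← ih]
      push_cast
      ring
    · rw [min_eq_right h] at *
      rw [min_eq_right (show f ≤ N + 1 by omega), ← ih]
      ring

/-- `cw d` as a superposition, with nonnegative coefficients, of the cut-offs `d ≤ m`. -/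
lemma abel_cw (N d : ℕ) (hd : d ≤ N) :
    cw d = cw N + ∑ m ∈ Finset.range N, (cw m - cw (m + 1)) * if d ≤ m then 1 else 0 := by
  induction N, hd using Nat.le_induction with
  | base =>
    rw [Finset.sum_eq_zero, add_zero]
    intro m hm
    rw [if_neg (by simpa using hm), mul_zero]
  | succ N hN ih =>
    rw [Finset.sum_range_succ, if_pos hN]
    linarith

/-- The weighted form of `card_fset_le`, obtained by superposing the bounds for all `m`. -/
lemma friend_energy_le (n N : ℕ) (v : ℕ → ℕ) (hv : ∀ s < N, v s ≤ n) :
    ∑ z ∈ fset N N v, cw (z.2 - z.1) ≤ ∑ i ∈ Finset.range (n + 1),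
      ∑ p ∈ Finset.range (cnt N v i), gw (prv (cnt N v) i + p) := by
  have hcard : ∀ m ≤ N, ((fset m N v).card : ℝ) =
      ∑ z ∈ fset N N v, if z.2 - z.1 ≤ m then (1 : ℝ) else 0 := by
    intro m hm
    rw [← Finset.sum_filter, Finset.sum_const, nsmul_eq_mul, mul_one]
    congr 2
    ext ⟨s, t⟩
    simp only [fset, Finset.mem_filter, Finset.mem_product, Finset.mem_range]
    omega
  have h1 : ∑ z ∈ fset N N v, cw (z.2 - z.1) = cw N * (fset N N v).card +
      ∑ m ∈ Finset.range N, (cw m - cw (m + 1)) * (fset m N v).card := by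
    have : ∀ z ∈ fset N N v, cw (z.2 - z.1) = cw N + ∑ m ∈ Finset.range N,
        (cw m - cw (m + 1)) * if z.2 - z.1 ≤ m then 1 else 0 := by
      rintro ⟨s, t⟩ hz
      simp only [fset, Finset.mem_filter, Finset.mem_product, Finset.mem_range] at hz
      exact abel_cw _ _ (by dsimp only; omega)
    rw [Finset.sum_congr rfl this, Finset.sum_add_distrib, Finset.sum_const, nsmul_eq_mul,
      mul_comm, Finset.sum_comm]
    congr 1
    refine Finset.sum_congr rfl fun m hm => ?_
    rw [hcard m (Finset.mem_range.1 hm).le, Finset.mul_sum]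
  have hb : ∀ m, ((fset m N v).card : ℝ) ≤ ∑ i ∈ Finset.range (n + 1),
      ∑ p ∈ Finset.range (cnt N v i), ((min m (prv (cnt N v) i + p) : ℕ) : ℝ) := by
    intro m
    exact_mod_cast card_fset_le m n N v hv
  rw [h1]
  calc _ ≤ cw N * (∑ i ∈ Finset.range (n + 1),
      ∑ p ∈ Finset.range (cnt N v i), ((min N (prv (cnt N v) i + p) : ℕ) : ℝ)) +
      ∑ m ∈ Finset.range N, (cw m - cw (m + 1)) * (∑ i ∈ Finset.range (n + 1),
      ∑ p ∈ Finset.range (cnt N v i), ((min m (prv (cnt N v) i + p) : ℕ) : ℝ)) := by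
        refine add_le_add (mul_le_mul_of_nonneg_left (hb N) (cw_nonneg N))
          (Finset.sum_le_sum fun m _ => mul_le_mul_of_nonneg_left (hb m) ?_)
        linarith [cw_succ_le m]
    _ = ∑ i ∈ Finset.range (n + 1), ∑ p ∈ Finset.range (cnt N v i),
          gw (min N (prv (cnt N v) i + p)) := by
        simp only [← abel_min, Finset.sum_add_distrib, Finset.mul_sum]
        congr 1
        rw [Finset.sum_comm]
        refine Finset.sum_congr rfl fun i _ => ?_
        rw [Finset.sum_comm]
    _ ≤ _ := Finset.sum_le_sum fun i _ => Finset.sum_le_sum fun p _ => gw_mono (min_le_right _ _)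

lemma sum_cw (t : ℕ) : ∑ s ∈ Finset.range t, cw (t - s) = gw t := by
  have h : ∀ t, ∑ s ∈ Finset.range t, cw (s + 1) = gw t := by
    intro t
    induction t with
    | zero => simp [gw]
    | succ t ih => rw [Finset.sum_range_succ, ih, gw_succ]
  rw [← h t, ← Finset.sum_range_reflect]
  refine Finset.sum_congr rfl fun s hs => ?_
  have := Finset.mem_range.1 hs
  congr 1
  omega

/-- Two levels are hostile when they differ by at least two. -/
def Hostile (a b : ℕ) : Prop := a + 2 ≤ b ∨ b + 2 ≤ a

instance (a b : ℕ) : Decidable (Hostile a b) := by unfold Hostile; infer_instance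

/-- The hostile energy of `v`: the sum of `cw |t - s|` over ordered pairs of positions below `N` with
hostile values. The distance `|t - s|` is written `(t - s) + (s - t)` with truncated subtraction. -/
noncomputable def hE (N : ℕ) (v : ℕ → ℕ) : ℝ :=
  ∑ s ∈ Finset.range N, ∑ t ∈ Finset.range N,
    if Hostile (v s) (v t) then cw ((t - s) + (s - t)) else 0

lemma hE_nonneg (N : ℕ) (v : ℕ → ℕ) : 0 ≤ hE N v := by
  unfold hE
  refine Finset.sum_nonneg fun s _ => Finset.sum_nonneg fun t _ => ?_
  split_ifs
  · exact cw_nonneg _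
  · exact le_rfl

/-- The hostile energy is the total energy minus the energy of friendly pairs. -/
lemma hE_eq (N : ℕ) (v : ℕ → ℕ) :
    hE N v = 2 * (∑ t ∈ Finset.range N, gw t - ∑ z ∈ fset N N v, cw (z.2 - z.1)) := by
  set w : ℕ → ℕ → ℝ := fun s t => if s < t then cw (t - s) else 0 with hw
  set φ : ℕ → ℕ → ℝ := fun s t =>
    if s < t ∧ v s ≤ v t + 1 ∧ v t ≤ v s + 1 then cw (t - s) else 0 with hφ
  have h1 : hE N v = ∑ s ∈ Finset.range N, ∑ t ∈ Finset.range N, (w s t - φ s t) +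
      ∑ s ∈ Finset.range N, ∑ t ∈ Finset.range N, (w t s - φ t s) := by
    unfold hE
    rw [← Finset.sum_add_distrib]
    refine Finset.sum_congr rfl fun s _ => ?_
    rw [← Finset.sum_add_distrib]
    refine Finset.sum_congr rfl fun t _ => ?_
    simp only [hw, hφ]
    rcases lt_trichotomy s t with h | h | h
    · rw [if_pos h, if_neg h.not_gt, if_neg (fun h' : t < s ∧ _ => h.not_gt h'.1)]
      rw [show (t - s) + (s - t) = t - s by omega]
      by_cases hh : Hostile (v s) (v t)
      · rw [if_pos hh, if_neg (by unfold Hostile at hh; omega)]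
        simp
      · rw [if_neg hh, if_pos (by unfold Hostile at hh; omega)]
        simp
    · subst h
      rw [if_neg (by unfold Hostile; omega)]
      simp
    · rw [if_pos h, if_neg h.not_gt, if_neg (fun h' : s < t ∧ _ => h.not_gt h'.1)]
      rw [show (t - s) + (s - t) = s - t by omega]
      by_cases hh : Hostile (v s) (v t)
      · rw [if_pos hh, if_neg (by unfold Hostile at hh; omega)]
        simp
      · rw [if_neg hh, if_pos (by unfold Hostile at hh; omega)]
        simp
  have h2 : ∑ s ∈ Finset.range N, ∑ t ∈ Finset.range N, (w t s - φ t s) =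
      ∑ s ∈ Finset.range N, ∑ t ∈ Finset.range N, (w s t - φ s t) := Finset.sum_comm
  have h3 : ∑ s ∈ Finset.range N, ∑ t ∈ Finset.range N, w s t = ∑ t ∈ Finset.range N, gw t := by
    rw [Finset.sum_comm]
    refine Finset.sum_congr rfl fun t ht => ?_
    rw [← sum_cw t, ← Finset.sum_filter]
    refine Finset.sum_congr ?_ fun _ _ => rfl
    ext s
    have := Finset.mem_range.1 ht
    simp only [Finset.mem_filter, Finset.mem_range]
    omega
  have h4 : ∑ s ∈ Finset.range N, ∑ t ∈ Finset.range N, φ s t =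
      ∑ z ∈ fset N N v, cw (z.2 - z.1) := by
    rw [fset, Finset.sum_filter, Finset.sum_product]
    refine Finset.sum_congr rfl fun s _ => Finset.sum_congr rfl fun t ht => ?_
    have := Finset.mem_range.1 ht
    simp only [hφ]
    refine if_congr ?_ rfl rfl
    omega
  rw [h1, h2]
  simp only [Finset.sum_sub_distrib, h3, h4]
  ring

/-! ### The logarithmic lower bound -/

lemma sum_inv_ge (a l : ℕ) : Real.log (a + l + 2) - Real.log (a + 2) ≤
    ∑ p ∈ Finset.range l, 1 / (((a + p : ℕ) : ℝ) + 2) := by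
  induction l with
  | zero => simp
  | succ l ih =>
    rw [Finset.sum_range_succ]
    have hx : (0 : ℝ) < a + l + 2 := by positivity
    have h := Real.log_le_sub_one_of_pos (show 0 < ((a : ℝ) + l + 2 + 1) / (a + l + 2) by positivity)
    rw [Real.log_div (by positivity) hx.ne'] at h
    have e : ((a : ℝ) + l + 2 + 1) / (a + l + 2) - 1 = 1 / (a + l + 2) := by field_simp; ring
    rw [e] at h
    push_cast at ih ⊢
    rw [show (a : ℝ) + (l + 1) + 2 = a + l + 2 + 1 by ring]
    linarith

lemma sum_inv_le (a N : ℕ) (h : a ≤ N) :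
    ∑ t ∈ Finset.range N, 1 / ((t : ℝ) + 2) - ∑ t ∈ Finset.range a, 1 / ((t : ℝ) + 2) ≤
      Real.log (N + 1) - Real.log (a + 1) := by
  induction N, h using Nat.le_induction with
  | base => simp
  | succ N hN ih =>
    rw [Finset.sum_range_succ]
    have h := Real.one_sub_inv_le_log_of_pos (show 0 < ((N : ℝ) + 1 + 1) / (N + 1) by positivity)
    rw [Real.log_div (by positivity) (by positivity)] at h
    have e : 1 - (((N : ℝ) + 1 + 1) / (N + 1))⁻¹ = 1 / (N + 2) := by field_simp; ring
    rw [e] at h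
    push_cast
    linarith

lemma sum_cnt (n N : ℕ) (v : ℕ → ℕ) (hv : ∀ s < N, v s ≤ n) :
    ∑ i ∈ Finset.range (n + 1), cnt N v i = N := by
  unfold cnt
  rw [← Finset.card_eq_sum_card_fiberwise (f := v) (s := Finset.range N)
    (t := Finset.range (n + 1)), Finset.card_range]
  intro s hs
  have := hv s (by simpa using hs)
  simp
  omega

/-- The hostile energy is bounded below by the level counts. In `hE_eq` and `friend_energy_le` the terms
`1 / 2` of `gw` cancel, and the harmonic sums that remain are compared with logarithms. -/
lemma hE_ge (n N : ℕ) (v : ℕ → ℕ) (hv : ∀ s < N, v s ≤ n) :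
    2 * (∑ i ∈ Finset.range n, (Real.log (cnt N v i + cnt N v (i + 1) + 2) -
      Real.log (cnt N v i + 2)) - (Real.log (N + 1) - Real.log (cnt N v 0 + 1))) ≤ hE N v := by
  rw [hE_eq]
  have h1 := friend_energy_le n N v hv
  have h2 := sum_cnt n N v hv
  have hN : ∑ t ∈ Finset.range N, gw t = ∑ i ∈ Finset.range (n + 1), (cnt N v i : ℝ) * (1 / 2) -
      ∑ t ∈ Finset.range N, 1 / ((t : ℝ) + 2) := by
    rw [← Finset.sum_mul, ← Nat.cast_sum, h2]
    unfold gw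
    rw [Finset.sum_sub_distrib, Finset.sum_const, Finset.card_range, nsmul_eq_mul]
  have h3 : ∑ i ∈ Finset.range (n + 1), ∑ p ∈ Finset.range (cnt N v i), gw (prv (cnt N v) i + p) =
      ∑ i ∈ Finset.range (n + 1), (cnt N v i : ℝ) * (1 / 2) - ∑ i ∈ Finset.range (n + 1),
        ∑ p ∈ Finset.range (cnt N v i), 1 / (((prv (cnt N v) i + p : ℕ) : ℝ) + 2) := by
    rw [← Finset.sum_sub_distrib]
    refine Finset.sum_congr rfl fun i _ => ?_
    unfold gw
    rw [Finset.sum_sub_distrib, Finset.sum_const, Finset.card_range, nsmul_eq_mul]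
  rw [Finset.sum_range_succ' (fun i => ∑ p ∈ Finset.range (cnt N v i),
    1 / (((prv (cnt N v) i + p : ℕ) : ℝ) + 2))] at h3
  have h4 : ∑ i ∈ Finset.range n, (Real.log (cnt N v i + cnt N v (i + 1) + 2) -
      Real.log (cnt N v i + 2)) ≤ ∑ i ∈ Finset.range n, ∑ p ∈ Finset.range (cnt N v (i + 1)),
        1 / (((prv (cnt N v) (i + 1) + p : ℕ) : ℝ) + 2) :=
    Finset.sum_le_sum fun i _ => sum_inv_ge _ _
  have h5 := sum_inv_le (cnt N v 0) N (by
    unfold cnt; exact (Finset.card_filter_le _ _).trans (by simp))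
  have h6 := h1.trans_eq h3
  simp only [prv, zero_add] at h6 h4
  linarith

/-- Half the left-hand side of `hE_ge` is at least `n log 2`, up to a constant depending only on `q`, when the
extreme levels `0` and `n` each hold at least the fraction `1 / (2 q)` of the `N` positions and `N` is
exponentially large in `n`. The loss must not grow with `n`, since it is
later multiplied by `δ` of order `1 / n`. -/
lemma log_sum_ge (n q : ℕ) (hq : 1 ≤ q) (l : ℕ → ℕ) (K N : ℕ) (hK : K = (n + 2) * 2 ^ n)
    (hN : N = q * (2 * K)) (h0 : K ≤ l 0) (hn : K ≤ l n) (h0N : l 0 ≤ N) :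
    n * Real.log 2 - (1 + 2 * Real.log (4 * q)) ≤
      ∑ i ∈ Finset.range n, (Real.log (l i + l (i + 1) + 2) - Real.log (l i + 2)) -
        (Real.log (N + 1) - Real.log (l 0 + 1)) := by
  have hq' : (1 : ℝ) ≤ q := by exact_mod_cast hq
  have hK1 : (1 : ℝ) ≤ K := by
    have : 1 ≤ K := by rw [hK]; exact Nat.mul_pos (by omega) (by positivity)
    exact_mod_cast this
  have hNR : (N : ℝ) = q * (2 * K) := by rw [hN]; push_cast; ring
  have h0' : (K : ℝ) ≤ l 0 := by exact_mod_cast h0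
  have hn' : (K : ℝ) ≤ l n := by exact_mod_cast hn
  have h0N' : (l 0 : ℝ) ≤ N := by exact_mod_cast h0N
  have hqK : (1 : ℝ) ≤ q * K := by nlinarith
  have hlogq : 0 ≤ Real.log (4 * q) := Real.log_nonneg (by linarith)
  have hA : Real.log (N + 1) - Real.log (l 0 + 1) ≤ Real.log (4 * q) := by
    rw [← Real.log_div (by positivity) (by positivity)]
    apply Real.log_le_log (by positivity)
    rw [div_le_iff₀ (by positivity), hNR]
    nlinarith
  have hB : -Real.log (4 * q) ≤ Real.log (l n + 2) - Real.log (l 0 + 2) := by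
    rw [← Real.log_div (by positivity) (by positivity), ← Real.log_inv]
    apply Real.log_le_log (by positivity)
    rw [inv_eq_one_div, div_le_div_iff₀ (by positivity) (by positivity)]
    nlinarith
  -- If every level holds at least `n` positions, each application of the inequality of arithmetic
  -- and geometric means loses at most `1 / (n + 1)` from the additive constants. Otherwise some
  -- level `j` is so rare that climbing from `l j < n` to `l n ≥ (n + 2) 2 ^ n` alone gives `n log 2`.
  by_cases hc : ∀ i ≤ n, n ≤ l i
  · have hterm : ∀ i ∈ Finset.range n, Real.log 2 - 1 / (n + 1) +
        (1 / 2) * (Real.log ((l (i + 1) : ℕ) + 2) - Real.log ((l i : ℕ) + 2)) ≤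
        Real.log (l i + l (i + 1) + 2) - Real.log (l i + 2) := by
      intro i hi
      have hi := Finset.mem_range.1 hi
      have ha : (n : ℝ) ≤ l i := by exact_mod_cast hc i (by omega)
      have hb : (n : ℝ) ≤ l (i + 1) := by exact_mod_cast hc (i + 1) (by omega)
      generalize (l i : ℝ) = a at *
      generalize (l (i + 1) : ℝ) = b at *
      have hn0 : (0 : ℝ) ≤ n := Nat.cast_nonneg n
      have ha0 : 0 ≤ a := hn0.trans ha
      have hb0 : 0 ≤ b := hn0.trans hb
      have e1 : Real.log ((n + 1) / (n + 2)) + Real.log (a + b + 4) ≤ Real.log (a + b + 2) := by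
        rw [← Real.log_mul (by positivity) (by positivity)]
        apply Real.log_le_log (by positivity)
        rw [div_mul_eq_mul_div, div_le_iff₀ (by positivity)]
        nlinarith
      have e2 : 2 * Real.log 2 + Real.log (a + 2) + Real.log (b + 2) ≤
          2 * Real.log (a + b + 4) := by
        have : 2 * Real.log 2 + Real.log (a + 2) + Real.log (b + 2) =
            Real.log (2 ^ 2 * (a + 2) * (b + 2)) := by
          rw [Real.log_mul (by positivity) (by positivity),
            Real.log_mul (by positivity) (by positivity), Real.log_pow]
          norm_num
        rw [this, show 2 * Real.log (a + b + 4) = Real.log ((a + b + 4) ^ 2) by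
          rw [Real.log_pow]; norm_num]
        apply Real.log_le_log (by positivity)
        nlinarith [sq_nonneg (a - b)]
      have e3 := Real.one_sub_inv_le_log_of_pos (show 0 < ((n : ℝ) + 1) / (n + 2) by positivity)
      have e4 : 1 - (((n : ℝ) + 1) / (n + 2))⁻¹ = - (1 / (n + 1)) := by field_simp; ring
      rw [e4] at e3
      linarith
    have hs := Finset.sum_le_sum hterm
    rw [Finset.sum_add_distrib, ← Finset.mul_sum,
      Finset.sum_range_sub (fun i => Real.log ((l i : ℕ) + 2)), Finset.sum_const,
      Finset.card_range, nsmul_eq_mul] at hs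
    have : (n : ℝ) * (1 / (n + 1)) ≤ 1 := by
      rw [mul_one_div, div_le_one (by positivity)]
      linarith
    nlinarith
  · push Not at hc
    obtain ⟨j, hj, hjn⟩ := hc
    have h1 : ∑ i ∈ Finset.Ico j n, (Real.log (l i + l (i + 1) + 2) - Real.log (l i + 2)) ≤
        ∑ i ∈ Finset.range n, (Real.log (l i + l (i + 1) + 2) - Real.log (l i + 2)) := by
      refine Finset.sum_le_sum_of_subset_of_nonneg (fun i hi => ?_) fun i _ _ => ?_
      · simp at hi ⊢; omega
      · rw [sub_nonneg]
        apply Real.log_le_log (by positivity)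
        have : (0 : ℝ) ≤ l (i + 1) := Nat.cast_nonneg _
        linarith
    have h2 : ∑ i ∈ Finset.Ico j n, (Real.log ((l (i + 1) : ℕ) + 2) - Real.log ((l i : ℕ) + 2)) ≤
        ∑ i ∈ Finset.Ico j n, (Real.log (l i + l (i + 1) + 2) - Real.log (l i + 2)) := by
      refine Finset.sum_le_sum fun i _ => ?_
      gcongr
      have : (0 : ℝ) ≤ l i := Nat.cast_nonneg _
      linarith
    rw [Finset.sum_Ico_sub (fun i => Real.log ((l i : ℕ) + 2)) hj] at h2
    have h3 : n * Real.log 2 ≤ Real.log (l n + 2) - Real.log (l j + 2) := by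
      rw [← Real.log_pow, ← Real.log_div (by positivity) (by positivity)]
      apply Real.log_le_log (by positivity)
      rw [le_div_iff₀ (by positivity)]
      have hjR : (l j : ℝ) ≤ n := by exact_mod_cast hjn.le
      have hKR : (K : ℝ) = (n + 2) * 2 ^ n := by rw [hK]; push_cast; ring
      have : (2 : ℝ) ^ n * (l j + 2) ≤ 2 ^ n * (n + 2) := by gcongr
      nlinarith
    linarith

/-- The discrete estimate in a form that is affine in the numbers of wrong levels near the two ends, so
that it can be averaged. If more than `K` of these levels are wrong, the error term alone exceeds `c`. -/
lemma hE_ge_bad (n q : ℕ) (hq : 1 ≤ q) (K N : ℕ) (hK : K = (n + 2) * 2 ^ n)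
    (hN : N = q * (2 * K)) (v : ℕ → ℕ) (hv : ∀ s < N, v s ≤ n) (c : ℝ) (hc0 : 0 ≤ c)
    (hc : c ≤ 2 * (n * Real.log 2 - (1 + 2 * Real.log (4 * q)))) :
    c ≤ hE N v + c / K * ((((Finset.range (2 * K)).filter fun s => v s ≠ 0).card : ℝ) +
      (((Finset.Ico (N - 2 * K) N).filter fun s => v s ≠ n).card : ℝ)) := by
  have hK1 : 1 ≤ K := by rw [hK]; exact Nat.mul_pos (by omega) (by positivity)
  have hK1' : (1 : ℝ) ≤ K := by exact_mod_cast hK1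
  have hNK : 2 * K ≤ N := by rw [hN]; exact Nat.le_mul_of_pos_left _ hq
  set b0 := ((Finset.range (2 * K)).filter fun s => v s ≠ 0).card with hb0
  set b1 := ((Finset.Ico (N - 2 * K) N).filter fun s => v s ≠ n).card with hb1
  by_cases hb : b0 + b1 ≤ K
  · have e0 : K ≤ cnt N v 0 := by
      have h1 : ((Finset.range (2 * K)).filter fun s => v s = 0).card + b0 = 2 * K := by
        rw [hb0, Finset.card_filter_add_card_filter_not, Finset.card_range]
      have h2 : ((Finset.range (2 * K)).filter fun s => v s = 0).card ≤ cnt N v 0 := by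
        unfold cnt
        gcongr
      omega
    have en : K ≤ cnt N v n := by
      have h1 : ((Finset.Ico (N - 2 * K) N).filter fun s => v s = n).card + b1 = 2 * K := by
        rw [hb1, Finset.card_filter_add_card_filter_not, Nat.card_Ico]
        omega
      have h2 : ((Finset.Ico (N - 2 * K) N).filter fun s => v s = n).card ≤ cnt N v n := by
        unfold cnt
        apply Finset.card_le_card
        apply Finset.filter_subset_filter
        intro s hs
        simp at hs ⊢
        omega
      omega
    have h0N : cnt N v 0 ≤ N := by
      unfold cnt; exact (Finset.card_filter_le _ _).trans (by simp)
    have h1 := log_sum_ge n q hq (cnt N v) K N hK hN e0 en h0N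
    have h2 := hE_ge n N v hv
    have : 0 ≤ c / K * ((b0 : ℝ) + b1) := by positivity
    linarith
  · have h1 : (K : ℝ) ≤ (b0 : ℝ) + b1 := by exact_mod_cast (not_le.1 hb).le
    have h2 : c / K * K ≤ c / K * ((b0 : ℝ) + b1) := by gcongr
    rw [div_mul_cancel₀ _ (by positivity)] at h2
    linarith [hE_nonneg N v]

/-! ### Random sampling of cells -/

/-- The integral of `|y - x|⁻²` over the pairs of points of `S` with hostile values under `V`. Pairs on
the diagonal are never hostile, so `1 / 0 = 0` plays no role. -/
noncomputable def hostileEnergy (V : ℝ → ℕ) (S : Set ℝ) : ℝ≥0∞ :=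
  ∫⁻ x in S, ∫⁻ y in S, if Hostile (V x) (V y) then ENNReal.ofReal (1 / |y - x| ^ 2) else 0

/-- The `s`-th half-open cell of length `ε` to the right of `a`. -/
def cell (a ε : ℝ) (s : ℕ) : Set ℝ := Ico (a + s * ε) (a + (s + 1) * ε)

/-- The uniform probability measure on the `s`-th cell (for `ε > 0`). -/
noncomputable def cellMeasure (a ε : ℝ) (s : ℕ) : Measure ℝ :=
  ENNReal.ofReal (1 / ε) • volume.restrict (cell a ε s)

lemma isProb_cellMeasure (a ε : ℝ) (hε : 0 < ε) (s : ℕ) :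
    IsProbabilityMeasure (cellMeasure a ε s) := ⟨by
  rw [cellMeasure, Measure.smul_apply, Measure.restrict_apply_univ, cell, Real.volume_Ico,
    smul_eq_mul, ← ENNReal.ofReal_mul (by positivity)]
  rw [show 1 / ε * (a + (s + 1) * ε - (a + s * ε)) = 1 by field_simp; ring, ENNReal.ofReal_one]⟩

lemma cell_disjoint (a ε : ℝ) (hε : 0 < ε) : Pairwise (Function.onFun Disjoint (cell a ε)) := by
  have hm : Monotone fun s : ℕ => a + s * ε := by
    intro s t h
    have : (s : ℝ) ≤ t := by exact_mod_cast h
    dsimp only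
    gcongr
  intro s t hst
  simpa [Function.onFun, cell] using hm.pairwise_disjoint_on_Ico_succ hst

lemma cell_subset (a ε : ℝ) (hε : 0 < ε) {s m₀ m₁ : ℕ} (h0 : m₀ ≤ s) (h1 : s < m₁) :
    cell a ε s ⊆ Ico (a + m₀ * ε) (a + m₁ * ε) := by
  have h0' : (m₀ : ℝ) ≤ s := by exact_mod_cast h0
  have h1' : (s : ℝ) + 1 ≤ m₁ := by exact_mod_cast h1
  apply Ico_subset_Ico <;> gcongr

lemma measurable_hostile {V : ℝ → ℕ} (hV : Measurable V) {w : ℝ → ℝ → ℝ≥0∞}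
    (hw : Measurable (Function.uncurry w)) :
    Measurable (Function.uncurry fun x y => if Hostile (V x) (V y) then w x y else 0) := by
  refine Measurable.ite ?_ hw measurable_const
  exact ((hV.comp measurable_fst).prodMk (hV.comp measurable_snd))
    (MeasurableSet.of_discrete (s := {p : ℕ × ℕ | Hostile p.1 p.2}))

/-- Points of two cells at index distance `d` are at distance at most `(d + 1) ε`, and
`cw d ≤ 1 / (d + 1) ^ 2`. -/
lemma cell_weight_le (a ε : ℝ) (hε : 0 < ε) {s t : ℕ} (hst : s ≠ t) {x y : ℝ}
    (hx : x ∈ cell a ε s) (hy : y ∈ cell a ε t) :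
    ENNReal.ofReal (1 / ε) * (ENNReal.ofReal (1 / ε) *
      ENNReal.ofReal (cw ((t - s) + (s - t)))) ≤ ENNReal.ofReal (1 / |y - x| ^ 2) := by
  rw [← ENNReal.ofReal_mul (by positivity), ← ENNReal.ofReal_mul (by positivity)]
  apply ENNReal.ofReal_le_ofReal
  set d := (t - s) + (s - t) with hd
  have hne : x ≠ y := by
    rintro rfl
    exact Set.disjoint_left.1 (cell_disjoint a ε hε hst) hx hy
  have hdR : |(t : ℝ) - s| = d := by
    rcases le_total s t with h | h
    · have : (s : ℝ) ≤ t := by exact_mod_cast h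
      rw [abs_of_nonneg (by linarith), hd, Nat.sub_eq_zero_of_le h, add_zero, Nat.cast_sub h]
    · have : (t : ℝ) ≤ s := by exact_mod_cast h
      rw [abs_of_nonpos (by linarith), hd, Nat.sub_eq_zero_of_le h, zero_add, Nat.cast_sub h]
      ring
  obtain ⟨hx1, hx2⟩ := hx
  obtain ⟨hy1, hy2⟩ := hy
  have habs : |y - x| ≤ (d + 1) * ε := by
    have h1 := le_abs_self ((t : ℝ) - s)
    have h2 := neg_abs_le ((t : ℝ) - s)
    rw [hdR] at h1 h2
    rw [abs_le]
    constructor <;> nlinarith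
  have hpos : 0 < |y - x| := abs_pos.2 (sub_ne_zero.2 hne.symm)
  rw [show 1 / ε * (1 / ε * cw d) = 1 / (ε ^ 2 * ((d + 1) * (d + 2))) by
    unfold cw; field_simp]
  apply one_div_le_one_div_of_le (by positivity)
  calc |y - x| ^ 2 ≤ ((d + 1) * ε) ^ 2 := by gcongr
    _ ≤ ε ^ 2 * ((d + 1) * (d + 2)) := by
      have : (0 : ℝ) ≤ d := Nat.cast_nonneg d
      have h3 : 0 ≤ ε ^ 2 * (d + 1) := by positivity
      nlinarith

lemma sum_cells_le (a ε : ℝ) (hε : 0 < ε) (V : ℝ → ℕ) (hV : Measurable V) (N : ℕ) :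
    ∑ s ∈ Finset.range N, ∑ t ∈ Finset.range N,
      ∫⁻ x in cell a ε s, ∫⁻ y in cell a ε t,
        (if Hostile (V x) (V y) then ENNReal.ofReal (1 / |y - x| ^ 2) else 0) ≤
      hostileEnergy V (Ico a (a + N * ε)) := by
  set G : ℝ → ℝ → ℝ≥0∞ := fun x y =>
    if Hostile (V x) (V y) then ENNReal.ofReal (1 / |y - x| ^ 2) else 0 with hG
  have hGm : Measurable (Function.uncurry G) := by
    refine measurable_hostile hV (w := fun x y => ENNReal.ofReal (1 / |y - x| ^ 2)) ?_
    unfold Function.uncurry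
    fun_prop
  have hcm : ∀ s, MeasurableSet (cell a ε s) := fun s => measurableSet_Ico
  have hsum : ∀ g : ℝ → ℝ≥0∞, ∑ s ∈ Finset.range N, ∫⁻ x in cell a ε s, g x ≤
      ∫⁻ x in Ico a (a + N * ε), g x := by
    intro g
    rw [← lintegral_biUnion_finset ((cell_disjoint a ε hε).set_pairwise _) (fun s _ => hcm s)]
    apply lintegral_mono_set
    refine iUnion₂_subset fun s hs => ?_
    have := cell_subset a ε hε (Nat.zero_le s) (Finset.mem_range.1 hs)
    simpa using this
  calc _ = ∑ s ∈ Finset.range N, ∫⁻ x in cell a ε s, ∑ t ∈ Finset.range N,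
        ∫⁻ y in cell a ε t, G x y := by
        refine Finset.sum_congr rfl fun s _ => ?_
        rw [lintegral_finsetSum]
        intro t _
        exact hGm.lintegral_prod_right'
    _ ≤ ∑ s ∈ Finset.range N, ∫⁻ x in cell a ε s, ∫⁻ y in Ico a (a + N * ε), G x y := by
        gcongr with s hs x
        exact hsum _
    _ ≤ _ := hsum _

lemma sum_card_bad_le (a ε : ℝ) (hε : 0 < ε) (V : ℝ → ℕ) (hV : Measurable V) (j m₀ m₁ : ℕ) :
    ∑ s ∈ Finset.Ico m₀ m₁, (cellMeasure a ε s) {x | V x ≠ j} ≤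
      ENNReal.ofReal (1 / ε) * volume ({x | V x ≠ j} ∩ Ico (a + m₀ * ε) (a + m₁ * ε)) := by
  have hm : MeasurableSet {x | V x ≠ j} :=
    hV (MeasurableSet.of_discrete (s := {p : ℕ | p ≠ j}))
  simp only [cellMeasure, Measure.smul_apply, smul_eq_mul, ← Finset.mul_sum,
    Measure.restrict_apply hm]
  gcongr
  rw [← measure_biUnion_finset]
  · apply measure_mono
    refine iUnion₂_subset fun s hs => inter_subset_inter_right _ ?_
    rw [Finset.mem_Ico] at hs
    exact cell_subset a ε hε hs.1 hs.2
  · intro s _ t _ hst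
    exact (cell_disjoint a ε hε hst).mono inter_subset_right inter_subset_right
  · intro s _
    exact hm.inter measurableSet_Ico

/-- The discrete estimate `hE_ge_bad` averaged over independent uniform samples from the `N` cells
between `a` and `a + N ε`. -/
lemma hostileEnergy_ge (n q : ℕ) (hq : 1 ≤ q) (K N : ℕ) (hK : K = (n + 2) * 2 ^ n)
    (hN : N = q * (2 * K)) (V : ℝ → ℕ) (hV : Measurable V) (hn : ∀ x, V x ≤ n)
    (a ε : ℝ) (hε : 0 < ε) (c : ℝ) (hc0 : 0 ≤ c)
    (hc : c ≤ 2 * (n * Real.log 2 - (1 + 2 * Real.log (4 * q)))) :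
    ENNReal.ofReal c ≤ hostileEnergy V (Ico a (a + N * ε)) +
      ENNReal.ofReal (c / (K * ε)) *
        (volume ({x | V x ≠ 0} ∩ Ico a (a + (2 * K : ℕ) * ε)) +
          volume ({x | V x ≠ n} ∩ Ico (a + (N - 2 * K : ℕ) * ε) (a + N * ε))) := by
  have hprob := isProb_cellMeasure a ε hε
  set P := Measure.infinitePi (cellMeasure a ε) with hP
  have hK1 : (0 : ℝ) < K := by
    have : 0 < K := by rw [hK]; exact Nat.mul_pos (by omega) (by positivity)
    exact_mod_cast this
  set h : ℕ → ℕ → (ℕ → ℝ) → ℝ≥0∞ := fun s t ω =>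
    if Hostile (V (ω s)) (V (ω t)) then ENNReal.ofReal (cw ((t - s) + (s - t))) else 0 with hh
  set b : ℕ → ℕ → (ℕ → ℝ) → ℝ≥0∞ := fun j s ω => if V (ω s) ≠ j then 1 else 0 with hb
  have hVe : ∀ s, Measurable fun ω : ℕ → ℝ => V (ω s) := fun s =>
    hV.comp (measurable_pi_apply s)
  have hhm : ∀ s t, Measurable (h s t) := fun s t =>
    Measurable.ite (((hVe s).prodMk (hVe t))
      (MeasurableSet.of_discrete (s := {p : ℕ × ℕ | Hostile p.1 p.2})))
      measurable_const measurable_const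
  have hbm : ∀ j s, Measurable (b j s) := fun j s =>
    Measurable.ite ((hVe s) (MeasurableSet.of_discrete (s := {p : ℕ | p ≠ j})))
      measurable_const measurable_const
  -- The discrete estimate for the sample `ω`.
  have hpt : ∀ ω : ℕ → ℝ, ENNReal.ofReal c ≤
      (∑ s ∈ Finset.range N, ∑ t ∈ Finset.range N, h s t ω) + ENNReal.ofReal (c / K) *
        ((∑ s ∈ Finset.Ico 0 (2 * K), b 0 s ω) + ∑ s ∈ Finset.Ico (N - 2 * K) N, b n s ω) := by
    intro ω
    have key := hE_ge_bad n q hq K N hK hN (fun s => V (ω s)) (fun s _ => hn _) c hc0 hc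
    refine (ENNReal.ofReal_le_ofReal key).trans (le_of_eq ?_)
    have hE0 : ENNReal.ofReal (hE N fun s => V (ω s)) =
        ∑ s ∈ Finset.range N, ∑ t ∈ Finset.range N, h s t ω := by
      have h0 : ∀ s t, 0 ≤ if Hostile (V (ω s)) (V (ω t)) then
          cw ((t - s) + (s - t)) else 0 := by
        intro s t
        split_ifs
        · exact cw_nonneg _
        · exact le_rfl
      unfold hE
      rw [ENNReal.ofReal_sum_of_nonneg fun s _ => Finset.sum_nonneg fun t _ => h0 s t]
      refine Finset.sum_congr rfl fun s _ => ?_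
      rw [ENNReal.ofReal_sum_of_nonneg fun t _ => h0 s t]
      refine Finset.sum_congr rfl fun t _ => ?_
      simp only [hh]
      split_ifs <;> simp
    have hEn : 0 ≤ hE N fun s => V (ω s) := by
      unfold hE
      refine Finset.sum_nonneg fun s _ => Finset.sum_nonneg fun t _ => ?_
      split_ifs
      · exact cw_nonneg _
      · exact le_rfl
    rw [ENNReal.ofReal_add hEn (by positivity), hE0, ENNReal.ofReal_mul (by positivity),
      ENNReal.ofReal_add (by positivity) (by positivity), ENNReal.ofReal_natCast,
      ENNReal.ofReal_natCast, Finset.card_filter, Finset.card_filter, Finset.range_eq_Ico (2 * K)]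
    push_cast
    rfl
  -- For `s ≠ t` the coordinates `ω s` and `ω t` are independent, so the expectation is a double
  -- integral over two cells; for `s = t` the left-hand side vanishes.
  have hpair : ∀ s t, ∫⁻ ω, h s t ω ∂P ≤ ∫⁻ x in cell a ε s, ∫⁻ y in cell a ε t,
      (if Hostile (V x) (V y) then ENNReal.ofReal (1 / |y - x| ^ 2) else 0) := by
    intro s t
    by_cases hst : s = t
    · subst hst
      have : ∀ ω, h s s ω = 0 := fun ω => by
        simp only [hh]; rw [if_neg (by unfold Hostile; omega)]
      simp [this]
    set F : ℝ → ℝ → ℝ≥0∞ := fun x y =>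
      if Hostile (V x) (V y) then ENNReal.ofReal (cw ((t - s) + (s - t))) else 0 with hF
    have hFm : Measurable (Function.uncurry F) :=
      measurable_hostile hV (w := fun _ _ => ENNReal.ofReal (cw ((t - s) + (s - t))))
        measurable_const
    have hind : P.map (fun ω => (ω s, ω t)) = (cellMeasure a ε s).prod (cellMeasure a ε t) :=
      Measure.infinitePi_map_eval_prod hst
    calc ∫⁻ ω, h s t ω ∂P = ∫⁻ z, Function.uncurry F z ∂(P.map fun ω => (ω s, ω t)) := by
          rw [lintegral_map hFm (by fun_prop)]
          rfl
      _ = ENNReal.ofReal (1 / ε) * ∫⁻ x in cell a ε s, ENNReal.ofReal (1 / ε) *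
            ∫⁻ y in cell a ε t, F x y := by
          rw [hind, lintegral_prod _ hFm.aemeasurable]
          simp only [cellMeasure, lintegral_smul_measure, Function.uncurry_apply_pair, smul_eq_mul]
      _ = ∫⁻ x in cell a ε s, ∫⁻ y in cell a ε t,
            ENNReal.ofReal (1 / ε) * (ENNReal.ofReal (1 / ε) * F x y) := by
          rw [← lintegral_const_mul' _ _ ENNReal.ofReal_ne_top]
          simp only [← lintegral_const_mul' _ _ (ENNReal.ofReal_ne_top (r := 1 / ε))]
      _ ≤ _ := by
          refine setLIntegral_mono' measurableSet_Ico fun x hx =>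
            setLIntegral_mono' measurableSet_Ico fun y hy => ?_
          simp only [hF]
          split_ifs
          · exact cell_weight_le a ε hε hst hx hy
          · simp
  have hbad : ∀ j s, ∫⁻ ω, b j s ω ∂P = cellMeasure a ε s {x | V x ≠ j} := by
    intro j s
    have hm : MeasurableSet {x | V x ≠ j} :=
      hV (MeasurableSet.of_discrete (s := {p : ℕ | p ≠ j}))
    rw [← Measure.infinitePi_map_eval (cellMeasure a ε) s,
      Measure.map_apply (measurable_pi_apply s) hm,
      ← lintegral_indicator_one (measurable_pi_apply s hm)]
    refine lintegral_congr fun ω => ?_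
    by_cases hv : V (ω s) = j <;> simp [hb, hv, indicator]
  have hb0 := sum_card_bad_le a ε hε V hV 0 0 (2 * K)
  have hb1 := sum_card_bad_le a ε hε V hV n (N - 2 * K) N
  simp only [Nat.cast_zero, zero_mul, add_zero] at hb0
  calc ENNReal.ofReal c = ∫⁻ _, ENNReal.ofReal c ∂P := by
        rw [lintegral_const, measure_univ, mul_one]
    _ ≤ ∫⁻ ω, ((∑ s ∈ Finset.range N, ∑ t ∈ Finset.range N, h s t ω) + ENNReal.ofReal (c / K) *
        ((∑ s ∈ Finset.Ico 0 (2 * K), b 0 s ω) + ∑ s ∈ Finset.Ico (N - 2 * K) N, b n s ω)) ∂P :=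
        lintegral_mono hpt
    _ = (∑ s ∈ Finset.range N, ∑ t ∈ Finset.range N, ∫⁻ ω, h s t ω ∂P) + ENNReal.ofReal (c / K) *
        ((∑ s ∈ Finset.Ico 0 (2 * K), cellMeasure a ε s {x | V x ≠ 0}) +
          ∑ s ∈ Finset.Ico (N - 2 * K) N, cellMeasure a ε s {x | V x ≠ n}) := by
        rw [lintegral_add_left (by fun_prop), lintegral_const_mul' _ _ ENNReal.ofReal_ne_top,
          lintegral_add_left (by fun_prop), lintegral_finsetSum _ (fun s _ => by fun_prop),
          lintegral_finsetSum _ (fun s _ => hbm _ _), lintegral_finsetSum _ (fun s _ => hbm _ _)]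
        simp only [hbad]
        congr 1
        refine Finset.sum_congr rfl fun s _ => ?_
        rw [lintegral_finsetSum _ (fun t _ => hhm _ _)]
    _ ≤ _ := by
        refine add_le_add ((Finset.sum_le_sum fun s _ => Finset.sum_le_sum fun t _ =>
          hpair s t).trans (sum_cells_le a ε hε V hV N)) ?_
        refine (mul_le_mul_right (add_le_add hb0 hb1) _).trans (le_of_eq ?_)
        rw [← mul_add, ← mul_assoc, ← ENNReal.ofReal_mul (by positivity)]
        congr 2
        field_simp

/-! ### Quantization and the lower bound on an interval -/

lemma Lambda1_neg (φ : ℝ → ℝ) (p δ : ℝ) (u : ℝ → ℝ) (Ω : Set ℝ) :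
    Lambda1 φ p δ (fun x => -u x) Ω = Lambda1 φ p δ u Ω := by
  unfold Lambda1
  have h : ∀ x y, |-u y - -u x| = |u y - u x| := fun x y => by
    rw [← abs_neg]; congr 1; ring
  simp only [h]

/-- The level of `u x` in steps of height `h` above `A`, truncated to `{0, …, n}`: values below `A + h`
have level `0`, and values from `A + n h` on have level `n`. -/
noncomputable def quant (A h : ℝ) (n : ℕ) (u : ℝ → ℝ) (x : ℝ) : ℕ := min n ⌊(u x - A) / h⌋₊

/-- Truncation to `{0, …, n}` only brings levels closer, and floors that differ by at least two come from
numbers that differ by more than one. -/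
lemma lt_of_hostile_quant {A h : ℝ} (hh : 0 < h) {n : ℕ} {u : ℝ → ℝ} {x y : ℝ}
    (H : Hostile (quant A h n u x) (quant A h n u y)) : h < |u y - u x| := by
  have key : ∀ x y, quant A h n u x + 2 ≤ quant A h n u y → h < u y - u x := by
    intro x y H
    unfold quant at H
    have h1 : ⌊(u x - A) / h⌋₊ + 2 ≤ ⌊(u y - A) / h⌋₊ := by omega
    have h2 := Nat.lt_floor_add_one ((u x - A) / h)
    have h3 : ((⌊(u y - A) / h⌋₊ : ℕ) : ℝ) ≤ (u y - A) / h := by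
      apply Nat.floor_le
      by_contra hc
      rw [Nat.floor_of_nonpos (not_le.1 hc).le] at h1
      omega
    have h4 : ((⌊(u x - A) / h⌋₊ : ℕ) : ℝ) + 2 ≤ (⌊(u y - A) / h⌋₊ : ℕ) := by exact_mod_cast h1
    have h5 : (u x - A) / h + 1 < (u y - A) / h := by linarith
    rw [← sub_pos] at h5 ⊢
    have h6 := mul_pos h5 hh
    field_simp at h6
    linarith
  rcases H with H | H
  · exact (key x y H).trans_le (le_abs_self _)
  · rw [abs_sub_comm]
    exact (key y x H).trans_le (le_abs_self _)

lemma hostileEnergy_quant_le (k δ A : ℝ) (hk : 0 < k) (hδ : 0 < δ) (n : ℕ) (u : ℝ → ℝ)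
    (S : Set ℝ) :
    ENNReal.ofReal δ * hostileEnergy (quant A (k * δ) n u) S ≤ Lambda1 (phik k) 1 δ u S := by
  unfold hostileEnergy Lambda1
  rw [← lintegral_const_mul' _ _ ENNReal.ofReal_ne_top]
  refine lintegral_mono fun x => ?_
  dsimp only
  rw [← lintegral_const_mul' _ _ ENNReal.ofReal_ne_top]
  refine lintegral_mono fun y => ?_
  dsimp only
  split_ifs with H
  · have h1 := lt_of_hostile_quant (by positivity) H
    have h2 : phik k (|u y - u x| / δ) = 1 := by
      unfold phik
      rw [if_neg]
      rw [not_le, lt_div_iff₀ hδ]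
      exact h1
    rw [h2, ← ENNReal.ofReal_mul hδ.le, Real.rpow_one, one_mul, show (1 : ℝ) + 1 = (2 : ℕ) by norm_num,
      Real.rpow_natCast, mul_one_div]
  · simp

lemma measurable_quant (A h : ℝ) (n : ℕ) {u : ℝ → ℝ} (hu : Measurable u) :
    Measurable (quant A h n u) := by
  unfold quant
  exact measurable_const.min (Nat.measurable_floor.comp ((hu.sub_const A).div_const h))

/-- If `U δ` is below `A` on the first `q`-th part of `[a, b)` and at least `B` on the last `q`-th part,
up to sets of vanishing measure, then the liminf of `Λ` on `[a, b)` is at least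
`(2 log 2 / k) (B - A)`. -/
lemma le_liminf_interval (k : ℝ) (hk : 0 < k) (U : ℝ → ℝ → ℝ)
    (hmeas : ∀ δ > (0 : ℝ), Measurable (U δ)) (a b : ℝ) (hab : a < b) (q : ℕ) (hq : 1 ≤ q)
    (A B : ℝ) (hAB : A < B)
    (h0 : Tendsto (fun δ => volume ({x | A ≤ U δ x} ∩ Ico a (a + (b - a) / q))) (𝓝[>] 0) (𝓝 0))
    (h1 : Tendsto (fun δ => volume ({x | U δ x < B} ∩ Ico (b - (b - a) / q) b))
      (𝓝[>] 0) (𝓝 0)) :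
    ENNReal.ofReal (2 * Real.log 2 / k * (B - A)) ≤
      liminf (fun δ => Lambda1 (phik k) 1 δ (U δ) (Ico a b)) (𝓝[>] 0) := by
  set C : ℝ := 1 + 2 * Real.log (4 * q) with hC
  set L : ℝ := 2 * Real.log 2 / k * (B - A) with hL
  have hq' : (1 : ℝ) ≤ q := by exact_mod_cast hq
  have hC0 : 0 ≤ C := by
    have := Real.log_nonneg (show (1 : ℝ) ≤ 4 * q by linarith)
    positivity
  have hl2 : 0 < Real.log 2 := Real.log_pos (by norm_num)
  have hBA : 0 < B - A := sub_pos.2 hAB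
  have hba : 0 < b - a := sub_pos.2 hab
  set β : ℝ → ℝ≥0∞ := fun δ => volume ({x | A ≤ U δ x} ∩ Ico a (a + (b - a) / q)) +
    volume ({x | U δ x < B} ∩ Ico (b - (b - a) / q) b) with hβ
  have hβ0 : Tendsto (fun δ => ENNReal.ofReal (2 * q * L / (b - a)) * β δ) (𝓝[>] 0) (𝓝 0) := by
    have := ENNReal.Tendsto.const_mul (a := ENNReal.ofReal (2 * q * L / (b - a))) (h0.add h1)
      (Or.inr ENNReal.ofReal_ne_top)
    simpa using this
  have hbound : ∀ δ > (0 : ℝ), ENNReal.ofReal (L - δ * (2 * (Real.log 2 + C))) ≤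
      Lambda1 (phik k) 1 δ (U δ) (Ico a b) + ENNReal.ofReal (2 * q * L / (b - a)) * β δ := by
    intro δ hδ
    -- `n` steps of height `k δ` fit between the levels `A` and `B`.
    set n := ⌊(B - A) / (k * δ)⌋₊ with hn
    have hkδ : 0 < k * δ := mul_pos hk hδ
    have hn1 : (n : ℝ) ≤ (B - A) / (k * δ) := Nat.floor_le (by positivity)
    have hn2 : (B - A) / (k * δ) < n + 1 := Nat.lt_floor_add_one _
    have hδn1 : δ * n ≤ (B - A) / k := by
      calc δ * n ≤ δ * ((B - A) / (k * δ)) := by gcongr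
        _ = (B - A) / k := by field_simp
    have hδn2 : (B - A) / k - δ ≤ δ * n := by
      have : δ * ((B - A) / (k * δ)) ≤ δ * (n + 1) := by gcongr
      rw [show δ * ((B - A) / (k * δ)) = (B - A) / k by field_simp] at this
      linarith
    have hL' : L = 2 * Real.log 2 * ((B - A) / k) := by rw [hL]; ring
    set c : ℝ := 2 * (n * Real.log 2 - C) with hc
    rcases le_or_gt c 0 with hc0 | hc0
    · have : L - δ * (2 * (Real.log 2 + C)) ≤ 0 := by
        have : δ * c ≤ 0 := mul_nonpos_of_nonneg_of_nonpos hδ.le hc0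
        rw [hc] at this
        rw [hL']
        nlinarith
      rw [ENNReal.ofReal_of_nonpos this]
      exact zero_le
    -- The mesh `(b - a) / N` is extremely fine in terms of `δ`; this is harmless, since the
    -- coefficient `c / (K ε)` of the error term depends on it only through `q` and `c`.
    obtain ⟨K, hK⟩ : ∃ K, K = (n + 2) * 2 ^ n := ⟨_, rfl⟩
    obtain ⟨N, hN⟩ : ∃ N, N = q * (2 * K) := ⟨_, rfl⟩
    have hKpos : (0 : ℝ) < K := by
      have : 0 < K := by rw [hK]; exact Nat.mul_pos (by omega) (by positivity)
      exact_mod_cast this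
    have hNR : (N : ℝ) = q * (2 * K) := by rw [hN]; push_cast; ring
    have hqpos : (0 : ℝ) < q := by linarith
    have hNpos : (0 : ℝ) < N := by rw [hNR]; positivity
    set ε := (b - a) / N with hε
    have hεpos : 0 < ε := by positivity
    have e1 : a + N * ε = b := by rw [hε]; field_simp; ring
    have e2 : a + (2 * K : ℕ) * ε = a + (b - a) / q := by
      rw [hε, hNR]; push_cast; field_simp
    have e3 : a + (N - 2 * K : ℕ) * ε = b - (b - a) / q := by
      rw [Nat.cast_sub (by rw [hN]; exact Nat.le_mul_of_pos_left _ hq), sub_mul, ← add_sub_assoc, e1]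
      rw [hε, hNR]; push_cast; field_simp
    have e4 : c / (K * ε) = 2 * q * c / (b - a) := by
      rw [hε, hNR]; field_simp
    have key := hostileEnergy_ge n q hq K N hK hN (quant A (k * δ) n (U δ))
      (measurable_quant _ _ _ (hmeas δ hδ)) (fun x => min_le_left _ _) a ε hεpos c hc0.le le_rfl
    rw [e1, e2, e3, e4] at key
    have hβle : volume ({x | quant A (k * δ) n (U δ) x ≠ 0} ∩ Ico a (a + (b - a) / q)) +
        volume ({x | quant A (k * δ) n (U δ) x ≠ n} ∩ Ico (b - (b - a) / q) b) ≤ β δ := by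
      apply add_le_add
      · apply measure_mono
        apply inter_subset_inter_left
        intro x hx
        by_contra hlt
        apply hx
        simp only [mem_ofPred_eq, not_le] at hlt
        unfold quant
        rw [Nat.floor_of_nonpos, min_eq_right (Nat.zero_le _)]
        exact div_nonpos_of_nonpos_of_nonneg (by linarith) hkδ.le
      · apply measure_mono
        apply inter_subset_inter_left
        intro x hx
        by_contra hlt
        apply hx
        simp only [mem_ofPred_eq, not_lt] at hlt
        unfold quant
        rw [min_eq_left]
        apply Nat.floor_le_floor
        gcongr
    have hδc : δ * c ≤ L := by
      rw [hc, hL']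
      nlinarith
    calc ENNReal.ofReal (L - δ * (2 * (Real.log 2 + C))) ≤ ENNReal.ofReal (δ * c) := by
          apply ENNReal.ofReal_le_ofReal
          rw [hc, hL']
          nlinarith
      _ = ENNReal.ofReal δ * ENNReal.ofReal c := ENNReal.ofReal_mul hδ.le
      _ ≤ ENNReal.ofReal δ * (hostileEnergy (quant A (k * δ) n (U δ)) (Ico a b) +
            ENNReal.ofReal (2 * q * c / (b - a)) * β δ) := by
          gcongr
          exact key.trans (by gcongr)
      _ = ENNReal.ofReal δ * hostileEnergy (quant A (k * δ) n (U δ)) (Ico a b) +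
            ENNReal.ofReal (2 * q * (δ * c) / (b - a)) * β δ := by
          rw [mul_add, ← mul_assoc, ← ENNReal.ofReal_mul hδ.le]
          congr 3
          ring
      _ ≤ _ := by
          gcongr
          exact hostileEnergy_quant_le k δ A hk hδ n (U δ) _
  have hlim : Tendsto (fun δ : ℝ => ENNReal.ofReal (L - δ * (2 * (Real.log 2 + C))))
      (𝓝[>] 0) (𝓝 (ENNReal.ofReal L)) := by
    have : Continuous fun δ : ℝ => ENNReal.ofReal (L - δ * (2 * (Real.log 2 + C))) :=
      ENNReal.continuous_ofReal.comp (by fun_prop)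
    have := (this.tendsto 0).mono_left (nhdsWithin_le_nhds (s := Ioi 0))
    simpa using this
  have e := ENNReal.liminf_add_of_right_tendsto_zero hβ0
    (fun δ => Lambda1 (phik k) 1 δ (U δ) (Ico a b))
  rw [← hlim.liminf_eq, ← e]
  refine liminf_le_liminf ?_
  filter_upwards [self_mem_nhdsWithin] with δ hδ
  exact hbound δ hδ

/-- The intervals are shifted by `τ` so that both end pieces of `[x₀ + τ, x₁ + τ)` lie to the right of
`x₀` and `x₁` respectively, where right-continuity applies. -/
lemma le_liminf_shift (k : ℝ) (hk : 0 < k) (u : ℝ → ℝ) (U : ℝ → ℝ → ℝ)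
    (hmeas : ∀ δ > (0 : ℝ), Measurable (U δ)) (γ : ℝ) (hγ : 0 < γ)
    (hconv : Tendsto (fun δ => volume {x | γ ≤ |U δ x - u x|}) (𝓝[>] 0) (𝓝 0))
    (x₀ x₁ τ : ℝ) (hx : x₀ ≤ x₁) (hτ : 0 < τ)
    (h0 : ∀ x ∈ Ico x₀ (x₀ + 2 * τ), |u x - u x₀| < γ)
    (h1 : ∀ x ∈ Ico x₁ (x₁ + 2 * τ), |u x - u x₁| < γ) :
    ENNReal.ofReal (2 * Real.log 2 / k * (u x₁ - u x₀ - 4 * γ)) ≤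
      liminf (fun δ => Lambda1 (phik k) 1 δ (U δ) (Ico (x₀ + τ) (x₁ + τ))) (𝓝[>] 0) := by
  have hl2 : 0 < Real.log 2 := Real.log_pos (by norm_num)
  rcases le_or_gt (u x₁ - u x₀ - 4 * γ) 0 with hneg | hpos
  · rw [ENNReal.ofReal_of_nonpos (mul_nonpos_of_nonneg_of_nonpos (by positivity) hneg)]
    exact zero_le
  have hlt : x₀ < x₁ := by
    rcases hx.lt_or_eq with h | rfl
    · exact h
    · linarith
  obtain ⟨q, hq⟩ := exists_nat_gt ((x₁ - x₀) / τ)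
  have hq0 : (0 : ℝ) < q := lt_of_le_of_lt (div_nonneg (by linarith) hτ.le) hq
  have hq1 : 1 ≤ q := by exact_mod_cast hq0
  have hη : (x₁ - x₀) / q ≤ τ := by
    rw [div_lt_iff₀ hτ] at hq
    rw [div_le_iff₀ hq0]
    linarith
  have hη0 : 0 ≤ (x₁ - x₀) / q := div_nonneg (by linarith) hq0.le
  have key := le_liminf_interval k hk U hmeas (x₀ + τ) (x₁ + τ) (by linarith) q hq1
    (u x₀ + 2 * γ) (u x₁ - 2 * γ) (by linarith) ?_ ?_
  · rwa [show u x₁ - 2 * γ - (u x₀ + 2 * γ) = u x₁ - u x₀ - 4 * γ by ring] at key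
  · refine tendsto_of_tendsto_of_tendsto_of_le_of_le tendsto_const_nhds hconv
      (fun _ => zero_le) fun δ => measure_mono ?_
    rintro x ⟨hx1, hx2, hx3⟩
    simp only [mem_ofPred_eq] at hx1 ⊢
    have := abs_lt.1 (h0 x ⟨by linarith, by
      rw [show x₁ + τ - (x₀ + τ) = x₁ - x₀ by ring] at hx3; linarith⟩)
    exact le_trans (by linarith) (le_abs_self _)
  · refine tendsto_of_tendsto_of_tendsto_of_le_of_le tendsto_const_nhds hconv
      (fun _ => zero_le) fun δ => measure_mono ?_
    rintro x ⟨hx1, hx2, hx3⟩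
    simp only [mem_ofPred_eq] at hx1 ⊢
    have := abs_lt.1 (h1 x ⟨by
      rw [show x₁ + τ - (x₀ + τ) = x₁ - x₀ by ring] at hx2; linarith, by linarith⟩)
    exact le_trans (by linarith) (neg_le_abs _)

/-- The decreasing case follows from the increasing one by replacing `u` and `U` with their negatives. -/
lemma le_liminf_shift_abs (k : ℝ) (hk : 0 < k) (u : ℝ → ℝ) (U : ℝ → ℝ → ℝ)
    (hmeas : ∀ δ > (0 : ℝ), Measurable (U δ)) (γ : ℝ) (hγ : 0 < γ)
    (hconv : Tendsto (fun δ => volume {x | γ ≤ |U δ x - u x|}) (𝓝[>] 0) (𝓝 0))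
    (x₀ x₁ τ : ℝ) (hx : x₀ ≤ x₁) (hτ : 0 < τ)
    (h0 : ∀ x ∈ Ico x₀ (x₀ + 2 * τ), |u x - u x₀| < γ)
    (h1 : ∀ x ∈ Ico x₁ (x₁ + 2 * τ), |u x - u x₁| < γ) :
    ENNReal.ofReal (2 * Real.log 2 / k * (|u x₁ - u x₀| - 4 * γ)) ≤
      liminf (fun δ => Lambda1 (phik k) 1 δ (U δ) (Ico (x₀ + τ) (x₁ + τ))) (𝓝[>] 0) := by
  have hneg : ∀ s t : ℝ, |-s - -t| = |s - t| := fun s t => by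
    rw [← abs_neg]; congr 1; ring
  rcases le_total (u x₀) (u x₁) with h | h
  · rw [abs_of_nonneg (sub_nonneg.2 h)]
    exact le_liminf_shift k hk u U hmeas γ hγ hconv x₀ x₁ τ hx hτ h0 h1
  · have key := le_liminf_shift k hk (fun x => -u x) (fun δ x => -U δ x)
      (fun δ hδ => (hmeas δ hδ).neg) γ hγ (by simpa only [hneg] using hconv) x₀ x₁ τ hx hτ
      (by simpa only [hneg] using h0) (by simpa only [hneg] using h1)
    simp only [Lambda1_neg] at key
    rwa [abs_of_nonpos (sub_nonpos.2 h), show -(u x₁ - u x₀) = -u x₁ - -u x₀ by ring]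

/-! ### Superadditivity and conclusion -/

/-- `liminf` on `[0, ∞]` is superadditive along any filter. -/
lemma ennreal_liminf_add_le {ι : Type*} (F : Filter ι) (f g : ι → ℝ≥0∞) :
    liminf f F + liminf g F ≤ liminf (fun i => f i + g i) F := by
  rw [liminf_eq_iSup_iInf (u := f), liminf_eq_iSup_iInf (u := g)]
  refine ENNReal.biSup_add_biSup_le' ⟨univ, univ_mem⟩ ⟨univ, univ_mem⟩ fun s hs t ht => ?_
  refine le_liminf_of_le (by isBoundedDefault) ?_
  filter_upwards [hs, ht] with i his hit
  exact add_le_add (iInf₂_le i his) (iInf₂_le i hit)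

lemma ennreal_sum_liminf_le {ι κ : Type*} (F : Filter ι) (s : Finset κ) (f : κ → ι → ℝ≥0∞) :
    ∑ j ∈ s, liminf (f j) F ≤ liminf (fun i => ∑ j ∈ s, f j i) F := by
  classical
  induction s using Finset.induction_on with
  | empty => simp
  | insert j s hj ih =>
    simp only [Finset.sum_insert hj]
    exact (add_le_add le_rfl ih).trans (ennreal_liminf_add_le F _ _)

/-- `Λ` is superadditive over consecutive intervals: interactions between different intervals are
nonnegative. -/
lemma sum_Lambda1_le (φ : ℝ → ℝ) (p δ : ℝ) (v : ℝ → ℝ) (y : ℕ → ℝ) (hy : Monotone y) (n : ℕ) :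
    ∑ i ∈ Finset.range n, Lambda1 φ p δ v (Ico (y i) (y (i + 1))) ≤ Lambda1 φ p δ v univ := by
  unfold Lambda1
  calc _ ≤ ∑ i ∈ Finset.range n, ∫⁻ x in Ico (y i) (y (i + 1)), ∫⁻ z in univ,
        ENNReal.ofReal (φ (|v z - v x| / δ) * δ ^ p / |z - x| ^ (1 + p)) := by
        gcongr with i _ x
        exact subset_univ _
    _ = ∫⁻ x in ⋃ i ∈ Finset.range n, Ico (y i) (y (i + 1)), ∫⁻ z in univ,
        ENNReal.ofReal (φ (|v z - v x| / δ) * δ ^ p / |z - x| ^ (1 + p)) := by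
        rw [lintegral_biUnion_finset]
        · exact hy.pairwise_disjoint_on_Ico_succ.set_pairwise _
        · exact fun i _ => measurableSet_Ico
    _ ≤ _ := lintegral_mono_set (subset_univ _)

/-- Convergence in `L¹` implies convergence in measure, here by Markov's inequality. -/
lemma tendsto_measure_ge (u : ℝ → ℝ) (hu : Integrable u) (U : ℝ → ℝ → ℝ)
    (hmeas : ∀ δ > (0 : ℝ), Measurable (U δ))
    (hconv : Tendsto (fun δ : ℝ => eLpNorm (fun x => U δ x - u x) 1 volume)
      (𝓝[>] 0) (𝓝 0)) (γ : ℝ) (hγ : 0 < γ) :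
    Tendsto (fun δ => volume {x | γ ≤ |U δ x - u x|}) (𝓝[>] 0) (𝓝 0) := by
  have hγ0 : ENNReal.ofReal γ ≠ 0 := by simpa using hγ
  have h := ENNReal.Tendsto.const_mul (a := (ENNReal.ofReal γ)⁻¹) hconv
    (Or.inr (ENNReal.inv_ne_top.2 hγ0))
  rw [mul_zero] at h
  refine tendsto_of_tendsto_of_tendsto_of_le_of_le' tendsto_const_nhds h
    (Eventually.of_forall fun _ => zero_le) ?_
  filter_upwards [self_mem_nhdsWithin] with δ hδ
  have hm : AEMeasurable (fun x => ‖U δ x - u x‖ₑ) volume :=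
    ((hmeas δ hδ).aemeasurable.sub hu.aemeasurable).enorm
  rw [mul_comm, ← div_eq_mul_inv, ENNReal.le_div_iff_mul_le (Or.inl hγ0)
    (Or.inl ENNReal.ofReal_ne_top), mul_comm, eLpNorm_one_eq_lintegral_enorm]
  refine le_trans (le_of_eq ?_) (mul_meas_ge_le_lintegral₀ hm (ENNReal.ofReal γ))
  congr 2
  ext x
  simp only [mem_ofPred_eq]
  rw [Real.enorm_eq_ofReal_abs, ENNReal.ofReal_le_ofReal_iff (abs_nonneg _)]

/-- Gamma-liminf lower bound for `φ_k`, `p = 1`. -/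
theorem gamma_liminf_phik (k : ℝ) (hk : 0 < k) (u : ℝ → ℝ)
    (hu : Integrable u) (hrc : ∀ x : ℝ, ContinuousWithinAt u (Set.Ici x) x)
    (U : ℝ → ℝ → ℝ) (hmeas : ∀ δ > (0 : ℝ), Measurable (U δ))
    (hconv : Tendsto (fun δ : ℝ => eLpNorm (fun x => U δ x - u x) 1 volume)
      (𝓝[>] 0) (𝓝 0)) :
    ENNReal.ofReal (2 * Real.log 2 / k) * eVariationOn u Set.univ ≤
      Filter.liminf (fun δ : ℝ => Lambda1 (phik k) 1 δ (U δ) Set.univ) (𝓝[>] 0) := by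
  have hl2 : 0 < Real.log 2 := Real.log_pos (by norm_num)
  unfold eVariationOn
  rw [ENNReal.mul_iSup]
  refine iSup_le fun ⟨n, y, hy, _⟩ => ?_
  dsimp only
  have hγ : ∀ γ > (0 : ℝ), ∑ i ∈ Finset.range n,
      ENNReal.ofReal (2 * Real.log 2 / k * (|u (y (i + 1)) - u (y i)| - 4 * γ)) ≤
      liminf (fun δ : ℝ => Lambda1 (phik k) 1 δ (U δ) Set.univ) (𝓝[>] 0) := by
    intro γ hγ
    have hτ : ∀ᶠ τ in 𝓝[>] (0 : ℝ), ∀ i ∈ Finset.range (n + 1),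
        ∀ x ∈ Ico (y i) (y i + 2 * τ), |u x - u (y i)| < γ := by
      rw [Finset.eventually_all]
      intro i _
      obtain ⟨r, hr, hr'⟩ := Metric.continuousWithinAt_iff.1 (hrc (y i)) γ hγ
      have : Ioo (0 : ℝ) (r / 2) ∈ 𝓝[>] (0 : ℝ) := Ioo_mem_nhdsGT (by positivity)
      filter_upwards [this] with τ hτ x hx
      have := hr' (x := x) hx.1 (by
        rw [Real.dist_eq, abs_of_nonneg (by linarith [hx.1])]
        linarith [hx.2, hτ.2])
      rwa [Real.dist_eq] at this
    obtain ⟨τ, hτ, hτ0⟩ := (hτ.and self_mem_nhdsWithin).exists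
    have hτ0 : 0 < τ := hτ0
    calc _ ≤ ∑ i ∈ Finset.range n, liminf (fun δ => Lambda1 (phik k) 1 δ (U δ)
          (Ico (y i + τ) (y (i + 1) + τ))) (𝓝[>] 0) := by
          refine Finset.sum_le_sum fun i hi => ?_
          have hi := Finset.mem_range.1 hi
          exact le_liminf_shift_abs k hk u U hmeas γ hγ
            (tendsto_measure_ge u hu U hmeas hconv γ hγ) _ _ τ (hy (Nat.le_succ i)) hτ0
            (hτ i (Finset.mem_range.2 (by omega))) (hτ (i + 1) (Finset.mem_range.2 (by omega)))
      _ ≤ liminf (fun δ => ∑ i ∈ Finset.range n, Lambda1 (phik k) 1 δ (U δ)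
          (Ico (y i + τ) (y (i + 1) + τ))) (𝓝[>] 0) := ennreal_sum_liminf_le _ _ _
      _ ≤ _ := by
          refine liminf_le_liminf ?_
          exact Eventually.of_forall fun δ =>
            sum_Lambda1_le (phik k) 1 δ (U δ) (fun i => y i + τ) (hy.add_const τ) n
  have hlim : Tendsto (fun γ : ℝ => ∑ i ∈ Finset.range n,
      ENNReal.ofReal (2 * Real.log 2 / k * (|u (y (i + 1)) - u (y i)| - 4 * γ))) (𝓝[>] 0)
      (𝓝 (ENNReal.ofReal (2 * Real.log 2 / k) *
        ∑ i ∈ Finset.range n, edist (u (y (i + 1))) (u (y i)))) := by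
    rw [Finset.mul_sum]
    refine tendsto_finsetSum _ fun i _ => ?_
    have hc : Continuous fun γ : ℝ =>
        ENNReal.ofReal (2 * Real.log 2 / k * (|u (y (i + 1)) - u (y i)| - 4 * γ)) :=
      ENNReal.continuous_ofReal.comp (by fun_prop)
    have := (hc.tendsto 0).mono_left (nhdsWithin_le_nhds (s := Ioi 0))
    rw [mul_zero, sub_zero, ENNReal.ofReal_mul (by positivity), ← Real.dist_eq,
      ← edist_dist] at this
    exact this
  refine le_of_tendsto hlim ?_
  filter_upwards [self_mem_nhdsWithin] with γ hγ0
  exact hγ γ hγ0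
end

section
/- Let k > 0 and let u : ℝ → ℝ be integrable, right-continuous, and with TV(u) < ∞. Then there exists a family (u_δ)_{δ>0} of measurable functions with u_δ → u in L¹(ℝ) as δ → 0⁺ such that lim_{δ→0⁺} Λ_{δ,1}(φ_k,u_δ,ℝ) = (2 log 2 / k) · TV(u). -/
/-!
The recovery family consists of vertical segmentations of piecewise affine interpolants of `u`.

Put `ε = k δ` and replace a function `v` by its segmentation `ε ⌊v / ε⌋`. Increments of the
segmentation are integer multiples of `k δ`, and `φ_k` vanishes on `[0, k]`, so a pair of points is
charged exactly when its levels `⌊v / ε⌋` differ by at least two (`Lambda1_seg`). If `v` is affine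
with slope `s`, a point whose level has fractional part `τ` sees points at least two levels above
from distance `(2 - τ) ε / |s|` on, and points at least two levels below from distance
`(1 + τ) ε / |s|` on. Integrating the kernel `ε / z²` gives `|s| (1 / (2 - τ) + 1 / (1 + τ))`
(`lintegral_affine`), and the mean of this profile over `τ ∈ [0, 1]` is `2 log 2`
(`integral_prof`).

For a compactly supported piecewise affine `v`, the interaction of a point that is not a node is
asymptotically that of the affine piece containing it (`stepInt_local`). A Lipschitz bound near the
support and a decay bound far from it supply an integrable majorant (`stepInt_le_dom`), so dominated
convergence, together with averaging over the fast variable `v / ε` in each piece, shows that the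
energy of the segmentations of `v` tends to `2 log 2 / k` times the variation of `v`
(`tendsto_lintegral_stepInt`). The segmentations themselves are within `ε` of `v` and vanish
wherever `v` does, hence converge to `v` in `L¹` (`tendsto_seg`).

A general `u` is sampled on a grid of mesh `h → 0` inside a window which exhausts the line. The
increments of the samples are controlled by the variation of `u`, apart from the truncation jumps,
which vanish in the limit because an integrable function of bounded variation tends to zero at
infinity. Conversely, by right-continuity, the step functions `x ↦ u(h ⌈x / h⌉)` converge to `u`
pointwise, and the variation is lower semicontinuous. Hence the variation of the samples tends to
that of `u` (`tendsto_sampVar`); the interpolants converge to `u` in `L¹` since the `L¹` modulus of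
continuity of a function of bounded variation is linear (`tendsto_interp`). A diagonal choice of
the interpolant as a function of `δ` (`exists_diagonal`) concludes.
-/

open MeasureTheory Filter Set Topology ENNReal

/-! ### The interaction of a segmented affine function -/

/-- The kernel of the rescaled functional: at distance `z`, the value `ε / z ^ 2` is charged to a
pair of values `a`, `b` whose levels `⌊a / ε⌋`, `⌊b / ε⌋` differ by at least two. -/
noncomputable def stepKer (ε a b z : ℝ) : ℝ := if 2 ≤ |⌊b / ε⌋ - ⌊a / ε⌋| then ε / z ^ 2 else 0

/-- The interaction of the point `x` with all the others, for `v` segmented at height `ε`. -/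
noncomputable def stepInt (ε : ℝ) (v : ℝ → ℝ) (x : ℝ) : ℝ≥0∞ :=
  ∫⁻ z, ENNReal.ofReal (stepKer ε (v x) (v (x + z)) z)

/-- The interaction, per unit slope, of a point with the two sides of an affine function, in terms
of the fractional part `τ` of its level. -/
noncomputable def prof (τ : ℝ) : ℝ := 1 / (2 - τ) + 1 / (1 + τ)

lemma stepKer_nonneg {ε : ℝ} (hε : 0 < ε) (a b z : ℝ) : 0 ≤ stepKer ε a b z := by
  unfold stepKer; split_ifs <;> positivity

lemma stepKer_le {ε : ℝ} (hε : 0 < ε) (a b z : ℝ) : stepKer ε a b z ≤ ε / z ^ 2 := by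
  unfold stepKer; split_ifs
  · exact le_rfl
  · positivity

lemma lintegral_Ioi_sq {ε a : ℝ} (hε : 0 < ε) (ha : 0 < a) :
    ∫⁻ z in Ioi a, ENNReal.ofReal (ε / z ^ 2) = ENNReal.ofReal (ε / a) := by
  have h1 := integral_Ioi_rpow_of_lt (a := -2) (by norm_num) ha
  have h2 := integrableOn_Ioi_rpow_of_lt (a := -2) (by norm_num) ha
  have e : ∀ z ∈ Ioi a, ENNReal.ofReal (ε / z ^ 2) = ENNReal.ofReal (ε * z ^ (-2 : ℝ)) := by
    intro z hz
    have : 0 < z := ha.trans hz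
    rw [Real.rpow_neg this.le, div_eq_mul_inv]
    norm_num
  rw [setLIntegral_congr_fun measurableSet_Ioi e,
    ← ofReal_integral_eq_lintegral_ofReal (h2.const_mul ε), integral_const_mul, h1]
  · congr 1
    norm_num [Real.rpow_neg ha.le]
    rfl
  · filter_upwards [ae_restrict_mem measurableSet_Ioi] with z hz
    have : 0 < z := ha.trans hz
    positivity

lemma lintegral_Ici_sq {ε a : ℝ} (hε : 0 < ε) (ha : 0 < a) :
    ∫⁻ z in Ici a, ENNReal.ofReal (ε / z ^ 2) = ENNReal.ofReal (ε / a) := by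
  rw [← lintegral_Ioi_sq hε ha, setLIntegral_congr Ioi_ae_eq_Ici]

lemma lintegral_Iio_sq {ε a : ℝ} (hε : 0 < ε) (ha : 0 < a) :
    ∫⁻ z in Iio (-a), ENNReal.ofReal (ε / z ^ 2) = ENNReal.ofReal (ε / a) := by
  rw [← lintegral_Ioi_sq hε ha, ← lintegral_indicator measurableSet_Iio,
    ← lintegral_indicator measurableSet_Ioi, ← lintegral_neg_eq_self]
  congr 1; ext z
  simp only [indicator, mem_Iio, mem_Ioi, neg_lt_neg_iff, neg_sq]

/-- The tails of the kernel. -/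
lemma lintegral_tail {ε ρ : ℝ} (hε : 0 < ε) (hρ : 0 < ρ) :
    ∫⁻ z, ENNReal.ofReal (if ρ ≤ |z| then ε / z ^ 2 else 0) = ENNReal.ofReal (2 * ε / ρ) := by
  have : ∀ᵐ z : ℝ, ENNReal.ofReal (if ρ ≤ |z| then ε / z ^ 2 else 0) =
      (Ici ρ).indicator (fun z => ENNReal.ofReal (ε / z ^ 2)) z +
      (Iio (-ρ)).indicator (fun z => ENNReal.ofReal (ε / z ^ 2)) z := by
    have h0 : ∀ᵐ z : ℝ, z ≠ -ρ := by simp [ae_iff]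
    filter_upwards [h0] with z hz
    simp only [indicator, mem_Ici, mem_Iio]
    by_cases h1 : ρ ≤ z
    · have : ¬ z < -ρ := by linarith
      simp [h1, this, h1.trans (le_abs_self z)]
    · by_cases h2 : z < -ρ
      · have : ρ ≤ |z| := by rw [le_abs]; right; linarith
        simp [h1, h2, this]
      · have : ¬ ρ ≤ |z| := by
          rw [le_abs]; push Not
          exact ⟨by linarith, by
            have := lt_of_le_of_ne (not_lt.1 h2) (Ne.symm hz); linarith⟩
        simp [h1, h2, this]
  rw [lintegral_congr_ae this, lintegral_add_left, lintegral_indicator measurableSet_Ici,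
    lintegral_indicator measurableSet_Iio, lintegral_Ici_sq hε hρ, lintegral_Iio_sq hε hρ,
    ← ENNReal.ofReal_add (by positivity) (by positivity)]
  · congr 1; ring
  · exact (by fun_prop : Measurable fun z : ℝ => ENNReal.ofReal (ε / z ^ 2)).indicator
      measurableSet_Ici

/-- Positive slope: the segmented affine function interacts with `z ≥ (2 - τ) ε / s` and with
`z < -(1 + τ) ε / s`, where `τ` is the fractional part of the level of the point. -/
lemma lintegral_affine_pos {ε s : ℝ} (hε : 0 < ε) (hs : 0 < s) (t : ℝ) :
    ∫⁻ z, ENNReal.ofReal (stepKer ε t (t + s * z) z) =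
      ENNReal.ofReal (s * prof (Int.fract (t / ε))) := by
  set τ := Int.fract (t / ε) with hτ
  have hτ0 : 0 ≤ τ := Int.fract_nonneg _
  have hτ1 : τ < 1 := Int.fract_lt_one _
  have ht : t / ε = ⌊t / ε⌋ + τ := (Int.floor_add_fract _).symm
  have ha : 0 < (2 - τ) * ε / s := by have : 0 < 2 - τ := by linarith
                                      positivity
  have hb : 0 < (1 + τ) * ε / s := by positivity
  have key : ∀ z : ℝ, ENNReal.ofReal (stepKer ε t (t + s * z) z) =
      (Ici ((2 - τ) * ε / s)).indicator (fun z => ENNReal.ofReal (ε / z ^ 2)) z +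
      (Iio (-((1 + τ) * ε / s))).indicator (fun z => ENNReal.ofReal (ε / z ^ 2)) z := by
    intro z
    have e1 : (t + s * z) / ε = ⌊t / ε⌋ + (τ + s * z / ε) := by rw [add_div]; nth_rewrite 1 [ht]; ring
    have e2 : ⌊(t + s * z) / ε⌋ - ⌊t / ε⌋ = ⌊τ + s * z / ε⌋ := by
      rw [e1, Int.floor_intCast_add]; ring
    have c1 : 2 ≤ ⌊τ + s * z / ε⌋ ↔ (2 - τ) * ε / s ≤ z := by
      rw [Int.le_floor, div_le_iff₀ hs]
      push_cast
      rw [← sub_le_iff_le_add', le_div_iff₀ hε, mul_comm z]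
    have c2 : ⌊τ + s * z / ε⌋ ≤ -2 ↔ z < -((1 + τ) * ε / s) := by
      rw [show (-2 : ℤ) = -1 - 1 by norm_num, Int.le_sub_one_iff, Int.floor_lt, ← neg_div,
        lt_div_iff₀ hs]
      push_cast
      rw [← lt_sub_iff_add_lt', div_lt_iff₀ hε, mul_comm z]
      constructor <;> intro h <;> linarith
    simp only [stepKer, e2, indicator, mem_Ici, mem_Iio, ← c1, ← c2, le_abs']
    by_cases h1 : 2 ≤ ⌊τ + s * z / ε⌋
    · have : ¬ ⌊τ + s * z / ε⌋ ≤ -2 := by omega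
      simp [h1, this]
    · by_cases h2 : ⌊τ + s * z / ε⌋ ≤ -2 <;> simp [h1, h2]
  rw [lintegral_congr key, lintegral_add_left, lintegral_indicator measurableSet_Ici,
    lintegral_indicator measurableSet_Iio, lintegral_Ici_sq hε ha, lintegral_Iio_sq hε hb,
    ← ENNReal.ofReal_add (by positivity) (by positivity)]
  · congr 1
    have : 2 - τ ≠ 0 := by linarith
    have : 1 + τ ≠ 0 := by linarith
    unfold prof; field_simp
  · exact (by fun_prop : Measurable fun z : ℝ => ENNReal.ofReal (ε / z ^ 2)).indicator
      measurableSet_Ici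

/-- A segmented affine function of slope `s` has, at a point of value `t`, an interaction depending
only on `|s|` and on the fractional part of the level `t / ε`. -/
lemma lintegral_affine {ε : ℝ} (hε : 0 < ε) (s t : ℝ) :
    ∫⁻ z, ENNReal.ofReal (stepKer ε t (t + s * z) z) =
      ENNReal.ofReal (|s| * prof (Int.fract (t / ε))) := by
  rcases lt_trichotomy s 0 with hs | hs | hs
  · rw [abs_of_neg hs, ← lintegral_affine_pos hε (neg_pos.2 hs) t, ← lintegral_neg_eq_self]
    congr 1; ext z
    simp [stepKer]
  · subst hs
    simp [stepKer]
  · rw [abs_of_pos hs, lintegral_affine_pos hε hs t]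

lemma prof_nonneg (x : ℝ) : 0 ≤ prof (Int.fract x) := by
  have h0 : 0 ≤ Int.fract x := Int.fract_nonneg _
  have h1 : Int.fract x < 1 := Int.fract_lt_one _
  unfold prof
  have : 0 < 2 - Int.fract x := by linarith
  positivity

lemma prof_le (x : ℝ) : prof (Int.fract x) ≤ 2 := by
  have h0 : 0 ≤ Int.fract x := Int.fract_nonneg _
  have h1 : Int.fract x < 1 := Int.fract_lt_one _
  unfold prof
  have : 1 / (2 - Int.fract x) ≤ 1 := by rw [div_le_one] <;> linarith
  have : 1 / (1 + Int.fract x) ≤ 1 := by rw [div_le_one] <;> linarith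
  linarith

lemma measurable_stepKer {ε : ℝ} {α : Type*} [MeasurableSpace α] {a b z : α → ℝ}
    (ha : Measurable a) (hb : Measurable b) (hz : Measurable z) :
    Measurable fun x => ENNReal.ofReal (stepKer ε (a x) (b x) (z x)) := by
  unfold stepKer
  refine Measurable.ennreal_ofReal (Measurable.ite ?_ (by fun_prop) measurable_const)
  have : Measurable fun x => |⌊b x / ε⌋ - ⌊a x / ε⌋| := by
    have h : Measurable fun p : ℤ × ℤ => |p.1 - p.2| := measurable_from_prod_countable_left fun _ =>
      measurable_of_countable _
    exact h.comp ((Int.measurable_floor.comp (hb.div_const ε)).prodMk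
      (Int.measurable_floor.comp (ha.div_const ε)))
  exact this (measurableSet_Ici (a := (2 : ℤ)))

/-! ### Localization and domination -/

/-- Near a point around which `v` is affine, the interaction is that of the affine function, up to
the tails of the kernel. -/
lemma stepInt_local {ε ρ s x : ℝ} (hε : 0 < ε) (hρ : 0 < ρ) {v : ℝ → ℝ}
    (h : ∀ z, |z| < ρ → v (x + z) = v x + s * z) :
    |(stepInt ε v x).toReal - |s| * prof (Int.fract (v x / ε))| ≤ 2 * ε / ρ := by
  have hp : 0 ≤ |s| * prof (Int.fract (v x / ε)) := mul_nonneg (abs_nonneg _) (prof_nonneg _)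
  have hm : Measurable fun z : ℝ => ENNReal.ofReal (if ρ ≤ |z| then ε / z ^ 2 else 0) := by
    refine Measurable.ennreal_ofReal (Measurable.ite ?_ (by fun_prop) measurable_const)
    exact measurableSet_le measurable_const (by fun_prop)
  have hle : ∀ a b : ℝ, ∀ z, (|z| < ρ → a = b) →
      ENNReal.ofReal (stepKer ε (v x) a z) ≤ ENNReal.ofReal (stepKer ε (v x) b z) +
        ENNReal.ofReal (if ρ ≤ |z| then ε / z ^ 2 else 0) := by
    intro a b z hab
    by_cases hz : ρ ≤ |z|
    · rw [if_pos hz]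
      exact (ENNReal.ofReal_le_ofReal (stepKer_le hε _ _ _)).trans le_add_self
    · rw [hab (not_le.1 hz)]; exact le_self_add
  have A := lintegral_affine hε s (v x)
  have T := lintegral_tail hε hρ
  have h1 : stepInt ε v x ≤ ENNReal.ofReal (|s| * prof (Int.fract (v x / ε)) + 2 * ε / ρ) := by
    rw [ENNReal.ofReal_add hp (by positivity), ← A, ← T, ← lintegral_add_right _ hm]
    exact lintegral_mono fun z => hle _ _ z (h z)
  have h2 : ENNReal.ofReal (|s| * prof (Int.fract (v x / ε))) ≤
      stepInt ε v x + ENNReal.ofReal (2 * ε / ρ) := by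
    rw [← A, ← T, stepInt, ← lintegral_add_right _ hm]
    exact lintegral_mono fun z => hle _ _ z fun hz => (h z hz).symm
  have hfin : stepInt ε v x ≠ ⊤ := ne_top_of_le_ne_top ENNReal.ofReal_ne_top h1
  rw [abs_le]
  constructor
  · have := ENNReal.toReal_mono (by finiteness) h2
    rw [ENNReal.toReal_add hfin (by finiteness), ENNReal.toReal_ofReal hp,
      ENNReal.toReal_ofReal (by positivity)] at this
    linarith
  · have := ENNReal.toReal_mono (by finiteness) h1
    rw [ENNReal.toReal_ofReal (by positivity)] at this
    linarith

/-- Points of different levels are far apart when `v` is Lipschitz. -/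
lemma stepInt_le_lip {ε K : ℝ} (hε : 0 < ε) (hK : 0 < K) {v : ℝ → ℝ}
    (hl : ∀ x y, |v y - v x| ≤ K * |y - x|) (x : ℝ) :
    stepInt ε v x ≤ ENNReal.ofReal (2 * K) := by
  have T := lintegral_tail hε (div_pos hε hK)
  rw [show 2 * ε / (ε / K) = 2 * K by field_simp] at T
  rw [← T]
  refine lintegral_mono fun z => ENNReal.ofReal_le_ofReal ?_
  unfold stepKer
  by_cases h : 2 ≤ |⌊v (x + z) / ε⌋ - ⌊v x / ε⌋|
  · have h1 : (2 : ℝ) ≤ |(⌊v (x + z) / ε⌋ : ℝ) - ⌊v x / ε⌋| := by exact_mod_cast h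
    have h2 : 1 ≤ |v (x + z) / ε - v x / ε| := by
      have a1 := Int.floor_le (v (x + z) / ε)
      have a2 := Int.lt_floor_add_one (v (x + z) / ε)
      have a3 := Int.floor_le (v x / ε)
      have a4 := Int.lt_floor_add_one (v x / ε)
      rw [le_abs] at h1 ⊢
      rcases h1 with h1 | h1
      · left; linarith
      · right; linarith
    rw [← sub_div, abs_div, abs_of_pos hε, le_div_iff₀ hε] at h2
    have h3 := hl x (x + z)
    rw [add_sub_cancel_left] at h3
    have : ε / K ≤ |z| := by rw [div_le_iff₀ hK]; linarith
    rw [if_pos h, if_pos this]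
  · rw [if_neg h]; split_ifs <;> positivity

/-- Decay of the interaction far from the support. -/
lemma stepInt_le_far {ε A : ℝ} (hε : 0 < ε) (hA : 0 < A) {v : ℝ → ℝ}
    (hv : ∀ x, A ≤ |x| → v x = 0) {x : ℝ} (hx : 2 * A ≤ |x|) :
    stepInt ε v x ≤ ENNReal.ofReal (8 * A * ε / x ^ 2) := by
  have hx0 : v x = 0 := hv x (by linarith)
  have hxp : 0 < |x| := by linarith
  have hx2 : 0 < x ^ 2 := by rw [← sq_abs]; positivity
  have : ∀ z, ENNReal.ofReal (stepKer ε (v x) (v (x + z)) z) ≤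
      (Ioo (-A - x) (A - x)).indicator (fun _ => ENNReal.ofReal (4 * ε / x ^ 2)) z := by
    intro z
    by_cases hz : z ∈ Ioo (-A - x) (A - x)
    · rw [indicator_of_mem hz]
      refine ENNReal.ofReal_le_ofReal ((stepKer_le hε _ _ _).trans ?_)
      have h1 : |x + z| < A := by rw [abs_lt]; constructor <;> linarith [hz.1, hz.2]
      have h2 : |x| / 2 ≤ |z| := by
        have := abs_sub_abs_le_abs_sub x (-z)
        rw [abs_neg, sub_neg_eq_add] at this
        linarith
      have h3 : x ^ 2 / 4 ≤ z ^ 2 := by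
        rw [← sq_abs x, ← sq_abs z]; nlinarith
      rw [div_le_div_iff₀ (by linarith) hx2]
      nlinarith
    · have h1 : A ≤ |x + z| := by
        by_contra hc
        rw [not_le, abs_lt] at hc
        exact hz ⟨by linarith, by linarith⟩
      rw [indicator_of_notMem hz, hx0, hv _ h1]
      simp [stepKer]
  refine (lintegral_mono this).trans ?_
  rw [lintegral_indicator measurableSet_Ioo, lintegral_const, Measure.restrict_apply_univ,
    Real.volume_Ioo, ← ENNReal.ofReal_mul (by positivity)]
  refine ENNReal.ofReal_le_ofReal (le_of_eq ?_)
  ring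

/-- A bound that is integrable in `x` and uniform in `ε ≤ 1`: the Lipschitz bound near the support,
the decay bound far away. -/
lemma stepInt_le_dom {ε K A : ℝ} (hε : 0 < ε) (hε1 : ε ≤ 1) (hK : 0 < K) (hA : 1 ≤ A) {v : ℝ → ℝ}
    (hl : ∀ x y, |v y - v x| ≤ K * |y - x|) (hv : ∀ x, A ≤ |x| → v x = 0) (x : ℝ) :
    stepInt ε v x ≤
      ENNReal.ofReal ((2 * K * (1 + (2 * A) ^ 2) + 16 * A) * (1 + x ^ 2)⁻¹) := by
  rcases le_total (2 * A) |x| with h | h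
  · refine (stepInt_le_far hε (by linarith) hv h).trans (ENNReal.ofReal_le_ofReal ?_)
    have hx : 1 ≤ x ^ 2 := by rw [← sq_abs]; nlinarith
    rw [← div_eq_mul_inv, div_le_div_iff₀ (by linarith) (by positivity)]
    have h1 : 8 * A * ε * (1 + x ^ 2) ≤ 8 * A * 1 * (x ^ 2 + x ^ 2) := by gcongr
    have h2 : 0 ≤ 2 * K * (1 + (2 * A) ^ 2) * x ^ 2 := by positivity
    linarith
  · refine (stepInt_le_lip hε hK hl x).trans (ENNReal.ofReal_le_ofReal ?_)
    have hx : x ^ 2 ≤ (2 * A) ^ 2 := by rw [← sq_abs]; gcongr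
    rw [← div_eq_mul_inv, le_div_iff₀ (by positivity)]
    have : 2 * K * (1 + x ^ 2) ≤ 2 * K * (1 + (2 * A) ^ 2) := by gcongr
    linarith

/-! ### The mean of the profile -/

lemma measurable_prof_fract : Measurable fun t : ℝ => prof (Int.fract t) := by
  unfold prof; fun_prop

lemma prof_fract_intervalIntegrable (a b : ℝ) :
    IntervalIntegrable (fun t : ℝ => prof (Int.fract t)) volume a b := by
  refine (intervalIntegrable_const (c := (2 : ℝ))).mono_fun
    measurable_prof_fract.aestronglyMeasurable (Eventually.of_forall fun t => ?_)
  simp only [Real.norm_eq_abs]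
  rw [abs_of_nonneg (prof_nonneg t), abs_two]
  exact prof_le t

lemma integral_prof : ∫ t in (0 : ℝ)..1, prof (Int.fract t) = 2 * Real.log 2 := by
  have h1 : ∫ t in (0 : ℝ)..1, prof (Int.fract t) = ∫ t in (0 : ℝ)..1, prof t := by
    refine intervalIntegral.integral_congr fun t ht => ?_
    rw [uIcc_of_le zero_le_one] at ht
    rcases eq_or_lt_of_le ht.2 with h | h
    · subst h; norm_num [prof]
    · simp only [Int.fract_eq_self.2 ⟨ht.1, h⟩]
  have h2 : ∀ t ∈ uIcc (0 : ℝ) 1,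
      HasDerivAt (fun t => Real.log (1 + t) - Real.log (2 - t)) (prof t) t := by
    intro t ht
    rw [uIcc_of_le zero_le_one] at ht
    have a1 := ((hasDerivAt_id t).const_add 1).log (by simp only [id]; linarith [ht.1])
    have a2 := ((hasDerivAt_id t).const_sub 2).log (by simp only [id]; linarith [ht.2])
    have e : prof t = 1 / (1 + id t) - -1 / (2 - id t) := by simp only [prof, id]; ring
    rw [e]
    exact a1.sub a2
  rw [h1, intervalIntegral.integral_eq_sub_of_hasDerivAt h2]
  · norm_num; ring
  · refine ContinuousOn.intervalIntegrable fun t ht => ?_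
    rw [uIcc_of_le zero_le_one] at ht
    have : 2 - t ≠ 0 := by linarith [ht.2]
    have : 1 + t ≠ 0 := by linarith [ht.1]
    refine ContinuousAt.continuousWithinAt ?_
    unfold prof
    fun_prop (disch := assumption)

/-- Over any interval, a one-periodic function integrates to its mean times the length, up to a
bounded error. -/
lemma integral_prof_approx (a b : ℝ) :
    |(∫ t in a..b, prof (Int.fract t)) - (b - a) * (2 * Real.log 2)| ≤ 4 := by
  have hper : Function.Periodic (fun t : ℝ => prof (Int.fract t)) 1 := fun t => by
    show prof (Int.fract (t + 1)) = prof (Int.fract t)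
    rw [Int.fract_add_one]
  set n := ⌊b - a⌋ with hn
  have h1 : ∫ t in a..a + n, prof (Int.fract t) = n * (2 * Real.log 2) := by
    have := hper.intervalIntegral_add_zsmul_eq n a prof_fract_intervalIntegrable
    rw [hper.intervalIntegral_add_eq a 0, zero_add, integral_prof] at this
    simpa using this
  have h2 := intervalIntegral.integral_add_adjacent_intervals
    (prof_fract_intervalIntegrable a (a + n)) (prof_fract_intervalIntegrable (a + n) b)
  have n1 : (n : ℝ) ≤ b - a := Int.floor_le _
  have n2 : b - a < n + 1 := Int.lt_floor_add_one _
  have h3 : |∫ t in (a + n)..b, prof (Int.fract t)| ≤ 2 * |b - (a + n)| := by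
    rw [← Real.norm_eq_abs]
    refine intervalIntegral.norm_integral_le_of_norm_le_const fun t _ => ?_
    rw [Real.norm_eq_abs, abs_of_nonneg (prof_nonneg t)]
    exact prof_le t
  rw [abs_of_nonneg (a := b - (a + n)) (by linarith)] at h3
  have hlog : 2 * Real.log 2 ≤ 2 := by have := Real.log_two_lt_d9; linarith
  have hlog0 : 0 ≤ 2 * Real.log 2 := by have := Real.log_nonneg (one_le_two (α := ℝ)); linarith
  rw [← h2, h1]
  rw [abs_le] at h3 ⊢
  constructor <;> nlinarith

/-- Along an affine function the level runs through the periods of the profile at speed `|s| / ε`,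
so the profile averages out to its mean, with an error of order `ε`. -/
lemma integral_affine_piece {ε : ℝ} (hε : 0 < ε) (s α a b : ℝ) :
    |(∫ x in a..b, |s| * prof (Int.fract ((α + s * (x - a)) / ε))) -
      |s| * (b - a) * (2 * Real.log 2)| ≤ 4 * ε := by
  rcases eq_or_ne s 0 with rfl | hs
  · simp; positivity
  have hc : s / ε ≠ 0 := div_ne_zero hs hε.ne'
  have e : ∀ x : ℝ, (α + s * (x - a)) / ε = s / ε * x + (α - s * a) / ε := fun x => by ring
  simp_rw [e]
  rw [intervalIntegral.integral_const_mul,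
    intervalIntegral.integral_comp_mul_add (fun t => prof (Int.fract t)) hc]
  have h := integral_prof_approx (s / ε * a + (α - s * a) / ε) (s / ε * b + (α - s * a) / ε)
  set I := ∫ t in (s / ε * a + (α - s * a) / ε)..(s / ε * b + (α - s * a) / ε),
    prof (Int.fract t)
  have : |s| * ((s / ε)⁻¹ • I) - |s| * (b - a) * (2 * Real.log 2) = (|s| / s * ε) *
      (I - (s / ε * b + (α - s * a) / ε - (s / ε * a + (α - s * a) / ε)) * (2 * Real.log 2)) := by
    rw [smul_eq_mul]; field_simp; ring
  rw [this, abs_mul, abs_mul, abs_div, abs_abs, div_self (abs_ne_zero.2 hs), abs_of_pos hε]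
  nlinarith

/-! ### Piecewise affine functions -/

/-- The piecewise affine function with value `c i` at the node `i * h`, for `i ∈ G`, and value `0`
at the other nodes, written as a sum of hat functions. -/
noncomputable def interp (h : ℝ) (G : Finset ℤ) (c : ℤ → ℝ) (x : ℝ) : ℝ :=
  ∑ i ∈ G, c i * max 0 (1 - |x / h - i|)

lemma interp_lip {h : ℝ} (hh : 0 < h) (G : Finset ℤ) (c : ℤ → ℝ) (x y : ℝ) :
    |interp h G c y - interp h G c x| ≤ ((∑ i ∈ G, |c i|) / h + 1) * |y - x| := by
  unfold interp
  rw [← Finset.sum_sub_distrib]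
  have h1 : ∀ i ∈ G, |c i * max 0 (1 - |y / h - i|) - c i * max 0 (1 - |x / h - i|)| ≤
      |c i| * (|y - x| / h) := by
    intro i _
    rw [← mul_sub, abs_mul]
    gcongr
    rw [max_comm 0, max_comm 0]
    refine (abs_max_sub_max_le_abs _ _ _).trans ?_
    calc |1 - |y / h - i| - (1 - |x / h - i|)| = abs (|x / h - i| - |y / h - i|) := by
          congr 1; ring
      _ ≤ |x / h - i - (y / h - i)| := abs_abs_sub_abs_le _ _
      _ = |y - x| / h := by
        rw [show x / h - i - (y / h - i) = -((y - x) / h) by ring, abs_neg, abs_div, abs_of_pos hh]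
  refine (Finset.abs_sum_le_sum_abs _ _).trans ((Finset.sum_le_sum h1).trans ?_)
  rw [← Finset.sum_mul, add_mul, one_mul]
  have : (∑ i ∈ G, |c i|) * (|y - x| / h) = (∑ i ∈ G, |c i|) / h * |y - x| := by ring
  rw [this]
  linarith [abs_nonneg (y - x)]

lemma continuous_interp (h : ℝ) (G : Finset ℤ) (c : ℤ → ℝ) : Continuous (interp h G c) := by
  unfold interp; fun_prop

lemma interp_eq {h : ℝ} (hh : 0 < h) {G : Finset ℤ} {c : ℤ → ℝ} (hc : ∀ i ∉ G, c i = 0)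
    {n : ℤ} {x : ℝ} (h1 : n * h ≤ x) (h2 : x ≤ (n + 1) * h) :
    interp h G c x = c n + (c (n + 1) - c n) / h * (x - n * h) := by
  have a1 : (n : ℝ) ≤ x / h := by rwa [le_div_iff₀ hh]
  have a2 : x / h ≤ n + 1 := by rwa [div_le_iff₀ hh]
  have e : interp h G c x = ∑ i ∈ ({n, n + 1} : Finset ℤ), c i * max 0 (1 - |x / h - i|) := by
    unfold interp
    rw [Finset.sum_subset (Finset.subset_union_left (s₂ := ({n, n + 1} : Finset ℤ))),
      ← Finset.sum_subset (Finset.subset_union_right (s₁ := G))]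
    · intro i _ hi
      simp only [Finset.mem_insert, Finset.mem_singleton, not_or] at hi
      have : 1 ≤ |x / h - i| := by
        rw [le_abs]
        rcases lt_or_gt_of_ne hi.1 with hlt | hgt
        · left
          have : (i : ℝ) ≤ n - 1 := by exact_mod_cast Int.le_sub_one_of_lt hlt
          linarith
        · right
          have : n + 2 ≤ i := by omega
          have : (n : ℝ) + 2 ≤ i := by exact_mod_cast this
          linarith
      rw [max_eq_left (by linarith), mul_zero]
    · intro i _ hi
      rw [hc i hi, zero_mul]
  rw [e, Finset.sum_pair (by omega)]
  push_cast
  rw [abs_of_nonneg (by linarith), abs_of_nonpos (by linarith), max_eq_right (by linarith),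
    max_eq_right (by linarith)]
  field_simp
  ring

lemma exists_interp_support {h : ℝ} (hh : 0 < h) (G : Finset ℤ) (c : ℤ → ℝ) :
    ∃ A : ℝ, 1 ≤ A ∧ ∀ x, A ≤ |x| → interp h G c x = 0 := by
  have hB : 0 ≤ ∑ i ∈ G, |(i : ℝ)| := Finset.sum_nonneg fun _ _ => abs_nonneg _
  refine ⟨(∑ i ∈ G, |(i : ℝ)| + 1) * h + 1, by nlinarith, fun x hx => ?_⟩
  refine Finset.sum_eq_zero fun i hi => ?_
  have h1 : |(i : ℝ)| ≤ ∑ i ∈ G, |(i : ℝ)| :=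
    Finset.single_le_sum (f := fun i : ℤ => |(i : ℝ)|) (fun _ _ => abs_nonneg _) hi
  have h2 : |(i : ℝ)| + 1 ≤ |x / h| := by
    rw [abs_div, abs_of_pos hh, le_div_iff₀ hh]; nlinarith
  have := abs_sub_abs_le_abs_sub (x / h) i
  rw [max_eq_left (by linarith), mul_zero]

lemma measurable_stepInt {ε : ℝ} {v : ℝ → ℝ} (hv : Measurable v) : Measurable (stepInt ε v) := by
  unfold stepInt
  exact Measurable.lintegral_prod_right' (f := fun p : ℝ × ℝ =>
    ENNReal.ofReal (stepKer ε (v p.1) (v (p.1 + p.2)) p.2))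
    (measurable_stepKer (by fun_prop) (by fun_prop) (by fun_prop))

/-! ### Limit of the interaction for piecewise affine functions -/

/-- The limit profile of `stepInt ε (interp h G c)`, cell by cell. -/
noncomputable def cellSum (h : ℝ) (G : Finset ℤ) (c : ℤ → ℝ) (ε x : ℝ) : ℝ :=
  ∑ n ∈ G, (Ioo (n * h) ((n + 1) * h)).indicator
    (fun x => |(c (n + 1) - c n) / h| * prof (Int.fract (interp h G c x / ε))) x

lemma cell_measurable (h : ℝ) (G : Finset ℤ) (c : ℤ → ℝ) (ε : ℝ) (n : ℤ) :
    Measurable ((Ioo (n * h) ((n + 1) * h)).indicator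
      (fun x => |(c (n + 1) - c n) / h| * prof (Int.fract (interp h G c x / ε)))) := by
  have : Measurable (fun x => prof (Int.fract (interp h G c x / ε))) :=
    measurable_prof_fract.comp ((continuous_interp h G c).measurable.div_const ε)
  exact (this.const_mul _).indicator measurableSet_Ioo

lemma cell_bound (h : ℝ) (G : Finset ℤ) (c : ℤ → ℝ) (ε : ℝ) (n : ℤ) (x : ℝ) :
    ‖(Ioo (n * h) ((n + 1) * h)).indicator
      (fun x => |(c (n + 1) - c n) / h| * prof (Int.fract (interp h G c x / ε))) x‖ ≤
    (Ioo (n * h) ((n + 1) * h)).indicator (fun _ => |(c (n + 1) - c n) / h| * 2) x := by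
  by_cases hx : x ∈ Ioo (n * h) ((n + 1) * h)
  · rw [indicator_of_mem hx, indicator_of_mem hx, Real.norm_eq_abs,
      abs_of_nonneg (mul_nonneg (abs_nonneg _) (prof_nonneg _))]
    exact mul_le_mul_of_nonneg_left (prof_le _) (abs_nonneg _)
  · simp [indicator_of_notMem hx]

lemma bound_integrable (h : ℝ) (c : ℤ → ℝ) (n : ℤ) :
    Integrable ((Ioo (n * h) ((n + 1) * h)).indicator
      (fun _ => |(c (n + 1) - c n) / h| * 2)) := by
  rw [integrable_indicator_iff measurableSet_Ioo]
  exact integrableOn_const (by simp)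

lemma cell_integrable (h : ℝ) (G : Finset ℤ) (c : ℤ → ℝ) (ε : ℝ) (n : ℤ) :
    Integrable ((Ioo (n * h) ((n + 1) * h)).indicator
      (fun x => |(c (n + 1) - c n) / h| * prof (Int.fract (interp h G c x / ε)))) :=
  (bound_integrable h c n).mono' (cell_measurable h G c ε n).aestronglyMeasurable
    (Eventually.of_forall fun x => cell_bound h G c ε n x)

lemma tendsto_integral_cellSum {h : ℝ} (hh : 0 < h) {G : Finset ℤ} {c : ℤ → ℝ}
    (hc : ∀ i ∉ G, c i = 0) :
    Tendsto (fun ε => ∫ x, cellSum h G c ε x) (𝓝[>] 0)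
      (𝓝 (∑ n ∈ G, |c (n + 1) - c n| * (2 * Real.log 2))) := by
  have e0 : ∀ ε, ∑ n ∈ G, ∫ x, (Ioo (n * h) ((n + 1) * h)).indicator
      (fun x => |(c (n + 1) - c n) / h| * prof (Int.fract (interp h G c x / ε))) x =
      ∫ x, cellSum h G c ε x :=
    fun ε => (integral_finsetSum G fun n _ => cell_integrable h G c ε n).symm
  refine Tendsto.congr e0 (tendsto_finsetSum _ fun n _ => ?_)
  have hnh : (n : ℝ) * h ≤ (n + 1) * h := by nlinarith
  have e : ∀ ε : ℝ, ∫ x, (Ioo (n * h) ((n + 1) * h)).indicator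
      (fun x => |(c (n + 1) - c n) / h| * prof (Int.fract (interp h G c x / ε))) x =
      ∫ x in (n * h)..((n + 1) * h), |(c (n + 1) - c n) / h| *
        prof (Int.fract ((c n + (c (n + 1) - c n) / h * (x - n * h)) / ε)) := by
    intro ε
    rw [integral_indicator measurableSet_Ioo, intervalIntegral.integral_of_le hnh,
      integral_Ioc_eq_integral_Ioo]
    refine setIntegral_congr_fun measurableSet_Ioo fun x hx => ?_
    simp only [interp_eq hh hc hx.1.le hx.2.le]
  simp_rw [e]
  rw [tendsto_iff_dist_tendsto_zero]
  have hlim : Tendsto (fun ε : ℝ => 4 * ε) (𝓝[>] 0) (𝓝 0) := by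
    have : Tendsto (fun ε : ℝ => 4 * ε) (𝓝 0) (𝓝 (4 * 0)) :=
      tendsto_id.const_mul 4
    rw [mul_zero] at this
    exact this.mono_left nhdsWithin_le_nhds
  refine squeeze_zero' (Eventually.of_forall fun _ => dist_nonneg) ?_ hlim
  filter_upwards [self_mem_nhdsWithin] with ε hε
  have := integral_affine_piece hε ((c (n + 1) - c n) / h) (c n) (n * h) ((n + 1) * h)
  rw [Real.dist_eq]
  convert this using 4
  rw [abs_div, abs_of_pos hh]
  field_simp
  ring

/-- Off the nodes the interaction is asymptotic to `cellSum`, the only cell that matters being the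
one containing the point. -/
lemma tendsto_stepInt_sub {h : ℝ} (hh : 0 < h) {G : Finset ℤ} {c : ℤ → ℝ}
    (hc : ∀ i ∉ G, c i = 0) (hc' : ∀ i ∉ G, c (i + 1) = 0) {x : ℝ}
    (hx : ∀ n : ℤ, x ≠ n * h) :
    Tendsto (fun ε => (stepInt ε (interp h G c) x).toReal - cellSum h G c ε x) (𝓝[>] 0)
      (𝓝 0) := by
  set n := ⌊x / h⌋ with hn
  have a1 : n * h < x := by
    refine lt_of_le_of_ne ?_ (hx n).symm
    rw [← le_div_iff₀ hh]; exact Int.floor_le _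
  have a2 : x < (n + 1) * h := by
    rw [← div_lt_iff₀ hh]; exact Int.lt_floor_add_one _
  set ρ := min (x - n * h) ((n + 1) * h - x) with hρ
  have hρ0 : 0 < ρ := lt_min (by linarith) (by linarith)
  have haff : ∀ z, |z| < ρ → interp h G c (x + z) =
      interp h G c x + (c (n + 1) - c n) / h * z := by
    intro z hz
    have b1 := hz.trans_le (min_le_left _ _)
    have b2 := hz.trans_le (min_le_right _ _)
    rw [abs_lt] at b1 b2
    rw [interp_eq hh hc a1.le a2.le, interp_eq hh hc (n := n) (by linarith) (by linarith)]
    ring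
  have hsum : ∀ ε, cellSum h G c ε x =
      |(c (n + 1) - c n) / h| * prof (Int.fract (interp h G c x / ε)) := by
    intro ε
    unfold cellSum
    rw [Finset.sum_eq_single n]
    · rw [indicator_of_mem (show x ∈ Ioo (n * h) ((n + 1) * h) from ⟨a1, a2⟩)]
    · intro m _ hm
      refine indicator_of_notMem (fun hmem => hm ?_) _
      rw [hn, eq_comm, Int.floor_eq_iff, le_div_iff₀ hh, div_lt_iff₀ hh]
      exact ⟨hmem.1.le, hmem.2⟩
    · intro hn
      rw [hc n hn, hc' n hn]
      simp [indicator]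
  have hlim : Tendsto (fun ε : ℝ => 2 * ε / ρ) (𝓝[>] 0) (𝓝 0) := by
    have : Tendsto (fun ε : ℝ => 2 * ε / ρ) (𝓝 0) (𝓝 (2 * 0 / ρ)) := by
      exact (tendsto_id.const_mul 2).div_const ρ
    rw [mul_zero, zero_div] at this
    exact this.mono_left nhdsWithin_le_nhds
  refine squeeze_zero_norm' ?_ hlim
  filter_upwards [self_mem_nhdsWithin] with ε hε
  rw [hsum, Real.norm_eq_abs]
  exact stepInt_local hε hρ0 haff

/-- The total interaction tends to `2 log 2` times the variation of the nodal values: the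
difference with `cellSum` vanishes off the nodes and is dominated, and the integral of `cellSum`
converges by averaging. -/
theorem tendsto_lintegral_stepInt {h : ℝ} (hh : 0 < h) {G : Finset ℤ} {c : ℤ → ℝ}
    (hc : ∀ i ∉ G, c i = 0) (hc' : ∀ i ∉ G, c (i + 1) = 0) :
    Tendsto (fun ε => ∫⁻ x, stepInt ε (interp h G c) x) (𝓝[>] 0)
      (𝓝 (ENNReal.ofReal (∑ n ∈ G, |c (n + 1) - c n| * (2 * Real.log 2)))) := by
  obtain ⟨A, hA, hsupp⟩ := exists_interp_support hh G c
  have hS : 0 ≤ ∑ i ∈ G, |c i| := Finset.sum_nonneg fun _ _ => abs_nonneg _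
  set K := (∑ i ∈ G, |c i|) / h + 1 with hK
  have hK0 : 0 < K := by positivity
  set C := 2 * K * (1 + (2 * A) ^ 2) + 16 * A with hC
  have hC0 : 0 ≤ C := by have : 0 ≤ A := by linarith
                         positivity
  have hv : Measurable (interp h G c) := (continuous_interp h G c).measurable
  have hsmall : ∀ᶠ ε : ℝ in 𝓝[>] 0, 0 < ε ∧ ε ≤ 1 := by
    filter_upwards [Ioc_mem_nhdsGT (zero_lt_one (α := ℝ))] with ε hε using hε
  have hbd : ∀ ε, 0 < ε → ε ≤ 1 → ∀ x,
      stepInt ε (interp h G c) x ≤ ENNReal.ofReal (C * (1 + x ^ 2)⁻¹) :=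
    fun ε h0 h1 x => stepInt_le_dom h0 h1 hK0 hA (interp_lip hh G c) hsupp x
  have hbdR : ∀ ε, 0 < ε → ε ≤ 1 → ∀ x,
      (stepInt ε (interp h G c) x).toReal ≤ C * (1 + x ^ 2)⁻¹ := by
    intro ε h0 h1 x
    have := ENNReal.toReal_mono ENNReal.ofReal_ne_top (hbd ε h0 h1 x)
    rwa [ENNReal.toReal_ofReal (by positivity)] at this
  have hint : Integrable fun x : ℝ => C * (1 + x ^ 2)⁻¹ := integrable_inv_one_add_sq.const_mul C
  have hJi : ∀ ε, 0 < ε → ε ≤ 1 → Integrable fun x => (stepInt ε (interp h G c) x).toReal := by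
    intro ε h0 h1
    refine hint.mono' (measurable_stepInt hv).ennreal_toReal.aestronglyMeasurable
      (Eventually.of_forall fun x => ?_)
    rw [Real.norm_eq_abs, abs_of_nonneg ENNReal.toReal_nonneg]
    exact hbdR ε h0 h1 x
  have hTi : ∀ ε, Integrable (cellSum h G c ε) := fun ε =>
    integrable_finsetSum G fun n _ => cell_integrable h G c ε n
  have hdiff : Tendsto (fun ε => ∫ x, ((stepInt ε (interp h G c) x).toReal - cellSum h G c ε x))
      (𝓝[>] 0) (𝓝 (∫ _ : ℝ, (0 : ℝ))) := by
    refine tendsto_integral_filter_of_dominated_convergence (fun x => C * (1 + x ^ 2)⁻¹ +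
      ∑ n ∈ G, (Ioo (n * h) ((n + 1) * h)).indicator (fun _ => |(c (n + 1) - c n) / h| * 2) x)
      ?_ ?_ ?_ ?_
    · filter_upwards [hsmall] with ε hε
      exact ((hJi ε hε.1 hε.2).sub (hTi ε)).aestronglyMeasurable
    · filter_upwards [hsmall] with ε hε
      refine Eventually.of_forall fun x => (norm_sub_le _ _).trans (add_le_add ?_ ?_)
      · rw [Real.norm_eq_abs, abs_of_nonneg ENNReal.toReal_nonneg]
        exact hbdR ε hε.1 hε.2 x
      · exact (norm_sum_le _ _).trans (Finset.sum_le_sum fun n _ => cell_bound h G c ε n x)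
    · exact hint.add (integrable_finsetSum G fun n _ => bound_integrable h c n)
    · have : ∀ᵐ x : ℝ, ∀ n : ℤ, x ≠ n * h := by
        rw [ae_all_iff]; intro n; simp [ae_iff]
      filter_upwards [this] with x hx
      exact tendsto_stepInt_sub hh hc hc' hx
  rw [integral_zero] at hdiff
  have hreal : Tendsto (fun ε => ∫ x, (stepInt ε (interp h G c) x).toReal) (𝓝[>] 0)
      (𝓝 (∑ n ∈ G, |c (n + 1) - c n| * (2 * Real.log 2))) := by
    have := hdiff.add (tendsto_integral_cellSum hh hc)
    rw [zero_add] at this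
    refine this.congr' ?_
    filter_upwards [hsmall] with ε hε
    rw [integral_sub (hJi ε hε.1 hε.2) (hTi ε)]; ring
  refine (ENNReal.tendsto_ofReal hreal).congr' ?_
  filter_upwards [hsmall] with ε hε
  rw [ofReal_integral_eq_lintegral_ofReal (hJi ε hε.1 hε.2)
    (Eventually.of_forall fun _ => ENNReal.toReal_nonneg)]
  refine lintegral_congr fun x => ENNReal.ofReal_toReal ?_
  exact ne_top_of_le_ne_top ENNReal.ofReal_ne_top (hbd ε hε.1 hε.2 x)

/-! ### Vertical segmentation -/

/-- The vertical `ε`-segmentation of `v`. -/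
noncomputable def seg (ε : ℝ) (v : ℝ → ℝ) (x : ℝ) : ℝ := ε * ⌊v x / ε⌋

lemma measurable_seg (ε : ℝ) {v : ℝ → ℝ} (hv : Measurable v) : Measurable (seg ε v) := by
  unfold seg
  exact ((measurable_from_top (f := fun n : ℤ => (n : ℝ))).comp
    (Int.measurable_floor.comp (hv.div_const ε))).const_mul ε

/-- The segmentation at height `ε = k δ` turns the condition `|Δu| / δ > k` into `|Δ level| ≥ 2`,
because its increments are integer multiples of `k δ` and `phik k` vanishes at `k`. -/
lemma Lambda1_seg {k δ : ℝ} (hk : 0 < k) (hδ : 0 < δ) {v : ℝ → ℝ} (hv : Measurable v) :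
    Lambda1 (phik k) 1 δ (seg (k * δ) v) univ =
      ENNReal.ofReal (1 / k) * ∫⁻ x, stepInt (k * δ) v x := by
  have hε : 0 < k * δ := mul_pos hk hδ
  unfold Lambda1
  rw [← lintegral_const_mul _ (measurable_stepInt hv), Measure.restrict_univ]
  refine lintegral_congr fun x => ?_
  unfold stepInt
  rw [← lintegral_const_mul _ (measurable_stepKer (by fun_prop) (by fun_prop) (by fun_prop)),
    ← lintegral_add_left_eq_self _ x]
  refine lintegral_congr fun z => ?_
  rw [← ENNReal.ofReal_mul (by positivity), add_sub_cancel_left]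
  congr 1
  have e1 : |seg (k * δ) v (x + z) - seg (k * δ) v x| / δ =
      k * |((⌊v (x + z) / (k * δ)⌋ - ⌊v x / (k * δ)⌋ : ℤ) : ℝ)| := by
    unfold seg
    rw [← mul_sub, abs_mul, abs_of_pos hε]
    push_cast
    field_simp
  have e2 : |z| ^ (1 + 1 : ℝ) = z ^ 2 := by
    rw [show (1 + 1 : ℝ) = ((2 : ℕ) : ℝ) by norm_num, Real.rpow_natCast, sq_abs]
  rw [e1, e2, Real.rpow_one, phik, stepKer]
  by_cases h : 2 ≤ |⌊v (x + z) / (k * δ)⌋ - ⌊v x / (k * δ)⌋|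
  · have h' : (2 : ℝ) ≤ |((⌊v (x + z) / (k * δ)⌋ - ⌊v x / (k * δ)⌋ : ℤ) : ℝ)| := by
      exact_mod_cast h
    rw [if_pos h, if_neg (by nlinarith)]
    field_simp
  · have h' : |((⌊v (x + z) / (k * δ)⌋ - ⌊v x / (k * δ)⌋ : ℤ) : ℝ)| ≤ 1 := by
      have : |⌊v (x + z) / (k * δ)⌋ - ⌊v x / (k * δ)⌋| ≤ 1 := by omega
      exact_mod_cast this
    rw [if_neg h, if_pos (by nlinarith)]
    simp

lemma tendsto_seg {k A : ℝ} (hk : 0 < k) {v : ℝ → ℝ} (hv : ∀ x, A ≤ |x| → v x = 0) :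
    Tendsto (fun δ : ℝ => eLpNorm (fun x => seg (k * δ) v x - v x) 1 volume) (𝓝[>] 0) (𝓝 0) := by
  have hlim : Tendsto (fun δ : ℝ => ENNReal.ofReal (k * δ) * volume (Ioo (-A) A)) (𝓝[>] 0)
      (𝓝 0) := by
    have h1 : Tendsto (fun δ : ℝ => k * δ) (𝓝 0) (𝓝 (k * 0)) := tendsto_id.const_mul k
    have h2 := ENNReal.Tendsto.mul_const (b := volume (Ioo (-A) A))
      (ENNReal.tendsto_ofReal (h1.mono_left (nhdsWithin_le_nhds (s := Ioi 0))))
      (Or.inr (by simp))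
    simpa using h2
  refine tendsto_of_tendsto_of_tendsto_of_le_of_le' tendsto_const_nhds hlim
    (Eventually.of_forall fun _ => zero_le) ?_
  filter_upwards [self_mem_nhdsWithin] with δ hδ
  have hε : 0 < k * δ := mul_pos hk hδ
  rw [eLpNorm_one_eq_lintegral_enorm, ← lintegral_indicator_const measurableSet_Ioo]
  refine lintegral_mono fun x => ?_
  by_cases hx : x ∈ Ioo (-A) A
  · rw [indicator_of_mem hx, Real.enorm_eq_ofReal_abs]
    refine ENNReal.ofReal_le_ofReal ?_
    have h1 := Int.floor_le (v x / (k * δ))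
    have h2 := Int.lt_floor_add_one (v x / (k * δ))
    rw [le_div_iff₀ hε] at h1
    rw [div_lt_iff₀ hε] at h2
    unfold seg
    rw [abs_le]
    constructor <;> linarith
  · have : A ≤ |x| := by
      by_contra hc
      rw [not_le, abs_lt] at hc
      exact hx hc
    simp [seg, hv x this]

/-! ### Sampling a function of bounded variation -/

lemma sum_Ico_telescope (f : ℤ → ℝ) {a b : ℤ} (hab : a ≤ b) :
    ∑ n ∈ Finset.Ico a b, (f (n + 1) - f n) = f b - f a := by
  induction b, hab using Int.leInduction with
  | base => simp
  | succ b hb ih =>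
    have : Finset.Ico a (b + 1) = insert b (Finset.Ico a b) := by
      ext x; simp only [Finset.mem_Ico, Finset.mem_insert]; omega
    rw [this, Finset.sum_insert (by simp), ih]; ring

/-- The variation of a sequence of finite support is at most the sum of its successive increments. -/
lemma eVariationOn_int_le (c : ℤ → ℝ) (G : Finset ℤ) (hc : ∀ i ∉ G, c i = 0)
    (hc' : ∀ i ∉ G, c (i + 1) = 0) :
    eVariationOn c univ ≤ ENNReal.ofReal (∑ n ∈ G, |c (n + 1) - c n|) := by
  set S : ℤ → ℝ := fun m => ∑ n ∈ G, if n < m then |c (n + 1) - c n| else 0 with hS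
  have hstep : ∀ m, |c (m + 1) - c m| ≤ S (m + 1) - S m := by
    intro m
    by_cases hm : m ∈ G
    · have : S (m + 1) - S m = ∑ n ∈ G, if n = m then |c (n + 1) - c n| else 0 := by
        rw [hS, ← Finset.sum_sub_distrib]
        refine Finset.sum_congr rfl fun n _ => ?_
        rcases lt_trichotomy n m with h | h | h
        · rw [if_pos (by omega), if_pos h, if_neg h.ne, sub_self]
        · rw [if_pos (by omega), if_neg (by omega), if_pos h, sub_zero]
        · rw [if_neg (by omega), if_neg (by omega), if_neg h.ne', sub_self]
      rw [this, Finset.sum_ite_eq' G m, if_pos hm]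
    · rw [hc m hm, hc' m hm, sub_self, abs_zero, sub_nonneg]
      refine Finset.sum_le_sum fun n _ => ?_
      split_ifs <;> first | exact le_rfl | positivity | omega
  have hS2 : ∀ m m', m ≤ m' → |c m' - c m| ≤ S m' - S m := by
    intro m m' hmm
    induction m', hmm using Int.leInduction with
    | base => simp
    | succ b hb ih =>
      have := abs_sub_le (c (b + 1)) (c b) (c m)
      linarith [hstep b]
  refine iSup_le ?_
  rintro ⟨N, w, hw, -⟩
  calc ∑ i ∈ Finset.range N, edist (c (w (i + 1))) (c (w i))
      ≤ ∑ i ∈ Finset.range N, ENNReal.ofReal (S (w (i + 1)) - S (w i)) := by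
        refine Finset.sum_le_sum fun i _ => ?_
        rw [edist_dist, Real.dist_eq]
        exact ENNReal.ofReal_le_ofReal (hS2 _ _ (hw (Nat.le_succ i)))
    _ = ENNReal.ofReal (∑ i ∈ Finset.range N, (S (w (i + 1)) - S (w i))) := by
        rw [ENNReal.ofReal_sum_of_nonneg]
        intro i _
        exact (abs_nonneg _).trans (hS2 _ _ (hw (Nat.le_succ i)))
    _ ≤ _ := by
        refine ENNReal.ofReal_le_ofReal ?_
        rw [Finset.sum_range_sub (fun i => S (w i))]
        have h1 : S (w N) ≤ ∑ n ∈ G, |c (n + 1) - c n| := by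
          refine Finset.sum_le_sum fun n _ => ?_
          split_ifs
          · exact le_rfl
          · positivity
        have h0 : 0 ≤ S (w 0) := Finset.sum_nonneg fun n _ => by split_ifs <;> positivity
        linarith

/-- Samples of `u` on the grid `hℤ`, set to zero outside the window `[-Mh, Mh]`. -/
noncomputable def samp (u : ℝ → ℝ) (h : ℝ) (M : ℕ) (i : ℤ) : ℝ :=
  if |i| ≤ (M : ℤ) then u (i * h) else 0

/-- The indices of the grid cells on which the interpolant of `samp u h M` may be nonconstant. -/
noncomputable def win (M : ℕ) : Finset ℤ := Finset.Ico (-(M : ℤ) - 1) (M + 1)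

lemma samp_win (u : ℝ → ℝ) (h : ℝ) (M : ℕ) : ∀ i ∉ win M, samp u h M i = 0 := by
  intro i hi
  rw [win, Finset.mem_Ico] at hi
  rw [samp, if_neg]
  rw [abs_le]; omega

lemma samp_win' (u : ℝ → ℝ) (h : ℝ) (M : ℕ) : ∀ i ∉ win M, samp u h M (i + 1) = 0 := by
  intro i hi
  rw [win, Finset.mem_Ico] at hi
  rw [samp, if_neg]
  rw [abs_le]; omega

/-- The variation of the sampled sequence. -/
noncomputable def sampVar (u : ℝ → ℝ) (h : ℝ) (M : ℕ) : ℝ :=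
  ∑ n ∈ win M, |samp u h M (n + 1) - samp u h M n|

/-- If `p` dominates the increments of `u`, the sampled sequence varies by at most the increment
of `p` over the window plus the two jumps created by the truncation. -/
lemma sampVar_le {u p : ℝ → ℝ} (hp : ∀ x y, x ≤ y → |u y - u x| ≤ p y - p x) {h : ℝ} (hh : 0 < h)
    (M : ℕ) : sampVar u h M ≤ p (M * h) - p (-(M * h)) + |u (-(M * h))| + |u (M * h)| := by
  set Q : ℤ → ℝ := fun i => if i < -(M : ℤ) then p (-(M * h)) - |u (-(M * h))|
    else if i ≤ M then p (i * h) else p (M * h) + |u (M * h)| with hQ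
  have hstep : ∀ n ∈ win M, |samp u h M (n + 1) - samp u h M n| ≤ Q (n + 1) - Q n := by
    intro n hn
    rw [win, Finset.mem_Ico] at hn
    rcases lt_trichotomy n (-(M : ℤ) - 1) with h1 | h1 | h1
    · omega
    · have e1 : samp u h M (n + 1) = u (-(M * h)) := by
        rw [samp, if_pos (by rw [abs_le]; omega), h1]; congr 1; push_cast; ring
      have e2 : samp u h M n = 0 := by rw [samp, if_neg (by rw [abs_le]; omega)]
      have e3 : Q (n + 1) = p (-(M * h)) := by
        simp only [hQ]
        rw [if_neg (by omega), if_pos (by omega), h1]; congr 1; push_cast; ring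
      have e4 : Q n = p (-(M * h)) - |u (-(M * h))| := by
        simp only [hQ]
        rw [if_pos (by omega)]
      rw [e1, e2, e3, e4]; simp
    · by_cases h2 : n = M
      · have e1 : samp u h M (n + 1) = 0 := by rw [samp, if_neg (by rw [abs_le]; omega)]
        have e2 : samp u h M n = u (M * h) := by
          rw [samp, if_pos (by rw [abs_le]; omega), h2]; simp
        have e3 : Q (n + 1) = p (M * h) + |u (M * h)| := by
          simp only [hQ]
          rw [if_neg (by omega), if_neg (by omega)]
        have e4 : Q n = p (M * h) := by
          simp only [hQ]
          rw [if_neg (by omega), if_pos (by omega), h2]; simp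
        rw [e1, e2, e3, e4]; simp
      · have e1 : samp u h M (n + 1) = u ((n + 1 : ℤ) * h) := by
          rw [samp, if_pos (by rw [abs_le]; omega)]
        have e2 : samp u h M n = u (n * h) := by
          rw [samp, if_pos (by rw [abs_le]; omega)]
        have e3 : Q (n + 1) = p ((n + 1 : ℤ) * h) := by
          simp only [hQ]
          rw [if_neg (by omega), if_pos (by omega)]
        have e4 : Q n = p (n * h) := by
          simp only [hQ]
          rw [if_neg (by omega), if_pos (by omega)]
        rw [e1, e2, e3, e4]
        refine hp _ _ ?_
        push_cast; nlinarith
  have := Finset.sum_le_sum hstep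
  rw [win, sum_Ico_telescope Q (by omega)] at this
  have e3 : Q (M + 1) = p (M * h) + |u (M * h)| := by
    simp only [hQ]
    rw [if_neg (by omega), if_neg (by omega)]
  have e4 : Q (-(M : ℤ) - 1) = p (-(M * h)) - |u (-(M * h))| := by
    simp only [hQ]
    rw [if_pos (by omega)]
  rw [e3, e4] at this
  rw [sampVar, win]
  linarith

/-- The step function `x ↦ samp u h M ⌈x / h⌉` converges to `u` pointwise by right-continuity, and
its variation is at most `sampVar u h M`; lower semicontinuity of the variation does the rest. -/
lemma eventually_lt_sampVar {u : ℝ → ℝ} (hrc : ∀ x, ContinuousWithinAt u (Ici x) x)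
    {h : ℕ → ℝ} {M : ℕ → ℕ} (hh : ∀ n, 0 < h n) (h0 : Tendsto h atTop (𝓝 0))
    (hM : Tendsto (fun n => (M n : ℝ) * h n) atTop atTop) {t : ℝ≥0∞}
    (ht : t < eVariationOn u univ) :
    ∀ᶠ n in atTop, t < ENNReal.ofReal (sampVar u (h n) (M n)) := by
  have hpt : ∀ x, Tendsto (fun n => samp u (h n) (M n) ⌈x / h n⌉) atTop (𝓝 (u x)) := by
    intro x
    have hlo : ∀ n, x ≤ ⌈x / h n⌉ * h n := fun n => by
      have := Int.le_ceil (x / h n)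
      rwa [div_le_iff₀ (hh n)] at this
    have hhi : ∀ n, ⌈x / h n⌉ * h n ≤ x + h n := fun n => by
      have h1 := (Int.ceil_lt_add_one (x / h n)).le
      have h2 := mul_le_mul_of_nonneg_right h1 (hh n).le
      have h3 : x / h n * h n = x := div_mul_cancel₀ _ (hh n).ne'
      linarith
    have hq : Tendsto (fun n => (⌈x / h n⌉ : ℝ) * h n) atTop (𝓝[≥] x) := by
      refine tendsto_nhdsWithin_iff.2 ⟨?_, Eventually.of_forall hlo⟩
      refine tendsto_of_tendsto_of_tendsto_of_le_of_le tendsto_const_nhds ?_ hlo hhi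
      simpa using tendsto_const_nhds.add h0
    refine ((hrc x).tendsto.comp hq).congr' ?_
    filter_upwards [hM.eventually_ge_atTop (|x| + 1), h0.eventually_lt_const one_pos] with n h1 h2
    rw [Function.comp_apply, samp, if_pos]
    have h3 : |(⌈x / h n⌉ : ℝ)| * h n ≤ M n * h n := by
      rw [← abs_of_pos (hh n), ← abs_mul, abs_of_pos (hh n)]
      refine le_trans ?_ h1
      rw [abs_le]
      constructor
      · linarith [hlo n, neg_abs_le x]
      · linarith [hhi n, le_abs_self x]
    have h4 := le_of_mul_le_mul_right h3 (hh n)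
    exact_mod_cast h4
  filter_upwards [eVariationOn.lowerSemicontinuous_aux (s := univ)
    (F := fun n x => samp u (h n) (M n) ⌈x / h n⌉) (fun x _ => hpt x) ht] with n hn
  refine hn.trans_le (le_trans ?_ (eVariationOn_int_le _ _ (samp_win u (h n) (M n))
    (samp_win' u (h n) (M n))))
  refine eVariationOn.comp_le_of_monotoneOn (samp u (h n) (M n)) (fun x : ℝ => ⌈x / h n⌉) ?_
    (fun _ _ => mem_univ _)
  intro x _ y _ hxy
  exact Int.ceil_mono (div_le_div_of_nonneg_right hxy (hh n).le)

/-- A function of bounded variation has limits at infinity, which integrability forces to vanish. -/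
lemma tendsto_zero_of_integrable {u : ℝ → ℝ} (hu : Integrable u)
    (hTV : BoundedVariationOn u univ) : Tendsto u atTop (𝓝 0) ∧ Tendsto u atBot (𝓝 0) := by
  constructor
  · have h1 := hTV.tendsto_atTop_limUnder
    rwa [IntegrableAtFilter.eq_zero_of_tendsto (μ := volume) (hu.integrableAtFilter _) ?_ h1] at h1
    intro s hs
    obtain ⟨a, ha⟩ := mem_atTop_sets.1 hs
    exact top_le_iff.1 (Real.volume_Ici (a := a) ▸ measure_mono ha)
  · have h1 := hTV.tendsto_atBot_limUnder
    rwa [IntegrableAtFilter.eq_zero_of_tendsto (μ := volume) (hu.integrableAtFilter _) ?_ h1] at h1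
    intro s hs
    obtain ⟨a, ha⟩ := mem_atBot_sets.1 hs
    exact top_le_iff.1 (Real.volume_Iic (a := a) ▸ measure_mono ha)

/-- The variation of the samples tends to the variation of `u`, as the mesh tends to zero and the
window exhausts the line. The jumps created by the truncation vanish since `u` tends to zero. -/
theorem tendsto_sampVar {u : ℝ → ℝ} (hu : Integrable u)
    (hrc : ∀ x, ContinuousWithinAt u (Ici x) x) (hTV : BoundedVariationOn u univ)
    {h : ℕ → ℝ} {M : ℕ → ℕ} (hh : ∀ n, 0 < h n) (h0 : Tendsto h atTop (𝓝 0))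
    (hM : Tendsto (fun n => (M n : ℝ) * h n) atTop atTop) :
    Tendsto (fun n => ENNReal.ofReal (sampVar u (h n) (M n))) atTop (𝓝 (eVariationOn u univ)) := by
  refine tendsto_order.2 ⟨fun t ht => eventually_lt_sampVar hrc hh h0 hM ht, fun t ht => ?_⟩
  obtain ⟨z1, z2⟩ := tendsto_zero_of_integrable hu hTV
  have hlim : Tendsto (fun n => ENNReal.ofReal ((eVariationOn u univ).toReal
      + |u (-(M n * h n))| + |u (M n * h n)|)) atTop (𝓝 (eVariationOn u univ)) := by
    have e : eVariationOn u univ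
        = ENNReal.ofReal ((eVariationOn u univ).toReal + |(0 : ℝ)| + |(0 : ℝ)|) := by
      simp [ENNReal.ofReal_toReal hTV]
    conv => rhs; rw [e]
    refine (ENNReal.continuous_ofReal.tendsto _).comp ?_
    exact (tendsto_const_nhds.add (z2.comp (tendsto_neg_atTop_atBot.comp hM)).abs).add
      (z1.comp hM).abs
  filter_upwards [hlim.eventually_lt_const ht] with n hn
  refine lt_of_le_of_lt (ENNReal.ofReal_le_ofReal ?_) hn
  have hl := hTV.locallyBoundedVariationOn
  refine (sampVar_le (p := variationOnFromTo u univ 0) (fun x y hxy =>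
    variationOnFromTo.abs_sub_le_sub_of_le hl (mem_univ _) (mem_univ _) (mem_univ _) hxy)
    (hh n) (M n)).trans ?_
  have h1 := variationOnFromTo.add hl (mem_univ (0 : ℝ)) (mem_univ (-(M n * h n)))
    (mem_univ (M n * h n))
  have h2 := (abs_le.1 (variationOnFromTo.abs_le_eVariationOn hTV
    (a := -(M n * h n)) (b := M n * h n))).2
  linarith

/-! ### Convergence in `L¹` -/

/-- The translation modulus of a bounded monotone function on an interval is `O(h)`. -/
lemma lintegral_modulus_le {p : ℝ → ℝ} (hp : Monotone p) {P : ℝ} (hP : ∀ x, |p x| ≤ P) {h R : ℝ}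
    (hh : 0 < h) (hR : 0 ≤ R) :
    ∫⁻ x in Ico (-R) R, ENNReal.ofReal (p (x + h) - p (x - h)) ≤ ENNReal.ofReal (4 * h * P) := by
  have hi : ∀ a b, IntervalIntegrable p volume a b := fun a b => hp.intervalIntegrable
  have hi1 : IntervalIntegrable (fun x => p (x + h)) volume (-R) R :=
    Monotone.intervalIntegrable fun x y hxy => hp (by linarith)
  have hi2 : IntervalIntegrable (fun x => p (x - h)) volume (-R) R :=
    Monotone.intervalIntegrable fun x y hxy => hp (by linarith)
  have hb : ∀ a, |∫ x in (a - h)..(a + h), p x| ≤ 2 * h * P := by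
    intro a
    have := intervalIntegral.norm_integral_le_of_norm_le_const (a := a - h) (b := a + h) (f := p)
      (C := P) (fun x _ => hP x)
    rw [Real.norm_eq_abs, show a + h - (a - h) = 2 * h by ring,
      abs_of_pos (show (0 : ℝ) < 2 * h by positivity)] at this
    linarith
  -- The two translated integrals differ only on intervals of length `2 * h` around `R` and `-R`.
  have key : ∫ x in (-R)..R, (p (x + h) - p (x - h)) ≤ 4 * h * P := by
    rw [intervalIntegral.integral_sub hi1 hi2, intervalIntegral.integral_comp_add_right,
      intervalIntegral.integral_comp_sub_right,
      intervalIntegral.integral_interval_sub_interval_comm (hi _ _) (hi _ _) (hi _ _),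
      intervalIntegral.integral_symm (R - h) (R + h),
      intervalIntegral.integral_symm (-R - h) (-R + h)]
    have h1 := abs_le.1 (hb R)
    have h2 := abs_le.1 (hb (-R))
    linarith
  rw [restrict_Ico_eq_restrict_Ioc, ← ofReal_integral_eq_lintegral_ofReal]
  · rw [← intervalIntegral.integral_of_le (by linarith)]
    exact ENNReal.ofReal_le_ofReal key
  · exact (hi1.sub hi2).1
  · exact Eventually.of_forall fun x => sub_nonneg.2 (hp (by linarith))

lemma abs_combo_le {a b w θ D : ℝ} (h0 : 0 ≤ θ) (h1 : θ ≤ 1) (ha : |a - w| ≤ D) (hb : |b - w| ≤ D) :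
    |a + (b - a) * θ - w| ≤ D := by
  rw [abs_le] at *
  constructor <;> nlinarith

/-- Inside the window the interpolation error is at most the oscillation over the neighbouring cells,
measured by `p`; in the two transition cells the interpolant is bounded; elsewhere it vanishes. -/
lemma interp_sub_le {u p : ℝ → ℝ} (hp : ∀ x y, x ≤ y → |u y - u x| ≤ p y - p x)
    {B : ℝ} (hB : ∀ x, |u x| ≤ B) {h : ℝ} (hh : 0 < h) (M : ℕ) (x : ℝ) :
    ‖interp h (win M) (samp u h M) x - u x‖ₑ ≤
      (Ico (-(M * h)) (M * h)).indicator (fun x => ENNReal.ofReal (p (x + h) - p (x - h))) x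
      + (Ico (-(M * h) - h) (-(M * h))).indicator (fun _ => ENNReal.ofReal B) x
      + (Ico (M * h) (M * h + h)).indicator (fun _ => ENNReal.ofReal B) x
      + (Ico (-(M * h)) (M * h))ᶜ.indicator (fun x => ‖u x‖ₑ) x := by
  have hmono : Monotone p := fun x y hxy => by linarith [hp x y hxy, abs_nonneg (u y - u x)]
  have hB0 : 0 ≤ B := (abs_nonneg _).trans (hB 0)
  set n := ⌊x / h⌋ with hn
  have hlo : n * h ≤ x := by
    have := Int.floor_le (x / h)
    rwa [le_div_iff₀ hh] at this
  have hhi : x < (n + 1) * h := by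
    have := Int.lt_floor_add_one (x / h)
    rwa [div_lt_iff₀ hh] at this
  have hc : ∀ i, |samp u h M i| ≤ B := fun i => by
    rw [samp]; split_ifs
    · exact hB _
    · simpa using hB0
  set θ := (x - n * h) / h with hθ
  have hθ0 : 0 ≤ θ := div_nonneg (by linarith) hh.le
  have hθ1 : θ ≤ 1 := by rw [hθ, div_le_one hh]; linarith
  have hv : interp h (win M) (samp u h M) x
      = samp u h M n + (samp u h M (n + 1) - samp u h M n) * θ := by
    rw [interp_eq hh (samp_win u h M) hlo hhi.le, hθ]; ring
  by_cases hin : x ∈ Ico (-(M * h)) (M * h)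
  · have hn1 : -(M : ℤ) ≤ n := by
      rw [hn, Int.le_floor, le_div_iff₀ hh]; push_cast; linarith [hin.1]
    have hn2 : n < M := by
      rw [hn, Int.floor_lt, div_lt_iff₀ hh]; push_cast; linarith [hin.2]
    have e1 : samp u h M n = u (n * h) := by rw [samp, if_pos (by rw [abs_le]; omega)]
    have e2 : samp u h M (n + 1) = u ((n + 1) * h) := by
      rw [samp, if_pos (by rw [abs_le]; omega)]; push_cast; rfl
    rw [indicator_of_mem hin, add_assoc, add_assoc]
    refine le_trans ?_ le_self_add
    rw [Real.enorm_eq_ofReal_abs]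
    refine ENNReal.ofReal_le_ofReal ?_
    rw [hv, e1, e2]
    refine abs_combo_le hθ0 hθ1 ?_ ?_
    · rw [abs_sub_comm]
      have := hp (n * h) x hlo
      have h1 := hmono (show x ≤ x + h by linarith)
      have h2 := hmono (show x - h ≤ n * h by linarith)
      linarith
    · have := hp x ((n + 1) * h) hhi.le
      have h1 := hmono (show (n + 1) * h ≤ x + h by linarith)
      have h2 := hmono (show x - h ≤ x by linarith)
      linarith
  · rw [indicator_of_mem (s := (Ico (-(M * h)) (M * h))ᶜ) hin]
    refine le_trans (enorm_sub_le) ?_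
    gcongr
    rw [indicator_of_notMem hin, zero_add]
    have hvB : ‖interp h (win M) (samp u h M) x‖ₑ ≤ ENNReal.ofReal B := by
      rw [Real.enorm_eq_ofReal_abs]
      refine ENNReal.ofReal_le_ofReal ?_
      rw [hv]
      simpa using abs_combo_le (w := 0) hθ0 hθ1 (by simpa using hc n) (by simpa using hc (n + 1))
    by_cases h1 : x ∈ Ico (-(M * h) - h) (-(M * h))
    · rw [indicator_of_mem h1]
      exact hvB.trans le_self_add
    by_cases h2 : x ∈ Ico (M * h) (M * h + h)
    · rw [indicator_of_mem h2]
      exact hvB.trans le_add_self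
    have hz : samp u h M n = 0 ∧ samp u h M (n + 1) = 0 := by
      simp only [mem_Ico, not_and_or, not_le, not_lt] at hin h1 h2
      have hMh : 0 ≤ M * h := by positivity
      have : n < -(M : ℤ) - 1 ∨ (M : ℤ) + 1 ≤ n := by
        by_cases hx : x < -(M * h) - h
        · left
          rw [hn, Int.floor_lt, div_lt_iff₀ hh]; push_cast; linarith
        · right
          rw [hn, Int.le_floor, le_div_iff₀ hh]; push_cast
          rcases h1 with h1 | h1
          · exact absurd h1 hx
          · rcases hin with h3 | h3
            · linarith
            · rcases h2 with h2 | h2 <;> linarith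
      constructor <;> rw [samp, if_neg (by rw [abs_le]; omega)]
    rw [hv, hz.1, hz.2]; simp

theorem tendsto_interp {u : ℝ → ℝ} (hu : Integrable u) (hTV : BoundedVariationOn u univ)
    {h : ℕ → ℝ} {M : ℕ → ℕ} (hh : ∀ n, 0 < h n) (h0 : Tendsto h atTop (𝓝 0))
    (hM : Tendsto (fun n => (M n : ℝ) * h n) atTop atTop) :
    Tendsto (fun n => eLpNorm (fun x => interp (h n) (win (M n)) (samp u (h n) (M n)) x - u x) 1
      volume) atTop (𝓝 0) := by
  have hl := hTV.locallyBoundedVariationOn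
  set P := (eVariationOn u univ).toReal
  set p := variationOnFromTo u univ 0
  have hp : ∀ x y, x ≤ y → |u y - u x| ≤ p y - p x := fun x y hxy =>
    variationOnFromTo.abs_sub_le_sub_of_le hl (mem_univ _) (mem_univ _) (mem_univ _) hxy
  have hmono : Monotone p := fun x y hxy => by linarith [hp x y hxy, abs_nonneg (u y - u x)]
  have hP : ∀ x, |p x| ≤ P := fun x => variationOnFromTo.abs_le_eVariationOn hTV
  set B := |u 0| + P
  have hB : ∀ x, |u x| ≤ B := fun x => by
    have h1 := hTV.dist_le (mem_univ x) (mem_univ 0)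
    rw [Real.dist_eq] at h1
    have := abs_sub_abs_le_abs_sub (u x) (u 0)
    linarith
  have hmI : ∀ a b : ℝ, MeasurableSet (Ico a b) := fun a b => measurableSet_Ico
  have hbd : ∀ n, eLpNorm (fun x => interp (h n) (win (M n)) (samp u (h n) (M n)) x - u x) 1 volume
      ≤ ENNReal.ofReal (4 * h n * P) + ENNReal.ofReal B * ENNReal.ofReal (h n)
        + ENNReal.ofReal B * ENNReal.ofReal (h n)
        + ∫⁻ x, (Ico (-(M n * h n)) (M n * h n))ᶜ.indicator (fun x => ‖u x‖ₑ) x := by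
    intro n
    rw [eLpNorm_one_eq_lintegral_enorm]
    refine (lintegral_mono fun x => interp_sub_le hp hB (hh n) (M n) x).trans ?_
    have m1 : Measurable (fun x => ENNReal.ofReal (p (x + h n) - p (x - h n))) :=
      ((hmono.measurable.comp (measurable_id.add_const _)).sub
        (hmono.measurable.comp (measurable_id.sub_const _))).ennreal_ofReal
    have m2 := (measurable_const : Measurable fun _ : ℝ => ENNReal.ofReal B)
    have m3 := m1.indicator (hmI (-(M n * h n)) (M n * h n))
    have m4 := m2.indicator (hmI (-(M n * h n) - h n) (-(M n * h n)))
    have m5 := m2.indicator (hmI (M n * h n) (M n * h n + h n))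
    have m34 := m3.fun_add m4
    have m345 := m34.fun_add m5
    rw [lintegral_add_left m345, lintegral_add_left m34, lintegral_add_left m3]
    gcongr
    · rw [lintegral_indicator (hmI _ _)]
      exact lintegral_modulus_le hmono hP (hh n) (mul_nonneg (Nat.cast_nonneg _) (hh n).le)
    · rw [lintegral_indicator_const (hmI _ _), Real.volume_Ico]
      simp
    · rw [lintegral_indicator_const (hmI _ _), Real.volume_Ico]
      simp
  have htail : Tendsto (fun n => ∫⁻ x, (Ico (-(M n * h n)) (M n * h n))ᶜ.indicator
      (fun x => ‖u x‖ₑ) x) atTop (𝓝 0) := by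
    rw [← lintegral_zero (μ := (volume : Measure ℝ))]
    refine tendsto_lintegral_of_dominated_convergence' (fun x => ‖u x‖ₑ)
      (fun n => hu.aestronglyMeasurable.enorm.indicator (hmI _ _).compl)
      (fun n => Eventually.of_forall fun x => indicator_le_self _ _ x) hu.2.ne ?_
    refine Eventually.of_forall fun x => tendsto_const_nhds.congr' ?_
    filter_upwards [hM.eventually_gt_atTop |x|] with n hn
    rw [indicator_of_notMem]
    rw [notMem_compl_iff]
    exact ⟨by linarith [neg_abs_le x], by linarith [le_abs_self x]⟩
  refine tendsto_of_tendsto_of_tendsto_of_le_of_le tendsto_const_nhds ?_ (fun _ => zero_le) hbd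
  have t1 : Tendsto (fun n => ENNReal.ofReal (4 * h n * P)) atTop (𝓝 0) := by
    rw [← ENNReal.ofReal_zero]
    refine (ENNReal.continuous_ofReal.tendsto _).comp ?_
    simpa using (h0.const_mul 4).mul_const P
  have t2 : Tendsto (fun n => ENNReal.ofReal B * ENNReal.ofReal (h n)) atTop (𝓝 0) := by
    have : Tendsto (fun n => ENNReal.ofReal (h n)) atTop (𝓝 0) := by
      rw [← ENNReal.ofReal_zero]
      exact (ENNReal.continuous_ofReal.tendsto _).comp h0
    simpa using ENNReal.Tendsto.const_mul this (Or.inr ENNReal.ofReal_ne_top)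
  simpa using ((t1.add t2).add t2).add htail

/-! ### The diagonal argument -/

/-- Diagonal extraction along `𝓝[>] 0`: no uniformity in `n` is needed, because `N δ` may be chosen
to make `F n δ` nearly as close to `ℓ` as any `n` permits. -/
lemma exists_diagonal {Y : Type*} [TopologicalSpace Y] [TopologicalSpace.PseudoMetrizableSpace Y]
    {F : ℕ → ℝ → Y} {L : ℕ → Y} {ℓ : Y} (hF : ∀ n, Tendsto (F n) (𝓝[>] 0) (𝓝 (L n)))
    (hL : Tendsto L atTop (𝓝 ℓ)) :
    ∃ N : ℝ → ℕ, Tendsto (fun δ => F (N δ) δ) (𝓝[>] 0) (𝓝 ℓ) := by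
  let _ := TopologicalSpace.pseudoMetrizableSpacePseudoMetric Y
  have hex : ∀ δ : ℝ, ∃ n, 0 < δ → dist (F n δ) ℓ < (⨅ m, dist (F m δ) ℓ) + δ := by
    intro δ
    by_cases hδ : 0 < δ
    · obtain ⟨n, hn⟩ := exists_lt_of_ciInf_lt
        (lt_add_of_pos_right (⨅ m, dist (F m δ) ℓ) hδ)
      exact ⟨n, fun _ => hn⟩
    · exact ⟨0, fun h => absurd h hδ⟩
  choose N hN using hex
  refine ⟨N, Metric.tendsto_nhds.2 fun η hη => ?_⟩
  obtain ⟨n, hn⟩ := ((Metric.tendsto_nhds.1 hL) (η / 3) (by positivity)).exists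
  filter_upwards [(Metric.tendsto_nhds.1 (hF n)) (η / 3) (by positivity), self_mem_nhdsWithin,
    nhdsWithin_le_nhds (eventually_lt_nhds (show (0 : ℝ) < η / 3 by positivity))] with δ h1 h2 h3
  have h4 : (⨅ m, dist (F m δ) ℓ) ≤ dist (F n δ) ℓ :=
    ciInf_le ⟨0, by rintro _ ⟨m, rfl⟩; exact dist_nonneg⟩ n
  have h5 := dist_triangle (F n δ) (L n) ℓ
  have h6 := hN δ h2
  linarith

/-- With `ε = k δ`, the energy of the segmentation of the sampled interpolant tends to
`2 log 2 / k` times its variation. -/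
lemma tendsto_Lambda1_seg {k : ℝ} (hk : 0 < k) {u : ℝ → ℝ} {h : ℝ} (hh : 0 < h) (M : ℕ) :
    Tendsto (fun δ => Lambda1 (phik k) 1 δ (seg (k * δ) (interp h (win M) (samp u h M))) univ)
      (𝓝[>] 0) (𝓝 (ENNReal.ofReal (2 * Real.log 2 / k) * ENNReal.ofReal (sampVar u h M))) := by
  have hkδ : Tendsto (fun δ : ℝ => k * δ) (𝓝[>] 0) (𝓝[>] 0) := by
    refine tendsto_nhdsWithin_iff.2 ⟨?_, ?_⟩
    · refine tendsto_nhdsWithin_of_tendsto_nhds ?_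
      simpa using (continuous_const_mul k).tendsto (0 : ℝ)
    · filter_upwards [self_mem_nhdsWithin] with δ hδ
      exact mul_pos hk hδ
  have hlog : 0 ≤ 2 * Real.log 2 := by positivity
  have hlim := (tendsto_lintegral_stepInt hh (samp_win u h M) (samp_win' u h M)).comp hkδ
  have hlim2 := ENNReal.Tendsto.const_mul (a := ENNReal.ofReal (1 / k)) hlim
    (Or.inr ENNReal.ofReal_ne_top)
  have e : ENNReal.ofReal (1 / k) * ENNReal.ofReal (∑ i ∈ win M,
        |samp u h M (i + 1) - samp u h M i| * (2 * Real.log 2))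
      = ENNReal.ofReal (2 * Real.log 2 / k) * ENNReal.ofReal (sampVar u h M) := by
    rw [← ENNReal.ofReal_mul (by positivity), ← ENNReal.ofReal_mul (by positivity),
      ← Finset.sum_mul, sampVar]
    congr 1; ring
  rw [e] at hlim2
  refine hlim2.congr' ?_
  filter_upwards [self_mem_nhdsWithin] with δ hδ
  exact (Lambda1_seg hk hδ (continuous_interp h _ _).measurable).symm

lemma eLpNorm_triangle_seg (ε : ℝ) {v u : ℝ → ℝ} (hv : Continuous v) (hu : Integrable u) :
    eLpNorm (fun x => seg ε v x - u x) 1 volume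
      ≤ eLpNorm (fun x => seg ε v x - v x) 1 volume + eLpNorm (fun x => v x - u x) 1 volume := by
  have h1 : AEStronglyMeasurable (fun x => seg ε v x - v x) volume :=
    ((measurable_seg ε hv.measurable).sub hv.measurable).aestronglyMeasurable
  have h2 : AEStronglyMeasurable (fun x => v x - u x) volume :=
    hv.aestronglyMeasurable.sub hu.aestronglyMeasurable
  have h3 : (fun x => seg ε v x - u x)
      = (fun x => seg ε v x - v x) + fun x => v x - u x := by
    funext x; simp
  rw [h3]
  exact eLpNorm_add_le h1 h2 le_rfl

/-- existence of a recovery family for `φ_k`, `p = 1`. -/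
theorem gamma_limsup_phik (k : ℝ) (hk : 0 < k) (u : ℝ → ℝ)
    (hu : Integrable u) (hrc : ∀ x : ℝ, ContinuousWithinAt u (Set.Ici x) x)
    (hTV : eVariationOn u Set.univ < ⊤) :
    ∃ U : ℝ → ℝ → ℝ, (∀ δ > (0 : ℝ), Measurable (U δ)) ∧
      Tendsto (fun δ : ℝ => eLpNorm (fun x => U δ x - u x) 1 volume) (𝓝[>] 0) (𝓝 0) ∧
      Tendsto (fun δ : ℝ => Lambda1 (phik k) 1 δ (U δ) Set.univ) (𝓝[>] 0)
        (𝓝 (ENNReal.ofReal (2 * Real.log 2 / k) * eVariationOn u Set.univ)) := by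
  have hbv : BoundedVariationOn u univ := hTV.ne
  -- Mesh `1 / (n + 1)`, window `[-(n + 1), n + 1]`.
  set h : ℕ → ℝ := fun n => 1 / ((n : ℝ) + 1) with hdef
  set M : ℕ → ℕ := fun n => (n + 1) ^ 2 with Mdef
  have hh : ∀ n, 0 < h n := fun n => by positivity
  have h0 : Tendsto h atTop (𝓝 0) := tendsto_one_div_add_atTop_nhds_zero_nat
  have hM : Tendsto (fun n => (M n : ℝ) * h n) atTop atTop := by
    have : (fun n => (M n : ℝ) * h n) = fun n : ℕ => (n : ℝ) + 1 := by
      funext n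
      have : (n : ℝ) + 1 ≠ 0 := by positivity
      simp only [hdef, Mdef]; push_cast; field_simp
    rw [this]
    exact tendsto_atTop_add_const_right _ _ tendsto_natCast_atTop_atTop
  set v : ℕ → ℝ → ℝ := fun n => interp (h n) (win (M n)) (samp u (h n) (M n)) with vdef
  have hvc : ∀ n, Continuous (v n) := fun n => continuous_interp _ _ _
  have hF : ∀ n, Tendsto (fun δ => (eLpNorm (fun x => seg (k * δ) (v n) x - v n x) 1 volume
      + eLpNorm (fun x => v n x - u x) 1 volume, Lambda1 (phik k) 1 δ (seg (k * δ) (v n)) univ))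
      (𝓝[>] 0) (𝓝 (0 + eLpNorm (fun x => v n x - u x) 1 volume,
        ENNReal.ofReal (2 * Real.log 2 / k) * ENNReal.ofReal (sampVar u (h n) (M n)))) := by
    intro n
    obtain ⟨A, -, hA⟩ := exists_interp_support (hh n) (win (M n)) (samp u (h n) (M n))
    exact ((tendsto_seg hk hA).add tendsto_const_nhds).prodMk_nhds
      (tendsto_Lambda1_seg hk (hh n) (M n))
  have hL : Tendsto (fun n => (0 + eLpNorm (fun x => v n x - u x) 1 volume,
      ENNReal.ofReal (2 * Real.log 2 / k) * ENNReal.ofReal (sampVar u (h n) (M n)))) atTop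
      (𝓝 (0 + 0, ENNReal.ofReal (2 * Real.log 2 / k) * eVariationOn u univ)) :=
    (tendsto_const_nhds.add (tendsto_interp hu hbv hh h0 hM)).prodMk_nhds
      (ENNReal.Tendsto.const_mul (tendsto_sampVar hu hrc hbv hh h0 hM)
        (Or.inr ENNReal.ofReal_ne_top))
  -- The `L¹` error and the energy are controlled together, so the diagonal runs in a product.
  obtain ⟨N, hN⟩ := exists_diagonal hF hL
  rw [Prod.tendsto_iff] at hN
  refine ⟨fun δ => seg (k * δ) (v (N δ)), fun δ _ => measurable_seg _ (hvc _).measurable, ?_, hN.2⟩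
  have h1 := hN.1
  simp only [add_zero] at h1
  exact tendsto_of_tendsto_of_tendsto_of_le_of_le tendsto_const_nhds h1 (fun _ => zero_le)
    fun δ => eLpNorm_triangle_seg _ (hvc (N δ)) hu
end

section
/- Let n be a positive integer, let k be a positive integer, let h : {0,1,…,n−1} → ℝ be nonincreasing, and let u : {1,…,n} → ℤ. Then there exists a permutation σ of {1,…,n} such that u∘σ is nondecreasing and ℋ_k(u∘σ) ≤ ℋ_k(u); that is, the total k-hostility is minimized among rearrangements of u by the nondecreasing rearrangement of u. -/
/-!
Write `h` on `{0,…,n-1}` as `h (n-1)` plus a nonnegative combination of the indicators of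
`{d ≤ m}`. The number of hostile pairs (those whose values differ by more than `k`) does not depend
on the order of the values, and neither does the number of pairs of positions at distance at most
`m`. So it is enough to show that, for each `m`, the number of *compatible* pairs (values differing
by at most `k`) at distance at most `m` is maximized by the nondecreasing arrangement.

Insert the values of `u` one by one, in nondecreasing order, at their positions; the distance of two
occupied positions is measured by rank among the occupied positions. When the current maximum
is inserted at `p`, pair the `a`-th occupied position to the left of `p` with the `(m+1-a)`-th one
to the right, `1 ≤ a ≤ m`. If both are compatible with the maximum, they are compatible with each
other, and their distance grows from `m` to `m + 1`, so this pair is lost. Hence each of the `m`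
couples contributes a net gain of at most one, and the insertion gains at most `min m c`, where `c`
is the number of earlier values compatible with the new one (`card_closePairs_insert_le`). Summing,
every arrangement has at most `∑ min m c` such pairs, and the nondecreasing arrangement attains this
bound (`sum_min_le_card_closePairs`).
-/

open Finset

/-- The total `k`-hostility of a discrete arrangement `u : {1,…,n} → ℤ`
(modelled on `Fin n`) with hostility function `h`. -/
noncomputable def totalHostility (n k : ℕ) (h : ℕ → ℝ) (u : Fin n → ℤ) : ℝ :=
  ∑ i : Fin n, ∑ j : Fin n,
    if (i : ℕ) ≤ (j : ℕ) then phik (k : ℝ) ((|u j - u i| : ℤ) : ℝ) * h ((j : ℕ) - (i : ℕ)) else 0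

/-- The pairs `i < j` in `S` whose values differ by at most `k` and whose distance, measured by rank
inside `S`, is at most `m`. -/
def closePairs {n : ℕ} (m k : ℕ) (u : Fin n → ℤ) (S : Finset (Fin n)) : Finset (Fin n × Fin n) :=
  (S ×ˢ S).filter (fun q => q.1 < q.2 ∧ (S ∩ Ioc q.1 q.2).card ≤ m ∧ |u q.2 - u q.1| ≤ (k : ℤ))

/-- Inserting a new maximum at `p` creates at most `min m c` pairs net of the pairs it separates,
where `c` counts the values already present that are within `k` of the new one. -/
lemma card_closePairs_insert_le {n : ℕ} (m k : ℕ) (u : Fin n → ℤ) (S : Finset (Fin n)) (p : Fin n)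
    (hp : p ∉ S) (hmax : ∀ i ∈ S, u i ≤ u p) :
    (closePairs m k u (insert p S)).card ≤
      (closePairs m k u S).card + min m (S.filter (fun i => u p - u i ≤ (k : ℤ))).card := by
  set C := S.filter (fun i => u p - u i ≤ (k : ℤ)) with hC
  -- compatible neighbours of `p` on the left and on the right, and the pairs separated by `p`
  set A := C.filter (fun i => i < p ∧ (S ∩ Ioo i p).card < m) with hA
  set B := C.filter (fun j => p < j ∧ (S ∩ Ioo p j).card < m) with hB
  set L := (closePairs m k u S).filter
    (fun q => q.1 < p ∧ p < q.2 ∧ (S ∩ Ioc q.1 q.2).card = m) with hL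
  have hsub : closePairs m k u (insert p S) ⊆
      (closePairs m k u S \ L) ∪ (A.image (fun i => (i, p)) ∪ B.image (fun j => (p, j))) := by
    rintro ⟨i, j⟩ hq
    simp only [closePairs, mem_filter, mem_product, mem_insert] at hq
    obtain ⟨⟨hi, hj⟩, hij, hcard, hval⟩ := hq
    rcases hi with rfl | hi
    · rcases hj with rfl | hj
      · exact absurd hij (lt_irrefl _)
      · have e : insert i S ∩ Ioc i j = insert j (S ∩ Ioo i j) := by
          ext x; simp only [mem_inter, mem_insert, mem_Ioc, mem_Ioo]; grind
        rw [e, card_insert_of_notMem (by simp)] at hcard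
        have := abs_le.1 hval
        refine mem_union_right _ (mem_union_right _ (mem_image.2 ⟨j, ?_, rfl⟩))
        simp only [hB, hC, mem_filter]
        exact ⟨⟨hj, by linarith⟩, hij, by omega⟩
    · rcases hj with rfl | hj
      · have e : insert j S ∩ Ioc i j = insert j (S ∩ Ioo i j) := by
          ext x; simp only [mem_inter, mem_insert, mem_Ioc, mem_Ioo]; grind
        rw [e, card_insert_of_notMem (by simp)] at hcard
        have := abs_le.1 hval
        refine mem_union_right _ (mem_union_left _ (mem_image.2 ⟨i, ?_, rfl⟩))
        simp only [hA, hC, mem_filter]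
        exact ⟨⟨hi, by linarith⟩, hij, by omega⟩
      · refine mem_union_left _ (mem_sdiff.2 ⟨?_, ?_⟩)
        · simp only [closePairs, mem_filter, mem_product]
          refine ⟨⟨hi, hj⟩, hij, le_trans (card_le_card ?_) hcard, hval⟩
          exact inter_subset_inter_right (subset_insert _ _)
        · intro hmem
          simp only [hL, mem_filter] at hmem
          obtain ⟨-, h1, h2, h3⟩ := hmem
          have e : insert p S ∩ Ioc i j = insert p (S ∩ Ioc i j) := by
            ext x; simp only [mem_inter, mem_insert, mem_Ioc]; grind
          rw [e, card_insert_of_notMem (by simp [hp])] at hcard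
          omega
  have hLsub : L ⊆ closePairs m k u S := filter_subset _ _
  have h1 : (closePairs m k u (insert p S)).card + L.card ≤
      (closePairs m k u S).card + (A.card + B.card) := by
    have a1 := card_le_card hsub
    have a2 := card_union_le (closePairs m k u S \ L)
      (A.image (fun i => (i, p)) ∪ B.image (fun j => (p, j)))
    have a3 := card_union_le (A.image (fun i => (i, p))) (B.image (fun j => (p, j)))
    have a4 : (A.image (fun i => (i, p))).card ≤ A.card := card_image_le
    have a5 : (B.image (fun j => (p, j))).card ≤ B.card := card_image_le
    have a6 := card_sdiff_add_card_eq_card hLsub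
    omega
  have h2 : A.card + B.card ≤ C.card := by
    have hd : Disjoint A B := by
      rw [disjoint_left]
      intro x hx hy
      simp only [hA, hB, mem_filter] at hx hy
      exact lt_asymm hx.2.1 hy.2.1
    rw [← card_union_of_disjoint hd]
    exact card_le_card (union_subset (filter_subset _ _) (filter_subset _ _))
  have h3 : A.card + B.card ≤ m + L.card := by
    -- label the left neighbours by rank and the right ones by reversed rank, both in `range m`;
    -- a label used on both sides comes from a pair in `L`
    let f : Fin n → ℕ := fun i => (S ∩ Ioo i p).card
    let g : Fin n → ℕ := fun j => m - 1 - (S ∩ Ioo p j).card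
    have hf : Set.InjOn f A := by
      have key : ∀ i ∈ A, ∀ j ∈ A, i < j → f j < f i := by
        intro i hi j hj hij
        simp only [hA, hC, mem_filter] at hi hj
        refine card_lt_card ((ssubset_iff_of_subset ?_).2 ⟨j, ?_, ?_⟩)
        · intro x; simp only [mem_inter, mem_Ioo]; grind
        · simp only [mem_inter, mem_Ioo]; grind
        · simp
      intro i hi j hj hij
      rcases lt_trichotomy i j with hlt | heq | hlt
      · have := key i hi j hj hlt; omega
      · exact heq
      · have := key j hj i hi hlt; omega
    have hg : Set.InjOn g B := by
      have key : ∀ i ∈ B, ∀ j ∈ B, i < j → g j < g i := by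
        intro i hi j hj hij
        simp only [hB, hC, mem_filter] at hi hj
        have : (S ∩ Ioo p i).card < (S ∩ Ioo p j).card := by
          refine card_lt_card ((ssubset_iff_of_subset ?_).2 ⟨i, ?_, ?_⟩)
          · intro x; simp only [mem_inter, mem_Ioo]; grind
          · simp only [mem_inter, mem_Ioo]; grind
          · simp
        simp only [g]
        omega
      intro i hi j hj hij
      rcases lt_trichotomy i j with hlt | heq | hlt
      · have := key i hi j hj hlt; omega
      · exact heq
      · have := key j hj i hi hlt; omega
    have hunion : (A.image f ∪ B.image g).card ≤ m := by
      have : A.image f ∪ B.image g ⊆ range m := by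
        intro x hx
        rw [mem_union, mem_image, mem_image] at hx
        rw [mem_range]
        rcases hx with ⟨i, hi, rfl⟩ | ⟨j, hj, rfl⟩
        · exact (mem_filter.1 hi).2.2
        · have := (mem_filter.1 hj).2.2
          simp only [g]
          omega
      simpa using card_le_card this
    have hinter : (A.image f ∩ B.image g).card ≤ L.card := by
      refine le_trans (card_le_card ?_) (card_image_le (s := L) (f := fun q => f q.1))
      intro x hx
      rw [mem_inter, mem_image, mem_image] at hx
      obtain ⟨⟨i, hi, rfl⟩, j, hj, hgj⟩ := hx
      refine mem_image.2 ⟨(i, j), ?_, rfl⟩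
      simp only [hA, hB, hC, mem_filter] at hi hj
      obtain ⟨⟨hiS, hiv⟩, hip, him⟩ := hi
      obtain ⟨⟨hjS, hjv⟩, hpj, hjm⟩ := hj
      have e : S ∩ Ioc i j = insert j ((S ∩ Ioo i p) ∪ (S ∩ Ioo p j)) := by
        ext x; simp only [mem_inter, mem_insert, mem_union, mem_Ioc, mem_Ioo]; grind
      have hd : Disjoint (S ∩ Ioo i p) (S ∩ Ioo p j) := by
        rw [disjoint_left]; intro x; simp only [mem_inter, mem_Ioo]; grind
      have hc : (S ∩ Ioc i j).card = m := by
        rw [e, card_insert_of_notMem (by simp [hpj.le]), card_union_of_disjoint hd]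
        simp only [f, g] at hgj
        omega
      have := hmax i hiS
      have := hmax j hjS
      simp only [hL, closePairs, mem_filter, mem_product]
      exact ⟨⟨⟨hiS, hjS⟩, hip.trans hpj, hc.le, abs_le.2 ⟨by linarith, by linarith⟩⟩, hip, hpj, hc⟩
    have := card_union_add_card_inter (A.image f) (B.image g)
    rw [card_image_of_injOn hf, card_image_of_injOn hg] at this
    omega
  rcases min_choice m C.card with h | h <;> rw [h] <;> omega

/-- Upper bound for an arbitrary arrangement, in terms of a nondecreasing rearrangement `u ∘ σ`. -/
lemma card_closePairs_le_sum_min {n : ℕ} (m k : ℕ) (u : Fin n → ℤ) (σ : Equiv.Perm (Fin n))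
    (hσ : Monotone (u ∘ σ)) :
    (closePairs m k u univ).card ≤
      ∑ j : Fin n, min m (univ.filter (fun i => i < j ∧ u (σ j) - u (σ i) ≤ (k : ℤ))).card := by
  have key : ∀ r ≤ n, (closePairs m k u (univ.filter (fun x => (σ.symm x : ℕ) < r))).card ≤
      ∑ j ∈ univ.filter (fun j : Fin n => (j : ℕ) < r),
        min m (univ.filter (fun i => i < j ∧ u (σ j) - u (σ i) ≤ (k : ℤ))).card := by
    intro r
    induction r with
    | zero => intro _; simp [closePairs]
    | succ r ih =>
      intro hr
      let a : Fin n := ⟨r, hr⟩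
      have e1 : univ.filter (fun x => (σ.symm x : ℕ) < r + 1) =
          insert (σ a) (univ.filter (fun x => (σ.symm x : ℕ) < r)) := by
        ext x
        have : x = σ a ↔ (σ.symm x : ℕ) = r := by
          rw [← Equiv.symm_apply_eq, Fin.ext_iff]
        simp only [mem_filter, mem_univ, true_and, mem_insert, this]
        omega
      have e2 : univ.filter (fun j : Fin n => (j : ℕ) < r + 1) =
          insert a (univ.filter (fun j : Fin n => (j : ℕ) < r)) := by
        ext x
        simp only [mem_filter, mem_univ, true_and, mem_insert, Fin.ext_iff, a]
        omega
      rw [e1, e2, sum_insert (by simp [a])]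
      have hstep := card_closePairs_insert_le m k u
        (univ.filter (fun x => (σ.symm x : ℕ) < r)) (σ a) (by simp [a]) (by
          intro i hi
          simp only [mem_filter, mem_univ, true_and] at hi
          have := hσ (a := σ.symm i) (b := a) (Fin.le_def.2 hi.le)
          simpa using this)
      have e3 : ((univ.filter (fun x => (σ.symm x : ℕ) < r)).filter
            (fun i => u (σ a) - u i ≤ (k : ℤ))).card =
          (univ.filter (fun i => i < a ∧ u (σ a) - u (σ i) ≤ (k : ℤ))).card := by
        symm
        rw [← card_map σ.toEmbedding]
        congr 1
        ext x
        simp [mem_map_equiv, Fin.lt_def, a]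
      rw [e3] at hstep
      have := ih (by omega)
      omega
  simpa using key n le_rfl

/-- The upper bound of `card_closePairs_le_sum_min` is reached by nondecreasing arrangements: among
the indices below `j`, those close to `j` and those with value close to `v j` form nested sets. -/
lemma sum_min_le_card_closePairs {n : ℕ} (m k : ℕ) (v : Fin n → ℤ) (hv : Monotone v) :
    ∑ j : Fin n, min m (univ.filter (fun i => i < j ∧ v j - v i ≤ (k : ℤ))).card ≤
      (closePairs m k v univ).card := by
  have e : (closePairs m k v univ).card = ∑ j : Fin n,
      (univ.filter (fun i : Fin n => i < j ∧ (j : ℕ) - i ≤ m ∧ v j - v i ≤ (k : ℤ))).card := by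
    have : closePairs m k v univ = univ.filter (fun q : Fin n × Fin n =>
        q.1 < q.2 ∧ (q.2 : ℕ) - q.1 ≤ m ∧ v q.2 - v q.1 ≤ (k : ℤ)) := by
      ext ⟨i, j⟩
      simp only [closePairs, mem_filter, mem_product, mem_univ, true_and, univ_inter, Fin.card_Ioc]
      refine and_congr_right fun hij => and_congr_right fun _ => ?_
      rw [abs_of_nonneg (sub_nonneg.2 (hv hij.le))]
    rw [this]
    simp only [card_filter, Fintype.sum_prod_type]
    exact sum_comm
  rw [e]
  refine sum_le_sum fun j _ => ?_
  by_cases hCD : ∀ i : Fin n, i < j → v j - v i ≤ (k : ℤ) → (j : ℕ) - i ≤ m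
  · refine le_trans (min_le_right _ _) (card_le_card ?_)
    intro i
    simp only [mem_filter, mem_univ, true_and]
    exact fun hi => ⟨hi.1, hCD i hi.1 hi.2, hi.2⟩
  · push Not at hCD
    obtain ⟨i₀, hi₀, hv₀, hm₀⟩ := hCD
    let b : Fin n := ⟨(j : ℕ) - m, by omega⟩
    have hb : (Ico b j).card = m := by
      rw [Fin.card_Ico]; simp only [b]; omega
    refine le_trans (min_le_left _ _) ?_
    rw [← hb]
    refine card_le_card ?_
    intro i hi
    simp only [mem_Ico, Fin.le_def, Fin.lt_def, b] at hi
    have := hv (a := i₀) (b := i) (Fin.le_def.2 (by omega))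
    simp only [mem_filter, mem_univ, true_and, Fin.lt_def, hb]
    exact ⟨hi.2, by omega, by linarith⟩

/-- The number of pairs of positions `i < j` with hostile values, at distance at most `m`. -/
def hostileCount (n m k : ℕ) (u : Fin n → ℤ) : ℕ :=
  (univ.filter (fun q : Fin n × Fin n =>
    q.1 < q.2 ∧ (q.2 : ℕ) - q.1 ≤ m ∧ ¬ |u q.2 - u q.1| ≤ (k : ℤ))).card

lemma hostileCount_add_card_closePairs (n m k : ℕ) (u : Fin n → ℤ) :
    hostileCount n m k u + (closePairs m k u univ).card =
      (univ.filter (fun q : Fin n × Fin n => q.1 < q.2 ∧ (q.2 : ℕ) - q.1 ≤ m)).card := by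
  have : closePairs m k u univ = (univ.filter (fun q : Fin n × Fin n =>
      q.1 < q.2 ∧ (q.2 : ℕ) - q.1 ≤ m)).filter (fun q => |u q.2 - u q.1| ≤ (k : ℤ)) := by
    ext ⟨i, j⟩
    simp [closePairs, and_assoc]
  have hsplit := card_filter_add_card_filter_not (s := univ.filter (fun q : Fin n × Fin n =>
    q.1 < q.2 ∧ (q.2 : ℕ) - q.1 ≤ m)) (fun q => |u q.2 - u q.1| ≤ (k : ℤ))
  rw [this, ← hsplit, add_comm, hostileCount]
  simp only [filter_filter, and_assoc]

lemma hostileCount_comp_le {n : ℕ} (m k : ℕ) (u : Fin n → ℤ) (σ : Equiv.Perm (Fin n))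
    (hσ : Monotone (u ∘ σ)) : hostileCount n m k (u ∘ σ) ≤ hostileCount n m k u := by
  have h1 := card_closePairs_le_sum_min m k u σ hσ
  have h2 := sum_min_le_card_closePairs m k (u ∘ σ) hσ
  have h3 := hostileCount_add_card_closePairs n m k u
  have h4 := hostileCount_add_card_closePairs n m k (u ∘ σ)
  simp only [Function.comp_apply] at h2
  omega

/-- Without a distance constraint (`m = n`), the number of hostile pairs is half the number of
hostile ordered pairs, which is invariant under rearrangement. -/
lemma two_mul_hostileCount_self (n k : ℕ) (u : Fin n → ℤ) :
    2 * hostileCount n n k u =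
      (univ.filter (fun q : Fin n × Fin n => ¬ |u q.2 - u q.1| ≤ (k : ℤ))).card := by
  have e1 : hostileCount n n k u =
      (univ.filter (fun q : Fin n × Fin n => q.1 < q.2 ∧ ¬ |u q.2 - u q.1| ≤ (k : ℤ))).card := by
    rw [hostileCount]
    congr 1
    ext q
    have : (q.2 : ℕ) - q.1 ≤ n := by omega
    simp only [mem_filter, this, true_and]
  have e2 : (univ.filter (fun q : Fin n × Fin n => q.2 < q.1 ∧ ¬ |u q.2 - u q.1| ≤ (k : ℤ))).card =
      (univ.filter (fun q : Fin n × Fin n => q.1 < q.2 ∧ ¬ |u q.2 - u q.1| ≤ (k : ℤ))).card := by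
    rw [← card_map (Equiv.prodComm _ _).toEmbedding]
    congr 1
    ext ⟨i, j⟩
    simp [mem_map_equiv, abs_sub_comm]
  rw [two_mul, e1]
  nth_rewrite 2 [← e2]
  rw [← card_union_of_disjoint]
  · congr 1
    ext ⟨i, j⟩
    simp only [mem_union, mem_filter, mem_univ, true_and]
    constructor
    · rintro (h | h) <;> exact h.2
    · intro h
      rcases lt_trichotomy i j with hlt | rfl | hlt
      · exact Or.inl ⟨hlt, h⟩
      · simp at h
      · exact Or.inr ⟨hlt, h⟩
  · rw [disjoint_left]
    intro q hq hq'
    simp only [mem_filter] at hq hq'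
    exact lt_asymm hq.2.1 hq'.2.1

lemma hostileCount_self_comp (n k : ℕ) (u : Fin n → ℤ) (σ : Equiv.Perm (Fin n)) :
    hostileCount n n k (u ∘ σ) = hostileCount n n k u := by
  have h1 := two_mul_hostileCount_self n k u
  have h2 := two_mul_hostileCount_self n k (u ∘ σ)
  have h3 : (univ.filter (fun q : Fin n × Fin n => ¬ |(u ∘ σ) q.2 - (u ∘ σ) q.1| ≤ (k : ℤ))).card =
      (univ.filter (fun q : Fin n × Fin n => ¬ |u q.2 - u q.1| ≤ (k : ℤ))).card := by
    rw [← card_map (Equiv.prodCongr σ σ).toEmbedding]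
    congr 1
    ext ⟨i, j⟩
    simp [mem_map_equiv]
  omega

/-- A function on `{0,…,N}` is a constant plus a combination of the indicators of `{d ≤ m}`. -/
lemma eq_add_sum_indicator (h : ℕ → ℝ) (N d : ℕ) (hd : d ≤ N) :
    h d = h N + ∑ m ∈ range N, (h m - h (m + 1)) * (if d ≤ m then 1 else 0) := by
  induction N, hd using Nat.le_induction with
  | base =>
    rw [sum_eq_zero, add_zero]
    intro m hm
    rw [if_neg (by rw [mem_range] at hm; omega), mul_zero]
  | succ N hN ih =>
    rw [sum_range_succ, if_pos hN]
    linarith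

lemma totalHostility_eq (n k : ℕ) (h : ℕ → ℝ) (u : Fin n → ℤ) :
    totalHostility n k h u = h (n - 1) * hostileCount n n k u +
      ∑ m ∈ range (n - 1), (h m - h (m + 1)) * hostileCount n m k u := by
  have hc : ∀ m, (hostileCount n m k u : ℝ) = ∑ q : Fin n × Fin n,
      if q.1 < q.2 ∧ (q.2 : ℕ) - q.1 ≤ m ∧ ¬ |u q.2 - u q.1| ≤ (k : ℤ) then (1 : ℝ) else 0 := by
    intro m
    rw [hostileCount, card_filter]
    push_cast
    rfl
  simp only [hc, mul_sum]
  rw [sum_comm, ← sum_add_distrib, totalHostility, ← Fintype.sum_prod_type']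
  refine sum_congr rfl ?_
  rintro ⟨i, j⟩ -
  have hcast : (((|u j - u i| : ℤ) : ℝ) ≤ (k : ℝ)) ↔ |u j - u i| ≤ (k : ℤ) := by
    exact_mod_cast Iff.rfl
  simp only [phik, hcast]
  by_cases hv : |u j - u i| ≤ (k : ℤ)
  · simp [hv]
  · have hne : i ≠ j := by
      rintro rfl
      simp at hv
    by_cases hij : i < j
    · have h1 : (i : ℕ) ≤ j := hij.le
      have h2 : (j : ℕ) - i ≤ n := by omega
      simp only [hv, hij, h1, h2, not_false_eq_true, and_true, true_and, if_true, if_false, one_mul,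
        mul_one]
      exact eq_add_sum_indicator h (n - 1) _ (by omega)
    · have h1 : ¬ (i : ℕ) ≤ j := fun hle => hij (lt_of_le_of_ne hle hne)
      simp [hij, h1]

/-- the nondecreasing rearrangement minimizes the total `k`-hostility. -/
theorem discrete_rearrangement (n k : ℕ) (hn : 0 < n) (hk : 0 < k)
    (h : ℕ → ℝ) (hmono : ∀ i j : ℕ, i ≤ j → j < n → h j ≤ h i) (u : Fin n → ℤ) :
    ∃ σ : Equiv.Perm (Fin n), Monotone (u ∘ σ) ∧
      totalHostility n k h (u ∘ σ) ≤ totalHostility n k h u := by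
  refine ⟨Tuple.sort u, Tuple.monotone_sort u, ?_⟩
  rw [totalHostility_eq, totalHostility_eq, hostileCount_self_comp]
  gcongr with m hm
  · rw [mem_range] at hm
    exact sub_nonneg.2 (hmono m (m + 1) (by omega) (by omega))
  · exact hostileCount_comp_le m k u _ (Tuple.monotone_sort u)
end
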